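/- arXiv:1703.00766 — 2 statements merged into one kernel-verified Lean document; each statement's English description precedes it below -/
import Mathlib

section
/- Let R be a Noetherian ring, 𝔞 an ideal, M a finitely generated R-module, and t ≥ 0 such that H^i_𝔞(M) is weakly Laskerian for all i ≤ t. Then for every minimax submodule K of H^{t+1}_𝔞(M) and every finitely generated R-module L with Supp(L) ⊆ V(𝔞), the modules Hom_R(L, H^{t+1}_𝔞(M)/K) and Ext^1_R(L, H^{t+1}_𝔞(M)/K) are finitely generated. -/
open CategoryTheory

universe u

variable (R : Type u) [CommRing R]

/-- The `i`-th Ext module `Ext^i_R(N, M)` of `R`-modules. -/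
noncomputable def extModule (i : ℕ) (N M : ModuleCat.{u} R) : ModuleCat.{u} R :=
  ((Ext R (ModuleCat.{u} R) i).obj (Opposite.op N)).obj M

/-- A module is weakly Laskerian if every quotient has finitely many associated primes. -/
def IsWeaklyLaskerian (M : Type u) [AddCommGroup M] [Module R M] : Prop :=
  ∀ N : Submodule R M, (associatedPrimes R (M ⧸ N)).Finite

/-- `M` is `𝔞`-cofinite: `Supp M ⊆ V(𝔞)` and all `Ext^i_R(R/𝔞, M)` are finitely generated. -/
def IsCofinite (𝔞 : Ideal R) (M : ModuleCat.{u} R) : Prop :=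
  Module.support R M ⊆ PrimeSpectrum.zeroLocus (𝔞 : Set R) ∧
    ∀ i : ℕ, Module.Finite R (extModule R i (ModuleCat.of R (R ⧸ 𝔞)) M)

/-- `M` is `𝔞`-weakly cofinite: `Supp M ⊆ V(𝔞)` and all `Ext^i_R(R/𝔞, M)` are weakly
Laskerian. -/
def IsWeaklyCofinite (𝔞 : Ideal R) (M : ModuleCat.{u} R) : Prop :=
  Module.support R M ⊆ PrimeSpectrum.zeroLocus (𝔞 : Set R) ∧
    ∀ i : ℕ, IsWeaklyLaskerian R (extModule R i (ModuleCat.of R (R ⧸ 𝔞)) M)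

/-- The Krull dimension of the support of a module. -/
noncomputable def suppDim (M : Type u) [AddCommGroup M] [Module R M] : WithBot ℕ∞ :=
  Order.krullDim (Module.support R M)

/-- The cohomological dimension `cd(𝔞, M) = sup {i | H^i_𝔞(M) ≠ 0}`, as an element of `ℕ∞`. -/
noncomputable def cohomologicalDim (𝔞 : Ideal R) (M : ModuleCat.{u} R) : ℕ∞ :=
  ⨆ i ∈ {i : ℕ | Nontrivial ((localCohomology 𝔞 i).obj M)}, (i : ℕ∞)

/-- `p` is an attached prime of `M`: `p` is prime and is the annihilator of a quotient
of `M`. -/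
def IsAttachedPrime (M : Type u) [AddCommGroup M] [Module R M] (p : Ideal R) : Prop :=
  p.IsPrime ∧ ∃ N : Submodule R M, p = Module.annihilator R (M ⧸ N)

/-!
Call `N` *cofinite* when all `Ext^n_R(R/𝔞, N)` are finitely generated. The key fact is that an
`𝔞`-torsion weakly Laskerian module `N` is cofinite as soon as `Hom_R(R/𝔞, N)` and
`Ext^1_R(R/𝔞, N)` are finitely generated. Modulo a finitely generated submodule `N` has finite
support: otherwise the Artin-Rees lemma produces a quotient of `N` of which infinitely many given
primes are associated primes. When the support is finite, inverting all elements outside the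
non-maximal primes of the support makes `N` Artinian. Hence some `x ∈ 𝔞` outside `Ann N` makes
`N/xN` an extension of a torsion module supported at maximal ideals by a finitely generated one.
The kernel of `x` on `N` is cofinite by Noetherian induction on `Ann N`, so `N/xN` has finitely
generated `Hom` from `R/𝔞`; its torsion quotient above is therefore Artinian and cofinite, and
cofiniteness of kernel and cokernel of `x` implies that of `N`.

Suppose that `M` and `H^j_𝔞(M)`, `j < n`, are cofinite. Then `Hom` and `Ext^1` of `R/𝔞` into
`H^n_𝔞(M)` are finitely generated: embed `M/Γ_𝔞(M)` into a torsion-free injective module with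
cokernel `Q`; then `Q` is cofinite and `H^{j+1}_𝔞(M) ≅ H^j_𝔞(Q)`, so induction on `n` reduces the
claim to `Γ_𝔞(M)`. With the key fact, induction on `i` makes all `H^i_𝔞(M)` with `i ≤ t` cofinite.
The module `N = H^{t+1}_𝔞(M)` then has finitely generated `Hom` and `Ext^1` from `R/𝔞`; so `Hom`
from `R/𝔞` into a minimax submodule `K` is finitely generated, which makes `K` cofinite, and `Hom`
and `Ext^1` from `R/𝔞` into `N/K` are finitely generated. A prime filtration replaces `R/𝔞` by `L`.
-/

section FiniteExact

variable {R A B C : Type*} [CommRing R] [IsNoetherianRing R]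
  [AddCommGroup A] [AddCommGroup B] [AddCommGroup C] [Module R A] [Module R B] [Module R C]

theorem finite_ker_of_ker_le_range {f : A →ₗ[R] B} {g : B →ₗ[R] C}
    (h : LinearMap.ker g ≤ LinearMap.range f) [Module.Finite R A] :
    Module.Finite R (LinearMap.ker g) :=
  have : IsNoetherian R (LinearMap.ker g) := isNoetherian_of_le h
  inferInstance

theorem finite_of_ker_le_range {f : A →ₗ[R] B} {g : B →ₗ[R] C}
    (h : LinearMap.ker g ≤ LinearMap.range f) [Module.Finite R A] [Module.Finite R C] :
    Module.Finite R B :=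
  have := finite_ker_of_ker_le_range h
  have : IsNoetherian R B := isNoetherian_of_range_eq_ker (LinearMap.ker g).subtype g (by simp)
  inferInstance

theorem finite_of_finite_ker_of_comp_eq_zero {f : A →ₗ[R] B} {g : B →ₗ[R] C} (h : g ∘ₗ f = 0)
    [Module.Finite R (LinearMap.ker f)] [Module.Finite R (LinearMap.ker g)] :
    Module.Finite R A := by
  refine finite_of_ker_le_range (f := (LinearMap.ker f).subtype)
    (g := f.codRestrict (LinearMap.ker g) fun a => LinearMap.mem_ker.2 (LinearMap.congr_fun h a)) ?_
  rw [LinearMap.ker_codRestrict, Submodule.range_subtype]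

end FiniteExact

section ShortExact

variable {R : Type*} [CommRing R] {A B C : Type*} [AddCommGroup A] [AddCommGroup B]
  [AddCommGroup C] [Module R A] [Module R B] [Module R C]

/-- `0 → A → B → C → 0` is a short exact sequence of modules. -/
structure IsShortExact (f : A →ₗ[R] B) (g : B →ₗ[R] C) : Prop where
  injective : Function.Injective f
  exact : Function.Exact f g
  surjective : Function.Surjective g

theorem isShortExact_subtype_mkQ (U : Submodule R B) : IsShortExact U.subtype U.mkQ :=
  ⟨U.subtype_injective, LinearMap.exact_subtype_mkQ U, U.mkQ_surjective⟩

theorem isShortExact_mkQ_range {f : A →ₗ[R] B} (hf : Function.Injective f) :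
    IsShortExact f (LinearMap.range f).mkQ :=
  ⟨hf, LinearMap.exact_map_mkQ_range f, Submodule.mkQ_surjective _⟩

theorem isShortExact_subtype_ker {g : B →ₗ[R] C} (hg : Function.Surjective g) :
    IsShortExact (LinearMap.ker g).subtype g :=
  ⟨Submodule.subtype_injective _, LinearMap.exact_subtype_ker_map g, hg⟩

theorem isShortExact_rangeRestrict (g : B →ₗ[R] C) :
    IsShortExact (LinearMap.ker g).subtype g.rangeRestrict :=
  ⟨Submodule.subtype_injective _,
    LinearMap.exact_iff.2 (by rw [LinearMap.ker_rangeRestrict, Submodule.range_subtype]),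
    g.surjective_rangeRestrict⟩

end ShortExact

section ExtFinite

variable (X : Type u) [AddCommGroup X] [Module R X]

/-- The module `Ext^n_R(X, N)` is finitely generated. -/
def ExtFinite (N : Type u) [AddCommGroup N] [Module R N] (n : ℕ) : Prop :=
  Module.Finite R (Abelian.Ext (ModuleCat.of R X) (ModuleCat.of R N) n)

variable {R} {A B C : Type u} [AddCommGroup A] [AddCommGroup B] [AddCommGroup C]
  [Module R A] [Module R B] [Module R C]

/-- The map `Ext^n_R(X, A) → Ext^n_R(X, B)` induced by `f : A → B`. -/
noncomputable def extMap (f : A →ₗ[R] B) (n : ℕ) :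
    Abelian.Ext (ModuleCat.of R X) (ModuleCat.of R A) n →ₗ[R]
      Abelian.Ext (ModuleCat.of R X) (ModuleCat.of R B) n :=
  (Abelian.Ext.mk₀ (ModuleCat.ofHom f)).postcompOfLinear R (ModuleCat.of R X) (add_zero n)

/-- The map `Ext^n_R(B, X) → Ext^n_R(A, X)` induced by `f : A → B`. -/
noncomputable def extComap (f : A →ₗ[R] B) (n : ℕ) :
    Abelian.Ext (ModuleCat.of R B) (ModuleCat.of R X) n →ₗ[R]
      Abelian.Ext (ModuleCat.of R A) (ModuleCat.of R X) n :=
  (Abelian.Ext.mk₀ (ModuleCat.ofHom f)).precompOfLinear R (ModuleCat.of R X) (zero_add n)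

theorem extMap_comp (g : B →ₗ[R] C) (f : A →ₗ[R] B) (n : ℕ) :
    extMap X (g ∘ₗ f) n = extMap X g n ∘ₗ extMap X f n := by
  ext y
  change _ = (y.comp (Abelian.Ext.mk₀ (ModuleCat.ofHom f)) (add_zero n)).comp
    (Abelian.Ext.mk₀ (ModuleCat.ofHom g)) (add_zero n)
  rw [Abelian.Ext.comp_assoc_of_third_deg_zero, Abelian.Ext.mk₀_comp_mk₀,
    ← ModuleCat.ofHom_comp]
  rfl

theorem extMap_id (n : ℕ) : extMap X (LinearMap.id : A →ₗ[R] A) n = LinearMap.id :=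
  LinearMap.ext fun y => y.comp_mk₀_id

theorem extMap_lsmul (x : R) (n : ℕ) : extMap X (LinearMap.lsmul R A x) n = x • LinearMap.id := by
  ext y
  change y.comp (Abelian.Ext.mk₀ (x • 𝟙 (ModuleCat.of R A))) (add_zero n) = x • y
  simp [Abelian.Ext.mk₀_smul]

theorem extComap_comp (g : B →ₗ[R] C) (f : A →ₗ[R] B) (n : ℕ) :
    extComap X (g ∘ₗ f) n = extComap X f n ∘ₗ extComap X g n := by
  ext y
  change _ = (Abelian.Ext.mk₀ (ModuleCat.ofHom f)).comp
    ((Abelian.Ext.mk₀ (ModuleCat.ofHom g)).comp y (zero_add n)) (zero_add n)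
  rw [Abelian.Ext.mk₀_comp_mk₀_assoc, ← ModuleCat.ofHom_comp]
  rfl

theorem extComap_id (n : ℕ) : extComap X (LinearMap.id : A →ₗ[R] A) n = LinearMap.id :=
  LinearMap.ext fun y => y.mk₀_id_comp

variable {X} in
theorem ExtFinite.congr_right (e : A ≃ₗ[R] B) {n : ℕ} (h : ExtFinite R X A n) :
    ExtFinite R X B n := by
  have : Module.Finite R (Abelian.Ext (ModuleCat.of R X) (ModuleCat.of R A) n) := h
  refine Module.Finite.of_surjective (extMap X e.toLinearMap n) fun y =>
    ⟨extMap X e.symm.toLinearMap n y, ?_⟩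
  rw [← LinearMap.comp_apply, ← extMap_comp, LinearEquiv.comp_symm, extMap_id, LinearMap.id_apply]

variable {X} in
theorem ExtFinite.congr_left (e : A ≃ₗ[R] B) {n : ℕ} (h : ExtFinite R A X n) :
    ExtFinite R B X n := by
  have : Module.Finite R (Abelian.Ext (ModuleCat.of R A) (ModuleCat.of R X) n) := h
  refine Module.Finite.of_surjective (extComap X e.symm.toLinearMap n) fun y =>
    ⟨extComap X e.toLinearMap n y, ?_⟩
  rw [← LinearMap.comp_apply, ← extComap_comp, LinearEquiv.comp_symm, extComap_id,
    LinearMap.id_apply]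

namespace IsShortExact

variable {f : A →ₗ[R] B} {g : B →ₗ[R] C}

theorem shortExact (h : IsShortExact f g) :
    (ModuleCat.shortComplexOfCompEqZero f g h.exact.linearMap_comp_eq_zero).ShortExact :=
  ModuleCat.shortComplex_shortExact _ h.exact h.injective h.surjective

/-- The connecting map `Ext^n_R(X, C) → Ext^(n+1)_R(X, A)` of a short exact sequence. -/
noncomputable def extConnecting (h : IsShortExact f g) (n : ℕ) :
    Abelian.Ext (ModuleCat.of R X) (ModuleCat.of R C) n →ₗ[R]
      Abelian.Ext (ModuleCat.of R X) (ModuleCat.of R A) (n + 1) :=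
  h.shortExact.extClass.postcompOfLinear R (ModuleCat.of R X) rfl

/-- The connecting map `Ext^n_R(A, X) → Ext^(n+1)_R(C, X)` of a short exact sequence. -/
noncomputable def extCoconnecting (h : IsShortExact f g) (n : ℕ) :
    Abelian.Ext (ModuleCat.of R A) (ModuleCat.of R X) n →ₗ[R]
      Abelian.Ext (ModuleCat.of R C) (ModuleCat.of R X) (n + 1) :=
  h.shortExact.extClass.precompOfLinear R (ModuleCat.of R X) (add_comm 1 n)

theorem ker_extMap_le_range (h : IsShortExact f g) (n : ℕ) :
    LinearMap.ker (extMap X g n) ≤ LinearMap.range (extMap X f n) := fun y hy =>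
  Abelian.Ext.covariant_sequence_exact₂ _ h.shortExact y hy

theorem ker_extConnecting_le_range (h : IsShortExact f g) (n : ℕ) :
    LinearMap.ker (h.extConnecting X n) ≤ LinearMap.range (extMap X g n) := fun y hy =>
  Abelian.Ext.covariant_sequence_exact₃ _ h.shortExact y rfl hy

theorem ker_extMap_succ_le_range (h : IsShortExact f g) (n : ℕ) :
    LinearMap.ker (extMap X f (n + 1)) ≤ LinearMap.range (h.extConnecting X n) := fun y hy =>
  Abelian.Ext.covariant_sequence_exact₁ _ h.shortExact y hy rfl

theorem ker_extComap_le_range (h : IsShortExact f g) (n : ℕ) :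
    LinearMap.ker (extComap X f n) ≤ LinearMap.range (extComap X g n) := fun y hy =>
  Abelian.Ext.contravariant_sequence_exact₂ h.shortExact _ y hy

theorem ker_extComap_succ_le_range (h : IsShortExact f g) (n : ℕ) :
    LinearMap.ker (extComap X g (n + 1)) ≤ LinearMap.range (h.extCoconnecting X n) := fun y hy =>
  Abelian.Ext.contravariant_sequence_exact₃ h.shortExact _ y hy (add_comm 1 n)

end IsShortExact

theorem extMap_zero_injective {f : A →ₗ[R] B} (hf : Function.Injective f) :
    Function.Injective (extMap X f 0) :=
  have : Mono (ModuleCat.ofHom f) := (ModuleCat.mono_iff_injective _).2 hf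
  Abelian.Ext.postcomp_mk₀_injective_of_mono _ (ModuleCat.ofHom f)

theorem extComap_zero_injective {g : A →ₗ[R] B} (hg : Function.Surjective g) :
    Function.Injective (extComap X g 0) :=
  have : Epi (ModuleCat.ofHom g) := (ModuleCat.epi_iff_surjective _).2 hg
  Abelian.Ext.precomp_mk₀_injective_of_epi _ (ModuleCat.ofHom g)

namespace ExtFinite

variable {X} [IsNoetherianRing R] {f : A →ₗ[R] B} {g : B →ₗ[R] C} {n : ℕ}

theorem middle (h : IsShortExact f g) (hA : ExtFinite R X A n) (hC : ExtFinite R X C n) :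
    ExtFinite R X B n :=
  have : Module.Finite R (Abelian.Ext (ModuleCat.of R X) (ModuleCat.of R A) n) := hA
  have : Module.Finite R (Abelian.Ext (ModuleCat.of R X) (ModuleCat.of R C) n) := hC
  finite_of_ker_le_range (h.ker_extMap_le_range X n)

theorem right (h : IsShortExact f g) (hB : ExtFinite R X B n) (hA : ExtFinite R X A (n + 1)) :
    ExtFinite R X C n :=
  have : Module.Finite R (Abelian.Ext (ModuleCat.of R X) (ModuleCat.of R B) n) := hB
  have : Module.Finite R (Abelian.Ext (ModuleCat.of R X) (ModuleCat.of R A) (n + 1)) := hA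
  finite_of_ker_le_range (h.ker_extConnecting_le_range X n)

theorem left_succ (h : IsShortExact f g) (hC : ExtFinite R X C n) (hB : ExtFinite R X B (n + 1)) :
    ExtFinite R X A (n + 1) :=
  have : Module.Finite R (Abelian.Ext (ModuleCat.of R X) (ModuleCat.of R C) n) := hC
  have : Module.Finite R (Abelian.Ext (ModuleCat.of R X) (ModuleCat.of R B) (n + 1)) := hB
  finite_of_ker_le_range (h.ker_extMap_succ_le_range X n)

theorem left_zero (hf : Function.Injective f) (hB : ExtFinite R X B 0) : ExtFinite R X A 0 :=
  have : IsNoetherian R (Abelian.Ext (ModuleCat.of R X) (ModuleCat.of R B) 0) :=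
    have : Module.Finite R (Abelian.Ext (ModuleCat.of R X) (ModuleCat.of R B) 0) := hB
    inferInstance
  Module.Finite.of_injective _ (extMap_zero_injective X hf)

theorem source_middle (h : IsShortExact f g) (hA : ExtFinite R A X n) (hC : ExtFinite R C X n) :
    ExtFinite R B X n :=
  have : Module.Finite R (Abelian.Ext (ModuleCat.of R A) (ModuleCat.of R X) n) := hA
  have : Module.Finite R (Abelian.Ext (ModuleCat.of R C) (ModuleCat.of R X) n) := hC
  finite_of_ker_le_range (h.ker_extComap_le_range X n)

theorem source_right_succ (h : IsShortExact f g) (hA : ExtFinite R A X n)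
    (hB : ExtFinite R B X (n + 1)) : ExtFinite R C X (n + 1) :=
  have : Module.Finite R (Abelian.Ext (ModuleCat.of R A) (ModuleCat.of R X) n) := hA
  have : Module.Finite R (Abelian.Ext (ModuleCat.of R B) (ModuleCat.of R X) (n + 1)) := hB
  finite_of_ker_le_range (h.ker_extComap_succ_le_range X n)

theorem source_right_zero {g : B →ₗ[R] C} (hg : Function.Surjective g) (hB : ExtFinite R B X 0) :
    ExtFinite R C X 0 :=
  have : IsNoetherian R (Abelian.Ext (ModuleCat.of R B) (ModuleCat.of R X) 0) :=
    have : Module.Finite R (Abelian.Ext (ModuleCat.of R B) (ModuleCat.of R X) 0) := hB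
    inferInstance
  Module.Finite.of_injective _ (extComap_zero_injective X hg)

theorem finite_ker_extMap_right (h : IsShortExact f g) (hA : ExtFinite R X A n) :
    Module.Finite R (LinearMap.ker (extMap X g n)) :=
  have : Module.Finite R (Abelian.Ext (ModuleCat.of R X) (ModuleCat.of R A) n) := hA
  finite_ker_of_ker_le_range (h.ker_extMap_le_range X n)

theorem finite_ker_extMap_left (h : IsShortExact f g) (hC : ∀ m, ExtFinite R X C m) :
    Module.Finite R (LinearMap.ker (extMap X f n)) := by
  cases n with
  | zero =>
    rw [LinearMap.ker_eq_bot.2 (extMap_zero_injective X h.injective)]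
    infer_instance
  | succ n =>
    have : Module.Finite R (Abelian.Ext (ModuleCat.of R X) (ModuleCat.of R C) n) := hC n
    exact finite_ker_of_ker_le_range (h.ker_extMap_succ_le_range X n)

end ExtFinite

variable (A) in
/-- The identification of `Ext^0_R(X, A)` with `Hom_R(X, A)`. -/
noncomputable def extZeroEquiv :
    Abelian.Ext (ModuleCat.of R X) (ModuleCat.of R A) 0 ≃ₗ[R] (X →ₗ[R] A) :=
  (Abelian.Ext.linearEquiv₀ (R := R)).trans (ModuleCat.homLinearEquiv (S := R))

variable {X} in
theorem extFinite_zero_iff : ExtFinite R X A 0 ↔ Module.Finite R (X →ₗ[R] A) :=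
  Module.Finite.equiv_iff (extZeroEquiv X A)

instance subsingleton_ext_succ_of_injective {I : Type u} [AddCommGroup I] [Module R I]
    [Module.Injective R I] (n : ℕ) :
    Subsingleton (Abelian.Ext (ModuleCat.of R X) (ModuleCat.of R I) (n + 1)) :=
  have : Injective (ModuleCat.of R I) :=
    (Module.injective_iff_injective_object R I).1 inferInstance
  subsingleton_of_forall_eq 0 fun y => Abelian.Ext.eq_zero_of_injective (I := ModuleCat.of R I) y

variable {X} in
theorem extFinite_succ_of_injective {I : Type u} [AddCommGroup I] [Module R I]
    [Module.Injective R I] (n : ℕ) : ExtFinite R X I (n + 1) :=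
  inferInstanceAs (Module.Finite R (Abelian.Ext _ _ _))

end ExtFinite

section IsExtCofinite

variable {R} {a : Ideal R} {x : R}

theorem smul_quotient_eq_zero (hx : x ∈ a) (y : R ⧸ a) : x • y = 0 :=
  Module.mem_annihilator.1 (Ideal.annihilator_quotient.ge hx) y

/-- Evaluation at `1` identifies `Hom_R(R/a, N)` with the submodule `0 :_N a`. -/
def quotientHomEquivTorsionBySet {N : Type*} [AddCommGroup N] [Module R N] :
    ((R ⧸ a) →ₗ[R] N) ≃ₗ[R] Submodule.torsionBySet R N (a : Set R) where
  toFun φ := ⟨φ 1, (Submodule.mem_torsionBySet_iff _ _).2 fun r =>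
    ((map_smul φ r.1 1).symm.trans (congrArg φ (smul_quotient_eq_zero r.2 1))).trans φ.map_zero⟩
  map_add' _ _ := rfl
  map_smul' _ _ := rfl
  invFun y := a.liftQ (LinearMap.toSpanSingleton R N y.1) fun r hr =>
    (Submodule.mem_torsionBySet_iff (a : Set R) y.1).1 y.2 ⟨r, hr⟩
  left_inv φ := Submodule.linearMap_qext _ (LinearMap.ext_ring (one_smul R (φ 1)))
  right_inv y := Subtype.ext (one_smul R y.1)

theorem smul_ext_eq_zero {X N : Type u} [AddCommGroup X] [Module R X] [AddCommGroup N] [Module R N]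
    (hx : ∀ z : X, x • z = 0) {n : ℕ}
    (y : Abelian.Ext (ModuleCat.of R X) (ModuleCat.of R N) n) : x • y = 0 := by
  have hid : x • 𝟙 (ModuleCat.of R X) = 0 :=
    ModuleCat.hom_ext (LinearMap.ext hx)
  calc x • y = (Abelian.Ext.mk₀ (x • 𝟙 (ModuleCat.of R X))).comp y (zero_add n) := by
        simp [Abelian.Ext.mk₀_smul]
    _ = 0 := by simp [hid]

variable {N : Type u} [AddCommGroup N] [Module R N]

variable (a N) in
/-- The identification of `Ext^0_R(R/a, N)` with the submodule `0 :_A a`, by evaluation at `1`. -/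
noncomputable def extZeroEquivTorsionBySet :
    Abelian.Ext (ModuleCat.of R (R ⧸ a)) (ModuleCat.of R N) 0 ≃ₗ[R]
      Submodule.torsionBySet R N (a : Set R) :=
  (extZeroEquiv (R ⧸ a) N).trans quotientHomEquivTorsionBySet

theorem extFinite_quotient_zero_iff :
    ExtFinite R (R ⧸ a) N 0 ↔ Module.Finite R (Submodule.torsionBySet R N (a : Set R)) :=
  Module.Finite.equiv_iff (extZeroEquivTorsionBySet a N)

variable (a N) in
/-- All the modules `Ext^n_R(R/a, N)` are finitely generated: `N` satisfies the finiteness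
condition in the definition of `a`-cofinite modules, with no condition on its support. -/
def IsExtCofinite : Prop :=
  ∀ n, ExtFinite R (R ⧸ a) N n

namespace IsExtCofinite

variable {N' N'' : Type u} [AddCommGroup N'] [Module R N'] [AddCommGroup N''] [Module R N'']

theorem congr (e : N ≃ₗ[R] N') (hN : IsExtCofinite a N) : IsExtCofinite a N' :=
  fun n => (hN n).congr_right e

variable [IsNoetherianRing R]

theorem of_finite [Module.Finite R N] : IsExtCofinite a N :=
  ModuleCat.finite_ext R (ModuleCat.of R (R ⧸ a)) (ModuleCat.of R N)

theorem middle {f : N' →ₗ[R] N} {g : N →ₗ[R] N''} (h : IsShortExact f g)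
    (hN' : IsExtCofinite a N') (hN'' : IsExtCofinite a N'') : IsExtCofinite a N :=
  fun n => (hN' n).middle h (hN'' n)

theorem right {f : N' →ₗ[R] N} {g : N →ₗ[R] N''} (h : IsShortExact f g)
    (hN' : IsExtCofinite a N') (hN : IsExtCofinite a N) : IsExtCofinite a N'' :=
  fun n => (hN n).right h (hN' (n + 1))

/- Multiplication by `x` on `N` is `N → xN → N`; it induces `0` on `Ext^n_R(R/a, N)`, while the two
factors induce maps whose kernels are controlled by `0 :_N x` and `N/xN`. -/
theorem of_ker_lsmul_of_quotient (hx : x ∈ a)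
    (hker : IsExtCofinite a (LinearMap.ker (LinearMap.lsmul R N x)))
    (hquot : IsExtCofinite a (N ⧸ LinearMap.range (LinearMap.lsmul R N x))) :
    IsExtCofinite a N := by
  intro n
  have hcomp : extMap (R ⧸ a) (LinearMap.range (LinearMap.lsmul R N x)).subtype n ∘ₗ
      extMap (R ⧸ a) (LinearMap.lsmul R N x).rangeRestrict n = 0 := by
    rw [← extMap_comp, LinearMap.rangeRestrict, LinearMap.subtype_comp_codRestrict, extMap_lsmul]
    exact LinearMap.ext fun y => smul_ext_eq_zero (smul_quotient_eq_zero hx) y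
  have := (hker n).finite_ker_extMap_right (isShortExact_rangeRestrict (LinearMap.lsmul R N x))
  have := ExtFinite.finite_ker_extMap_left (n := n)
    (isShortExact_subtype_mkQ (LinearMap.range (LinearMap.lsmul R N x))) hquot
  exact finite_of_finite_ker_of_comp_eq_zero hcomp

end IsExtCofinite

end IsExtCofinite

section ArtinianOfTorsion

open scoped Pointwise

theorem exists_forall_ge_eq_of_antitone {α : Type*} [PartialOrder α] [WellFoundedLT α]
    {A : ℕ → ℕ → α} (hA : Antitone A) (hA' : ∀ n, Antitone (A n)) :
    ∃ n₀, ∀ m ≥ n₀, A m = A n₀ := by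
  have hmono {n m k l : ℕ} (hnm : n ≤ m) (hkl : k ≤ l) : A m l ≤ A n k :=
    (hA hnm l).trans (hA' n hkl)
  obtain ⟨n₁, hdiag⟩ := WellFoundedLT.antitone_chain_condition
    (f := fun n => A n n) fun _ _ h => hmono h h
  have hcol (k : ℕ) : ∀ᶠ n in Filter.atTop, ∀ m ≥ n, A m k = A n k := by
    obtain ⟨N, hN⟩ := WellFoundedLT.antitone_chain_condition
      (f := fun n => A n k) fun _ _ h => hmono h le_rfl
    filter_upwards [Filter.eventually_ge_atTop N] with n hn m hm
    exact (hN m (hn.trans hm)).symm.trans (hN n hn)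
  obtain ⟨n₀, hn₀, hcols⟩ := ((Filter.eventually_ge_atTop n₁).and
    ((Set.finite_lt_nat n₁).eventually_all.2 fun k _ => hcol k)).exists
  have hcorner {n k : ℕ} (hn : n₁ ≤ n) (hk : n₁ ≤ k) : A n k = A n₁ n₁ :=
    le_antisymm (hmono hn hk) <| (hdiag (max n k) (hn.trans (le_max_left n k))).le.trans
      (hmono (le_max_left n k) (le_max_right n k))
  refine ⟨n₀, fun m hm => funext fun k => ?_⟩
  obtain hk | hk := lt_or_ge k n₁
  · exact hcols k hk m hm
  · rw [hcorner (hn₀.trans hm) hk, hcorner hn₀ hk]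

variable {R D : Type*} [CommRing R] [AddCommGroup D] [Module R D] {x : R}

theorem le_of_forall_pow_smul_inf_ker_le (ht : ∀ d : D, ∃ k : ℕ, x ^ k • d = 0)
    {F G : Submodule R D} (hFG : F ≤ G)
    (h : ∀ k : ℕ, x ^ k • G ⊓ LinearMap.ker (LinearMap.lsmul R D x) ≤ x ^ k • F) : G ≤ F := by
  have hpow (k : ℕ) : ∀ d ∈ G, x ^ k • d = 0 → d ∈ F := by
    induction k with
    | zero => exact fun d _ hd => by simpa using (show d = 0 by simpa using hd) ▸ F.zero_mem
    | succ k ih =>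
      intro d hd hxd
      obtain ⟨e, he, hed⟩ := (Submodule.mem_smul_pointwise_iff_exists _ _ _).1 <|
        h k ⟨Submodule.smul_mem_pointwise_smul d _ G hd, by
          simpa [smul_smul, pow_succ] using hxd⟩
      have hde : d - e ∈ F := ih _ (G.sub_mem hd (hFG he)) (by rw [smul_sub, hed, sub_self])
      simpa using F.add_mem hde he
  intro d hd
  obtain ⟨k, hk⟩ := ht d
  exact hpow k d hd hk

theorem isArtinian_of_isArtinian_ker_lsmul (ht : ∀ d : D, ∃ k : ℕ, x ^ k • d = 0)
    [IsArtinian R (LinearMap.ker (LinearMap.lsmul R D x))] : IsArtinian R D := by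
  rw [← monotone_stabilizes_iff_artinian]
  intro f
  let F (n : ℕ) : Submodule R D := OrderDual.ofDual (f n)
  have hF : Antitone F := fun _ _ h => f.monotone h
  let A (n k : ℕ) : Submodule R (LinearMap.ker (LinearMap.lsmul R D x)) :=
    (x ^ k • F n).comap (Submodule.subtype _)
  have hA : Antitone A := fun n m h k =>
    Submodule.comap_mono (Submodule.map_mono (hF h))
  have hA' (n : ℕ) : Antitone (A n) := fun k l h => by
    refine Submodule.comap_mono ?_
    rw [← Nat.add_sub_cancel' h, pow_add, mul_smul]
    exact Submodule.map_mono (Submodule.smul_le_self_of_tower _ _)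
  obtain ⟨n₀, hn₀⟩ := exists_forall_ge_eq_of_antitone hA hA'
  have hle {m : ℕ} (hm : n₀ ≤ m) : F n₀ ≤ F m := by
    refine le_of_forall_pow_smul_inf_ker_le ht (hF hm) fun k z ⟨hz, hker⟩ => ?_
    have hzA : (⟨z, hker⟩ : LinearMap.ker (LinearMap.lsmul R D x)) ∈ A n₀ k := hz
    rwa [← hn₀ m hm] at hzA
  exact ⟨n₀, fun m hm => (le_antisymm (hle hm) (hF hm) : F n₀ = F m)⟩

theorem isArtinian_of_isArtinian_torsionBySet_finset (s : Finset R) :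
    ∀ {D : Type*} [AddCommGroup D] [Module R D], (∀ x ∈ s, ∀ d : D, ∃ k : ℕ, x ^ k • d = 0) →
      IsArtinian R (Submodule.torsionBySet R D (s : Set R)) → IsArtinian R D := by
  classical
  induction s using Finset.induction_on with
  | empty =>
    intro D _ _ _ h
    have htop : Submodule.torsionBySet R D ((∅ : Finset R) : Set R) = ⊤ := by
      ext; simp [Submodule.mem_torsionBySet_iff]
    rw [htop] at h
    exact Submodule.topEquiv.isArtinian_iff.1 h
  | insert x s hxs ih =>
    intro D _ _ ht h
    let φ : Submodule.torsionBySet R (LinearMap.ker (LinearMap.lsmul R D x)) (s : Set R) →ₗ[R] D :=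
      Submodule.subtype _ ∘ₗ Submodule.subtype _
    have hφ (z) : φ z ∈ Submodule.torsionBySet R D ((insert x s : Finset R) : Set R) := by
      refine (Submodule.mem_torsionBySet_iff _ _).2 fun ⟨y, hy⟩ => ?_
      obtain rfl | hy := Finset.mem_insert.1 hy
      · exact z.1.2
      · exact congrArg Subtype.val ((Submodule.mem_torsionBySet_iff _ _).1 z.2 ⟨y, hy⟩)
    have : IsArtinian R (LinearMap.ker (LinearMap.lsmul R D x)) := by
      have hinj : Function.Injective (φ.codRestrict _ hφ) := fun z w hzw =>
        Subtype.ext (Subtype.ext (congrArg Subtype.val hzw :))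
      refine ih (fun y hy d => ?_) (isArtinian_of_injective _ hinj)
      obtain ⟨k, hk⟩ := ht y (Finset.mem_insert_of_mem hy) d.1
      exact ⟨k, Subtype.ext hk⟩
    exact isArtinian_of_isArtinian_ker_lsmul (ht x (Finset.mem_insert_self x s))

theorem mem_primaryComponent_iff {a : Ideal R} {d : D} :
    d ∈ a.primaryComponent D ↔ ∃ k, ∀ x ∈ a ^ k, x • d = 0 := by
  simp [Ideal.primaryComponent_mem, Submodule.mem_torsionBySet_iff]

theorem isArtinian_of_isArtinian_torsionBySet [IsNoetherianRing R] {a : Ideal R}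
    (ht : a.primaryComponent D = ⊤)
    [h : IsArtinian R (Submodule.torsionBySet R D (a : Set R))] : IsArtinian R D := by
  obtain ⟨s, rfl⟩ := a.fg_of_isNoetherianRing
  rw [Ideal.span, ← Submodule.torsionBySet_eq_torsionBySet_span] at h
  refine isArtinian_of_isArtinian_torsionBySet_finset s (fun x hx d => ?_) h
  obtain ⟨k, hk⟩ := mem_primaryComponent_iff.1 (ht.ge trivial : d ∈ _)
  exact ⟨k, hk _ (Ideal.pow_mem_pow (Submodule.subset_span hx) k)⟩

end ArtinianOfTorsion

section ArtinianInduction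

variable {R} {A : Type u} [AddCommGroup A] [Module R A]

theorem artinian_induction [IsArtinian R A]
    (p : ∀ (N : Type u) [AddCommGroup N] [Module R N], Prop)
    (congr : ∀ (N N' : Type u) [AddCommGroup N] [Module R N] [AddCommGroup N'] [Module R N'],
      (N ≃ₗ[R] N') → p N → p N')
    (step : ∀ P : Submodule R A, (∀ Q : Submodule R P, Q ≠ ⊤ → p Q) → p P) : p A := by
  refine congr _ _ Submodule.topEquiv ?_
  induction (⊤ : Submodule R A) using WellFoundedLT.induction with
  | _ P ih =>
    refine step P fun Q hQ => ?_
    have hlt : Q.map P.subtype < P := by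
      simpa using (Submodule.map_strictMono_of_injective P.subtype_injective) hQ.lt_top
    exact congr _ _ (Submodule.equivMapOfInjective P.subtype P.subtype_injective Q).symm
      (ih _ hlt)

theorem le_torsionBySet_of_ker_lsmul_eq_top {s : Set R} {P : Submodule R A}
    (h : ∀ x ∈ s, LinearMap.ker (LinearMap.lsmul R P x) = ⊤) :
    P ≤ Submodule.torsionBySet R A s := fun z hz =>
  (Submodule.mem_torsionBySet_iff s z).2 fun x =>
    congrArg Subtype.val ((h x x.2).ge trivial : (⟨z, hz⟩ : P) ∈ _)

theorem IsExtCofinite.of_isArtinian [IsNoetherianRing R] {a : Ideal R} [IsArtinian R A]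
    (h : ExtFinite R (R ⧸ a) A 0) : IsExtCofinite a A := by
  refine artinian_induction (A := A) (fun N _ _ => IsExtCofinite a N)
    (fun N N' _ _ _ _ e h => h.congr e) fun P hP => ?_
  by_cases! hx : ∃ x ∈ a, LinearMap.ker (LinearMap.lsmul R P x) ≠ ⊤
  · obtain ⟨x, hxa, hker⟩ := hx
    by_cases hrange : LinearMap.range (LinearMap.lsmul R P x) = ⊤
    · have := Submodule.Quotient.subsingleton_iff.2 hrange
      exact of_ker_lsmul_of_quotient hxa (hP _ hker) of_finite
    · exact middle (isShortExact_rangeRestrict _) (hP _ hker) (hP _ hrange)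
  · have := extFinite_quotient_zero_iff.1 h
    have := isNoetherian_of_le (le_torsionBySet_of_ker_lsmul_eq_top hx)
    exact of_finite

end ArtinianInduction

section AttachedPrimes

open scoped Pointwise

theorem isPrime_annihilator_of_forall_surjective {R A : Type*} [CommRing R] [AddCommGroup A]
    [Module R A] [Nontrivial A]
    (h : ∀ x ∉ Module.annihilator R A, Function.Surjective (LinearMap.lsmul R A x)) :
    (Module.annihilator R A).IsPrime := by
  refine ⟨fun htop => not_subsingleton A (Module.annihilator_eq_top_iff.1 htop),
    fun {x y} hxy => or_iff_not_imp_right.2 fun hy => Module.mem_annihilator.2 fun m => ?_⟩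
  obtain ⟨m, rfl⟩ := h y hy m
  simpa [mul_smul] using Module.mem_annihilator.1 hxy m

variable {R} {A : Type u} [AddCommGroup A] [Module R A]

theorem finite_quotSMulTop_of_ker_of_range {x : R} (φ : A →ₗ[R] A)
    [Module.Finite R (QuotSMulTop x (LinearMap.ker φ))]
    [Module.Finite R (QuotSMulTop x (LinearMap.range φ))] :
    Module.Finite R (QuotSMulTop x A) :=
  have h := isShortExact_rangeRestrict φ
  Module.Finite.of_exact (QuotSMulTop.map_exact x h.exact h.surjective)
    (QuotSMulTop.map_surjective x h.surjective)

theorem subsingleton_quotSMulTop {x : R} (h : Function.Surjective (LinearMap.lsmul R A x)) :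
    Subsingleton (QuotSMulTop x A) :=
  Submodule.Quotient.subsingleton_iff.2 <|
    (Submodule.map_top (LinearMap.lsmul R A x)).trans (LinearMap.range_eq_top.2 h)

/-- `N / x N` is finitely generated for every `x` outside finitely many primes, none of which
contains `b`. These primes stand in for the attached primes of an Artinian module `N`, so that no
secondary representation is needed. -/
def HasFiniteReductions (b : Ideal R) (N : Type u) [AddCommGroup N] [Module R N] : Prop :=
  ∃ Q : Set (PrimeSpectrum R), Q.Finite ∧ (∀ q ∈ Q, ¬ b ≤ q.asIdeal) ∧
    ∀ x, (∀ q ∈ Q, x ∉ q.asIdeal) → Module.Finite R (QuotSMulTop x N)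

theorem HasFiniteReductions.congr {b : Ideal R} {B : Type u} [AddCommGroup B] [Module R B]
    (e : A ≃ₗ[R] B) : HasFiniteReductions b A → HasFiniteReductions b B :=
  fun ⟨Q, hQ, hQb, hfin⟩ =>
    ⟨Q, hQ, hQb, fun x hx => have := hfin x hx; .equiv (QuotSMulTop.congr x e)⟩

theorem HasFiniteReductions.of_ker_of_range {b : Ideal R} (φ : A →ₗ[R] A)
    (hker : HasFiniteReductions b (LinearMap.ker φ))
    (hrange : HasFiniteReductions b (LinearMap.range φ)) : HasFiniteReductions b A := by
  obtain ⟨Q₁, hQ₁, hQ₁b, hfin₁⟩ := hker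
  obtain ⟨Q₂, hQ₂, hQ₂b, hfin₂⟩ := hrange
  exact ⟨Q₁ ∪ Q₂, hQ₁.union hQ₂, fun q hq => hq.elim (hQ₁b q) (hQ₂b q), fun y hy =>
    have := hfin₁ y fun q hq => hy q (.inl hq)
    have := hfin₂ y fun q hq => hy q (.inr hq)
    finite_quotSMulTop_of_ker_of_range φ⟩

theorem HasFiniteReductions.of_forall_surjective {b : Ideal R} [Nontrivial A]
    (hb : ¬ b ≤ Module.annihilator R A)
    (h : ∀ x ∉ Module.annihilator R A, Function.Surjective (LinearMap.lsmul R A x)) :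
    HasFiniteReductions b A :=
  ⟨{⟨_, isPrime_annihilator_of_forall_surjective h⟩}, Set.finite_singleton _,
    fun _ hq => hq ▸ hb, fun x hx =>
      have := subsingleton_quotSMulTop (h x (hx _ rfl))
      inferInstance⟩

theorem HasFiniteReductions.of_isArtinian [IsNoetherianRing R] [IsArtinian R A]
    {b : Ideal R} (h : Module.Finite R (Submodule.torsionBySet R A (b : Set R))) :
    HasFiniteReductions b A := by
  refine artinian_induction (R := R) (A := A) (fun N _ _ => HasFiniteReductions b N)
    (fun N N' _ _ _ _ e => congr e) fun P hP => ?_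
  by_cases! hx : ∃ x, LinearMap.ker (LinearMap.lsmul R P x) ≠ ⊤ ∧
    LinearMap.range (LinearMap.lsmul R P x) ≠ ⊤
  · obtain ⟨x, hker, hrange⟩ := hx
    exact of_ker_of_range _ (hP _ hker) (hP _ hrange)
  by_cases! hb : ∃ x ∈ b, LinearMap.ker (LinearMap.lsmul R P x) ≠ ⊤
  · obtain ⟨x, hxb, hker⟩ := hb
    have : Nontrivial P := not_subsingleton_iff_nontrivial.1 fun _ => hker (Subsingleton.elim _ _)
    refine of_forall_surjective
      (fun hbP => hker <| eq_top_iff.2 fun m _ => Module.mem_annihilator.1 (hbP hxb) m)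
      fun y hy => LinearMap.range_eq_top.1 <| hx y fun htop => hy <|
        Module.mem_annihilator.2 fun m => (htop.ge trivial : m ∈ _)
  · have := isNoetherian_of_le (le_torsionBySet_of_ker_lsmul_eq_top hb)
    exact ⟨∅, Set.finite_empty, by simp, fun x _ => inferInstance⟩

end AttachedPrimes

section SupportOfQuotients

variable {R} {N : Type u} [AddCommGroup N] [Module R N]

theorem mem_support_quotient_iff {W : Submodule R N} {p : PrimeSpectrum R} :
    p ∈ Module.support R (N ⧸ W) ↔ ∃ y, W.colon {y} ≤ p.asIdeal := by
  simp only [Module.mem_support_iff', W.mkQ_surjective.exists, SetLike.le_def,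
    Submodule.mem_colon_singleton, Submodule.mkQ_apply, ne_eq, ← Submodule.Quotient.mk_smul,
    Submodule.Quotient.mk_eq_zero]
  exact exists_congr fun y => forall_congr' fun r => not_imp_not

theorem support_quotient_antitone :
    Antitone fun W : Submodule R N => Module.support R (N ⧸ W) := fun _ _ hle =>
  Module.support_subset_of_surjective _ (Submodule.factor_surjective hle)

theorem isClosed_support_of_finite_associatedPrimes [IsNoetherianRing R]
    (h : (associatedPrimes R N).Finite) : IsClosed (Module.support R N) := by
  have hsupp : Module.support R N =
      ⋃ I ∈ associatedPrimes R N, PrimeSpectrum.zeroLocus (I : Set R) := by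
    ext p
    simp only [Set.mem_iUnion, PrimeSpectrum.mem_zeroLocus, SetLike.coe_subset_coe, exists_prop]
    constructor
    · intro hp
      obtain ⟨m, hm⟩ := Module.mem_support_iff_exists_annihilator.1 hp
      obtain ⟨q, hq, hqp⟩ := Ideal.exists_minimalPrimes_le (J := p.asIdeal) hm
      exact ⟨q, associatedPrimes.subset_of_injective (Submodule.subtype_injective _)
        (Module.associatedPrimes.minimalPrimes_annihilator_subset_associatedPrimes R _ hq), hqp⟩
    · rintro ⟨I, hI, hle⟩
      obtain ⟨-, x, hx⟩ := isAssociatedPrime_iff.1 hI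
      refine Module.mem_support_iff'.2 ⟨x, fun r hr h => hr (hle ?_)⟩
      simpa [hx, Submodule.mem_colon_singleton] using h
  exact hsupp ▸ h.isClosed_biUnion fun I _ => PrimeSpectrum.isClosed_zeroLocus _

theorem exists_fg_forall_support_quotient_subset [IsNoetherianRing R] (h : IsWeaklyLaskerian R N) :
    ∃ W : Submodule R N, W.FG ∧
      ∀ U : Submodule R N, U.FG → Module.support R (N ⧸ W) ⊆ Module.support R (N ⧸ U) := by
  let supp (W : Submodule R N) : TopologicalSpace.Closeds (PrimeSpectrum R) :=
    ⟨Module.support R (N ⧸ W), isClosed_support_of_finite_associatedPrimes (h W)⟩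
  obtain ⟨_, ⟨W, hW, rfl⟩, hmin⟩ :=
    wellFounded_lt.has_min (supp '' {W | W.FG}) ⟨_, ⊥, Submodule.fg_bot, rfl⟩
  refine ⟨W, hW, fun U hU => ?_⟩
  have hle : supp (W ⊔ U) ≤ supp W := support_quotient_antitone le_sup_left
  have heq : supp (W ⊔ U) = supp W :=
    eq_of_le_of_not_lt hle (hmin _ ⟨W ⊔ U, Submodule.FG.sup hW hU, rfl⟩)
  exact (congrArg SetLike.coe heq).ge.trans (support_quotient_antitone le_sup_right)

theorem exists_seq_not_le_of_infinite [IsNoetherianRing R] {X : Set (PrimeSpectrum R)}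
    (hX : X.Infinite) : ∃ p : ℕ → PrimeSpectrum R, (∀ i, p i ∈ X) ∧ ∀ i j, i < j → ¬ p i ≤ p j := by
  let f := hX.natEmbedding
  obtain ⟨g, hg | hg⟩ :=
    exists_increasing_or_nonincreasing_subseq (· ≤ ·) (Subtype.val ∘ f : ℕ → PrimeSpectrum R)
  · let chain : ℕ →o Ideal R :=
      ⟨fun n => (f (g n)).1.asIdeal, monotone_nat_of_le_succ fun n => hg _ _ n.lt_succ_self⟩
    obtain ⟨n, hn⟩ := monotone_stabilizes_iff_noetherian.2 ‹IsNoetherianRing R› chain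
    have hinj := f.injective <| Subtype.ext <| PrimeSpectrum.ext <| hn (n + 1) n.le_succ
    exact absurd (g.injective hinj) n.lt_succ_self.ne
  · exact ⟨fun n => f (g n), fun n => (f (g n)).2, hg⟩

end SupportOfQuotients

section ManyAssociatedPrimes

variable {R} {N : Type u} [AddCommGroup N] [Module R N]

theorem exists_pow_smul_inf_le [IsNoetherianRing R] {J : Ideal R} {U V W : Submodule R N}
    (hV : V.FG) (hUW : J • U ≤ W) : ∃ n : ℕ, J ^ n • V ⊓ U ≤ W := by
  have : Module.Finite R V := Module.Finite.iff_fg.2 hV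
  obtain ⟨k, hk⟩ := Ideal.exists_pow_inf_eq_pow_smul J (U.comap V.subtype)
  refine ⟨k + 1, ?_⟩
  calc J ^ (k + 1) • V ⊓ U
    _ = (J ^ (k + 1) • ⊤ ⊓ U.comap V.subtype).map V.subtype := by
      rw [← Submodule.map_inf_eq_map_inf_comap, Submodule.map_smul'', Submodule.map_top,
        Submodule.range_subtype]
    _ = (J • (J ^ k • ⊤ ⊓ U.comap V.subtype)).map V.subtype := by
      rw [hk _ (Nat.le_add_right k 1), Nat.add_sub_cancel_left, pow_one]
    _ ≤ J • U := by
      rw [Submodule.map_smul'']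
      exact smul_mono_right J ((Submodule.map_mono inf_le_right).trans
        (Submodule.map_comap_le _ _))
    _ ≤ W := hUW

theorem prod_smul_sup_span_le {ι : Type*} {W : Submodule R N} {s : Finset ι} {I : ι → Ideal R}
    {y : ι → N} (h : ∀ i ∈ s, I i ≤ W.colon {y i}) :
    (∏ i ∈ s, I i) • (W ⊔ Submodule.span R (y '' s)) ≤ W := by
  rw [Submodule.smul_sup, ← Submodule.span_eq (∏ i ∈ s, I i), Submodule.span_smul_span]
  refine sup_le Submodule.smul_le_right (Submodule.span_le.2 ?_)
  rintro _ ⟨r, hr, _, ⟨i, hi, rfl⟩, rfl⟩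
  exact Submodule.mem_colon_singleton.1 (h i hi (Ideal.prod_le_inf.trans (Finset.inf_le hi) hr))

theorem colon_sup_smul_eq {U W : Submodule R N} {p I : Ideal R} [p.IsPrime] {c : R} {y : N}
    (hWU : W ≤ U) (hy : U.colon {y} ≤ p) (hcI : c ∈ I) (hcp : c ∉ p) :
    (W ⊔ (I * p) • (U ⊔ Submodule.span R {y})).colon {c • y} = p := by
  refine le_antisymm (fun r hr => ?_) fun r hr => ?_
  · have hle : W ⊔ (I * p) • (U ⊔ Submodule.span R {y}) ≤ U ⊔ p • Submodule.span R {y} := by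
      rw [Submodule.smul_sup]
      exact sup_le (hWU.trans le_sup_left)
        (sup_le_sup Submodule.smul_le_right (Submodule.smul_mono_left Ideal.mul_le_right))
    obtain ⟨u, hu, v, hv, huv⟩ := Submodule.mem_sup.1 (hle (Submodule.mem_colon_singleton.1 hr))
    obtain ⟨s, hs, rfl⟩ := Submodule.mem_smul_span_singleton.1 hv
    have hrcs : r * c - s ∈ p := hy <| Submodule.mem_colon_singleton.2 <| by
      rwa [sub_smul, mul_smul, ← huv, add_sub_cancel_right]
    exact (Ideal.IsPrime.mem_or_mem ‹_› ((p.sub_mem_iff_left hs).1 hrcs)).resolve_right hcp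
  · rw [Submodule.mem_colon_singleton, smul_smul, mul_comm r c]
    exact Submodule.mem_sup_right (Submodule.smul_mem_smul (Ideal.mul_mem_mul hcI hr)
      (Submodule.mem_sup_right (Submodule.mem_span_singleton_self y)))

theorem colon_sup_eq_of_inf_le {U V W : Submodule R N} {z : N} (hWU : W ≤ U) (hz : z ∈ U)
    (hV : V ⊓ U ≤ W) : (W ⊔ V).colon {z} = W.colon {z} := by
  ext r
  rw [Submodule.mem_colon_singleton, Submodule.mem_colon_singleton]
  refine ⟨fun h => ?_, fun h => Submodule.mem_sup_left h⟩
  have hmem : r • z ∈ (W ⊔ V) ⊓ U := ⟨h, U.smul_mem r hz⟩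
  rwa [sup_inf_assoc_of_le V hWU, sup_of_le_left hV] at hmem

theorem exists_fg_extension_colon_eq [IsNoetherianRing R] {ι : Type*} {W : Submodule R N}
    (hW : W.FG) (s : Finset ι) (q : ι → PrimeSpectrum R) (z : ι → N)
    (hz : ∀ i ∈ s, W.colon {z i} = (q i).asIdeal) (p : PrimeSpectrum R) (hp : ∀ i ∈ s, ¬ q i ≤ p)
    (hsupp : ∀ U : Submodule R N, U.FG → p ∈ Module.support R (N ⧸ U)) :
    ∃ W' : Submodule R N, W'.FG ∧ W ≤ W' ∧ (∀ i ∈ s, W'.colon {z i} = (q i).asIdeal) ∧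
      ∃ y, W'.colon {y} = p.asIdeal := by
  let J : Ideal R := ∏ i ∈ s, (q i).asIdeal
  let U := W ⊔ Submodule.span R (z '' s)
  have hU : U.FG := hW.sup (Submodule.fg_span (s.finite_toSet.image z))
  obtain ⟨y, hy⟩ := mem_support_quotient_iff.1 (hsupp U hU)
  have hV : (U ⊔ Submodule.span R {y}).FG := hU.sup (Submodule.fg_span_singleton y)
  obtain ⟨n, hn⟩ := exists_pow_smul_inf_le hV (prod_smul_sup_span_le fun i hi => (hz i hi).ge)
  have hJp : ¬ J ≤ p.asIdeal := fun h =>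
    let ⟨i, hi, hle⟩ := (p.2.prod_le).1 h
    hp i hi hle
  obtain ⟨c, hcJ, hcp⟩ := SetLike.not_le_iff_exists.1 fun h => hJp (p.2.le_of_pow_le h)
  refine ⟨W ⊔ (J ^ n * p.asIdeal) • (U ⊔ Submodule.span R {y}),
    hW.sup (Submodule.FG.smul (IsNoetherian.noetherian _) hV), le_sup_left, fun i hi => ?_,
    c • y, colon_sup_smul_eq le_sup_left hy hcJ hcp⟩
  rw [← hz i hi]
  refine colon_sup_eq_of_inf_le le_sup_left
    (Submodule.mem_sup_right (Submodule.subset_span (Set.mem_image_of_mem z hi)))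
    ((inf_le_inf_right U (Submodule.smul_mono_left Ideal.mul_le_left)).trans hn)

theorem mem_associatedPrimes_of_colon_eq [IsNoetherianRing R] {W : Submodule R N}
    {p : PrimeSpectrum R} {y : N} (h : W.colon {y} = p.asIdeal) :
    p.asIdeal ∈ associatedPrimes R (N ⧸ W) := by
  refine isAssociatedPrime_iff.2 ⟨p.2, W.mkQ y, ?_⟩
  ext r
  rw [← h, Submodule.mem_colon_singleton, Submodule.mem_colon_singleton, ← map_smul,
    Submodule.mem_bot, Submodule.mkQ_apply, Submodule.Quotient.mk_eq_zero]

theorem colon_iSup_eq {W : ℕ → Submodule R N} (hW : Monotone W) {y : N} {p : Ideal R} {k : ℕ}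
    (h : ∀ n, k ≤ n → (W n).colon {y} = p) : (⨆ n, W n).colon {y} = p := by
  ext r
  rw [Submodule.mem_colon_singleton, Submodule.mem_iSup_of_directed _ hW.directed_le]
  constructor
  · rintro ⟨m, hm⟩
    exact h _ (le_max_left k m) ▸ Submodule.mem_colon_singleton.2 (hW (le_max_right k m) hm)
  · exact fun hr => ⟨k, Submodule.mem_colon_singleton.1 ((h k le_rfl).ge hr)⟩

theorem exists_seq_colon_eq [IsNoetherianRing R] (p : ℕ → PrimeSpectrum R)
    (hp : ∀ i j, i < j → ¬ p i ≤ p j)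
    (hsupp : ∀ i, ∀ U : Submodule R N, U.FG → p i ∈ Module.support R (N ⧸ U)) :
    ∃ W : ℕ → Submodule R N, Monotone W ∧
      ∃ y : ℕ → N, ∀ i n, i < n → (W n).colon {y i} = (p i).asIdeal := by
  let Stage (n : ℕ) := {σ : Submodule R N × (ℕ → N) // σ.1.FG ∧
    ∀ i < n, σ.1.colon {σ.2 i} = (p i).asIdeal}
  have step (n : ℕ) (σ : Stage n) :
      ∃ τ : Stage (n + 1), σ.1.1 ≤ τ.1.1 ∧ ∀ i < n, τ.1.2 i = σ.1.2 i := by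
    obtain ⟨⟨W, z⟩, hW, hz⟩ := σ
    obtain ⟨W', hW', hle, hz', y, hy⟩ := exists_fg_extension_colon_eq hW (Finset.range n) p z
      (fun i hi => hz i (Finset.mem_range.1 hi)) (p n) (fun i hi => hp i n (Finset.mem_range.1 hi))
      (hsupp n)
    refine ⟨⟨(W', Function.update z n y), hW', fun i hi => ?_⟩, hle, fun i hi =>
      Function.update_of_ne hi.ne _ _⟩
    obtain hi | rfl := Nat.lt_succ_iff_lt_or_eq.1 hi
    · simpa only [Function.update_of_ne hi.ne] using hz' i (Finset.mem_range.2 hi)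
    · simpa only [Function.update_self] using hy
  choose next hnext hstable using step
  let σ (n : ℕ) : Stage n := Nat.rec ⟨(⊥, 0), Submodule.fg_bot, by simp⟩ next n
  refine ⟨fun n => (σ n).1.1, monotone_nat_of_le_succ fun n => hnext n (σ n),
    fun i => (σ (i + 1)).1.2 i, fun i n hi => ?_⟩
  have hy : (σ n).1.2 i = (σ (i + 1)).1.2 i := by
    induction n, hi using Nat.le_induction with
    | base => rfl
    | succ m hm ih => exact (hstable m (σ m) i hm).trans ih
  exact (congrArg (fun z => (σ n).1.1.colon {z}) hy).symm.trans ((σ n).2.2 i hi)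

theorem IsWeaklyLaskerian.exists_fg_finite_support [IsNoetherianRing R]
    (h : IsWeaklyLaskerian R N) :
    ∃ W : Submodule R N, W.FG ∧ (Module.support R (N ⧸ W)).Finite := by
  obtain ⟨W, hW, hmin⟩ := exists_fg_forall_support_quotient_subset h
  refine ⟨W, hW, by_contra fun hinf => ?_⟩
  obtain ⟨p, hpW, hp⟩ := exists_seq_not_le_of_infinite hinf
  obtain ⟨W, hmono, y, hy⟩ := exists_seq_colon_eq p hp fun i U hU => hmin U hU (hpW i)
  refine Set.infinite_of_injective_forall_mem (f := fun i => (p i).asIdeal) (fun i j hij => ?_)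
    (fun i => mem_associatedPrimes_of_colon_eq (colon_iSup_eq hmono (hy i))) (h _)
  have hpij : p i = p j := PrimeSpectrum.ext hij
  by_contra hne
  exact (lt_or_gt_of_ne hne).elim (fun hlt => hp i j hlt hpij.le) fun hlt => hp j i hlt hpij.ge

end ManyAssociatedPrimes

section PrimesInSupport

variable {R}

theorem exists_mem_notMem_and_forall_notMem_of_finite {I b : Ideal R}
    {Q : Set (PrimeSpectrum R)} (hQ : Q.Finite) (hb : ¬ I ≤ b) (hI : ∀ q ∈ Q, ¬ I ≤ q.asIdeal) :
    ∃ x ∈ I, x ∉ b ∧ ∀ q ∈ Q, x ∉ q.asIdeal := by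
  by_contra! h
  let f : Option (PrimeSpectrum R) → Ideal R := fun o => o.elim b PrimeSpectrum.asIdeal
  have hcover : (I : Set R) ⊆ ⋃ o ∈ insert none (some '' Q), f o := fun x hx => by
    by_cases hxb : x ∈ b
    · exact Set.mem_biUnion (Set.mem_insert _ _) hxb
    · obtain ⟨q, hq, hxq⟩ := h x hx hxb
      exact Set.mem_biUnion (Set.mem_insert_of_mem _ ⟨q, hq, rfl⟩) hxq
  have hprime : ∀ o ∈ insert none (some '' Q), o ≠ none → o ≠ none → (f o).IsPrime := by
    rintro _ (rfl | ⟨q, -, rfl⟩) ho _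
    exacts [absurd rfl ho, q.2]
  obtain ⟨_, rfl | ⟨q, hq, rfl⟩, hle⟩ :=
    (Ideal.subset_union_prime_finite ((hQ.image _).insert _) none none hprime).1 hcover
  exacts [hb hle, hI q hq hle]

-- If `{P | q ≤ P}` were finite, some `x ∈ m` would avoid its members not containing `m`, making `m`
-- minimal over `q + (x)`; this contradicts Krull's height theorem, as `q < p < m`.
theorem infinite_setOf_le_of_lt_of_lt [IsNoetherianRing R] {q p m : PrimeSpectrum R} (hqp : q < p)
    (hpm : p < m) : {P : PrimeSpectrum R | q ≤ P}.Infinite := by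
  intro hfin
  have hfin' : {P : PrimeSpectrum R | q ≤ P ∧ ¬ m ≤ P}.Finite := hfin.subset fun P hP => hP.1
  obtain ⟨x, hxm, hx⟩ : ∃ x ∈ m.asIdeal, ∀ P : PrimeSpectrum R, q ≤ P → x ∈ P.asIdeal → m ≤ P := by
    by_contra! h
    obtain ⟨P, hP, hle⟩ := (Ideal.subset_union_prime_finite hfin' m m fun P _ _ _ => P.2).1
      fun x hx => let ⟨P, hqP, hxP, hmP⟩ := h x hx; Set.mem_biUnion ⟨hqP, hmP⟩ hxP
    exact hP.2 hle
  have hle : Ideal.span (insert x (q.asIdeal : Set R)) ≤ m.asIdeal :=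
    Ideal.span_le.2 (Set.insert_subset hxm (hqp.trans hpm).le)
  obtain ⟨P, hP, hPm⟩ := Ideal.exists_minimalPrimes_le hle
  have hqP : q.asIdeal ≤ P := fun y hy => hP.1.2 (Ideal.subset_span (Or.inr hy))
  have hmP : m.asIdeal ≤ P := hx ⟨P, hP.1.1⟩ hqP (hP.1.2 (Ideal.subset_span (Or.inl rfl)))
  obtain rfl : m.asIdeal = P := hmP.antisymm hPm
  have hmin := Ideal.mem_minimalPrimes_span_of_mem_minimalPrimes_span_insert (q := p.asIdeal)
    hpm x (q.asIdeal : Set R) hP (q.asIdeal : Set R) hqp.le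
    (fun y hy => Ideal.le_radical (Ideal.subset_span (Or.inr hy)))
  rw [Ideal.span_eq] at hmin
  exact hqp.not_ge (hmin.2 ⟨q.2, le_rfl⟩ hqp.le)

variable {N : Type u} [AddCommGroup N] [Module R N]

theorem eq_of_le_of_finite_support [IsNoetherianRing R] (h : (Module.support R N).Finite)
    {p q : PrimeSpectrum R} (hp : ¬ p.asIdeal.IsMaximal) (hq : q ∈ Module.support R N)
    (hqp : q ≤ p) : q = p := by
  by_contra hne
  obtain ⟨m, hm, hpm⟩ := Ideal.exists_le_maximal p.asIdeal p.2.ne_top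
  have hpm' : p < ⟨m, hm.isPrime⟩ := lt_of_le_of_ne hpm fun h => hp (h ▸ hm)
  exact infinite_setOf_le_of_lt_of_lt (lt_of_le_of_ne hqp hne) hpm'
    (h.subset fun P hP => Module.mem_support_mono hP hq)

theorem isArtinian_of_forall_support_isMaximal [IsNoetherianRing R] [Module.Finite R N]
    (h : ∀ p ∈ Module.support R N, p.asIdeal.IsMaximal) : IsArtinian R N := by
  induction ‹Module.Finite R N›
    using IsNoetherianRing.induction_on_isQuotientEquivQuotientPrime with
  | subsingleton N => infer_instance
  | quotient N p e =>
    have hp : p ∈ Module.support R N := by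
      rw [e.support_eq]
      exact mem_support_quotient_iff.2
        ⟨1, fun r hr => by simpa [Submodule.mem_colon_singleton] using hr⟩
    have : IsSimpleModule R (R ⧸ p.asIdeal) := isSimpleModule_iff_isCoatom.2 (h p hp).out
    exact (LinearEquiv.isArtinian_iff e).2 inferInstance
  | exact N₁ N₂ N₃ f g hf hg hfg ih₁ ih₃ =>
    have := ih₁ fun p hp => h p (Module.support_subset_of_injective f hf hp)
    have := ih₃ fun p hp => h p (Module.support_subset_of_surjective g hg hp)
    exact isArtinian_of_range_eq_ker f g (LinearMap.exact_iff.1 hfg).symm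

end PrimesInSupport

section Localization

open scoped Pointwise

variable {R} {S : Submonoid R} {N : Type u} [AddCommGroup N] [Module R N]

theorem comap_mem_support_of_mem_support_localizedModule {P : PrimeSpectrum (Localization S)}
    (hP : P ∈ Module.support (Localization S) (LocalizedModule S N)) :
    P.comap (algebraMap R (Localization S)) ∈ Module.support R N := by
  have hP' : P.comap (algebraMap R (Localization S)) ∈ Module.support R (LocalizedModule S N) :=
    Set.mem_preimage.1 (Module.support_subset_preimage_comap hP)
  obtain ⟨z, hz⟩ := Module.mem_support_iff'.1 hP'
  obtain ⟨⟨n, s⟩, hns⟩ :=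
    IsLocalizedModule.surj S (LocalizedModule.mkLinearMap S N) z
  refine Module.mem_support_iff'.2 ⟨n, fun r hr h => ?_⟩
  have hs : (s : R) ∉ (P.comap (algebraMap R (Localization S))).asIdeal := fun hs =>
    P.2.ne_top (Ideal.eq_top_of_isUnit_mem _ hs (IsLocalization.map_units _ s))
  change s • z = _ at hns
  refine hz (r * (s : R)) (fun hrs => ((PrimeSpectrum.isPrime _).mem_or_mem hrs).elim hr hs) ?_
  rw [mul_smul, ← Submonoid.smul_def, hns, ← map_smul, h, map_zero]

theorem torsionBySet_localizedModule_le {a : Ideal R} (ha : a.FG) :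
    Submodule.torsionBySet (Localization S) (LocalizedModule S N)
        (a.map (algebraMap R (Localization S)) : Set (Localization S)) ≤
      (Submodule.torsionBySet R N (a : Set R)).localized S := by
  intro z hz
  obtain ⟨⟨n, s⟩, rfl⟩ := IsLocalizedModule.mk'_surjective S (LocalizedModule.mkLinearMap S N) z
  have := Module.Finite.iff_fg.2 ha
  let g : a →ₗ[R] N := LinearMap.toSpanSingleton R N n ∘ₗ a.subtype
  have hg : LocalizedModule.mkLinearMap S N ∘ₗ g = LocalizedModule.mkLinearMap S N ∘ₗ 0 := by
    ext r
    have hr := (Submodule.mem_torsionBySet_iff _ _).1 hz ⟨_, Ideal.mem_map_of_mem _ r.2⟩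
    rw [Subtype.coe_mk, algebraMap_smul, Function.uncurry_apply_pair, ← IsLocalizedModule.mk'_smul,
      IsLocalizedModule.mk'_eq_zero] at hr
    rwa [LinearMap.comp_zero]
  obtain ⟨u, hu⟩ := Module.Finite.exists_smul_of_comp_eq_of_isLocalizedModule S
    (LocalizedModule.mkLinearMap S N) g 0 hg
  refine ⟨u • n, (Submodule.mem_torsionBySet_iff _ _).2 fun r => ?_, u * s,
    IsLocalizedModule.mk'_cancel_left _ _ _ _⟩
  have hur : u • (r : R) • n = u • (0 : N) := LinearMap.congr_fun hu r
  rw [smul_comm, hur, smul_zero]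

theorem primaryComponent_localizedModule_eq_top {a : Ideal R} (ht : a.primaryComponent N = ⊤) :
    (a.map (algebraMap R (Localization S))).primaryComponent (LocalizedModule S N) = ⊤ := by
  refine eq_top_iff.2 fun z _ => ?_
  obtain ⟨⟨n, s⟩, rfl⟩ := IsLocalizedModule.mk'_surjective S (LocalizedModule.mkLinearMap S N) z
  obtain ⟨k, hk⟩ := mem_primaryComponent_iff.1 (ht.ge (Submodule.mem_top (x := n)))
  have hle : (a ^ k).map (algebraMap R (Localization S)) ≤ Ideal.torsionOf (Localization S)
      (LocalizedModule S N) (IsLocalizedModule.mk' (LocalizedModule.mkLinearMap S N) n s) := by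
    refine Ideal.map_le_iff_le_comap.2 fun r hr => ?_
    rw [Ideal.mem_comap, Ideal.mem_torsionOf_iff, algebraMap_smul, ← IsLocalizedModule.mk'_smul,
      hk r hr, IsLocalizedModule.mk'_zero]
  refine mem_primaryComponent_iff.2 ⟨k, fun x hx => hle ?_⟩
  rwa [Ideal.map_pow]

theorem exists_fg_forall_exists_smul_mem
    [h : Module.Finite (Localization S) (LocalizedModule S N)] :
    ∃ F : Submodule R N, F.FG ∧ ∀ z, ∃ s ∈ S, s • z ∈ F := by
  obtain ⟨T, hT⟩ := h
  choose ν hν using IsLocalizedModule.mk'_surjective S (LocalizedModule.mkLinearMap S N)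
  let F : Submodule R N := Submodule.span R ((fun t => (ν t).1) '' T)
  have hF : ⊤ ≤ F.localized S := hT ▸ Submodule.span_le.2 fun t ht =>
    ⟨_, Submodule.subset_span ⟨t, ht, rfl⟩, (ν t).2, hν t⟩
  refine ⟨F, Submodule.fg_span (T.finite_toSet.image _), fun z => ?_⟩
  obtain ⟨m, hm, s, hs⟩ := hF (Submodule.mem_top (x := LocalizedModule.mkLinearMap S N z))
  rw [IsLocalizedModule.mk'_eq_iff, ← LinearMap.map_smul_of_tower] at hs
  obtain ⟨c, hc⟩ := IsLocalizedModule.exists_of_eq (S := S) hs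
  refine ⟨c * s, mul_mem c.2 s.2, ?_⟩
  rw [mul_smul]
  exact hc ▸ F.smul_mem (c : R) hm

theorem finite_localizedModule_quotient_range_lsmul {x : R}
    [Module.Finite (Localization S)
      (QuotSMulTop (algebraMap R (Localization S) x) (LocalizedModule S N))] :
    Module.Finite (Localization S)
      (LocalizedModule S (N ⧸ LinearMap.range (LinearMap.lsmul R N x))) := by
  have hle : algebraMap R (Localization S) x •
      (⊤ : Submodule (Localization S) (LocalizedModule S N)) ≤
        (LinearMap.range (LinearMap.lsmul R N x)).localized S := by
    rintro _ ⟨z, -, rfl⟩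
    obtain ⟨⟨n, s⟩, rfl⟩ := IsLocalizedModule.mk'_surjective S (LocalizedModule.mkLinearMap S N) z
    refine ⟨x • n, ⟨n, rfl⟩, s, ?_⟩
    rw [IsLocalizedModule.mk'_smul]
    exact (algebraMap_smul _ _ _).symm
  have : Module.Finite (Localization S)
      (LocalizedModule S N ⧸ (LinearMap.range (LinearMap.lsmul R N x)).localized S) :=
    Module.Finite.of_surjective (Submodule.factor hle) (Submodule.factor_surjective hle)
  exact Module.Finite.equiv (localizedQuotientEquiv S _)

theorem HasFiniteReductions.localizedModule [IsNoetherianRing R] {a : Ideal R}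
    (ht : a.primaryComponent N = ⊤) [Module.Finite R (Submodule.torsionBySet R N (a : Set R))]
    (hS : ∀ q ∈ Module.support R N, ∀ q', q ≤ q' → Disjoint (S : Set R) q'.asIdeal → q = q') :
    HasFiniteReductions (a.map (algebraMap R (Localization S))) (LocalizedModule S N) := by
  have : IsNoetherianRing (Localization S) := IsLocalization.isNoetherianRing S _ inferInstance
  let T : Submodule (Localization S) (LocalizedModule S N) := Submodule.torsionBySet _ _
    (a.map (algebraMap R (Localization S)) : Set (Localization S))
  have hfin : Module.Finite (Localization S) T := by
    let U := Submodule.torsionBySet R N (a : Set R)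
    have : Module.Finite (Localization S) (U.localized S) :=
      Module.Finite.of_isLocalizedModule S (U.toLocalized S)
    have := isNoetherian_of_le
      (torsionBySet_localizedModule_le a.fg_of_isNoetherianRing : T ≤ U.localized S)
    infer_instance
  have : IsArtinian (Localization S) T := by
    refine isArtinian_of_forall_support_isMaximal fun P hP => ?_
    replace hP := Module.support_subset_of_injective T.subtype T.subtype_injective hP
    obtain ⟨m, hm, hPm⟩ := Ideal.exists_le_maximal P.asIdeal P.2.ne_top
    let m' : PrimeSpectrum (Localization S) := ⟨m, hm.isPrime⟩
    have hcomap := hS _ (comap_mem_support_of_mem_support_localizedModule hP)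
      (m'.comap (algebraMap R _)) (Ideal.comap_mono hPm)
      (IsLocalization.disjoint_under_iff S _ m |>.2 hm.ne_top)
    exact PrimeSpectrum.localization_comap_injective _ S hcomap ▸ hm
  have := isArtinian_of_isArtinian_torsionBySet
    (primaryComponent_localizedModule_eq_top (S := S) ht)
  exact .of_isArtinian hfin

end Localization

section Torsion

variable {R} {a : Ideal R} {N N' : Type u} [AddCommGroup N] [Module R N]
  [AddCommGroup N'] [Module R N']

theorem primaryComponent_eq_top_of_injective {f : N →ₗ[R] N'} (hf : Function.Injective f)
    (ht : a.primaryComponent N' = ⊤) : a.primaryComponent N = ⊤ := by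
  refine eq_top_iff.2 fun z _ => ?_
  obtain ⟨k, hk⟩ := mem_primaryComponent_iff.1 (ht.ge (Submodule.mem_top (x := f z)))
  exact mem_primaryComponent_iff.2
    ⟨k, fun x hx => hf (by rw [map_smul, hk x hx, map_zero])⟩

theorem primaryComponent_eq_top_of_surjective {f : N →ₗ[R] N'} (hf : Function.Surjective f)
    (ht : a.primaryComponent N = ⊤) : a.primaryComponent N' = ⊤ := by
  refine eq_top_iff.2 fun z _ => ?_
  obtain ⟨y, rfl⟩ := hf z
  obtain ⟨k, hk⟩ := mem_primaryComponent_iff.1 (ht.ge (Submodule.mem_top (x := y)))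
  exact mem_primaryComponent_iff.2 ⟨k, fun x hx => by rw [← map_smul, hk x hx, map_zero]⟩

theorem annihilator_lt_annihilator_ker_lsmul {x : R} (hx : x ∉ Module.annihilator R N) :
    Module.annihilator R N < Module.annihilator R (LinearMap.ker (LinearMap.lsmul R N x)) :=
  lt_of_le_of_ne (LinearMap.annihilator_le_of_injective _ (Submodule.subtype_injective _))
    fun h => hx (h.ge (Module.mem_annihilator.2 fun z => Subtype.ext z.2))

end Torsion

section FiniteSupport

variable {R} [IsNoetherianRing R] {a : Ideal R} {N : Type u} [AddCommGroup N]
  [Module R N]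

theorem exists_fg_forall_support_isMaximal (ht : a.primaryComponent N = ⊤)
    [Module.Finite R (Submodule.torsionBySet R N (a : Set R))]
    (hN : (Module.support R N).Finite) :
    ∃ Q : Set (PrimeSpectrum R), Q.Finite ∧ (∀ q ∈ Q, ¬ a ≤ q.asIdeal) ∧
      ∀ x, (∀ q ∈ Q, x ∉ q.asIdeal) →
        ∃ F : Submodule R (N ⧸ LinearMap.range (LinearMap.lsmul R N x)), F.FG ∧
          ∀ p ∈ Module.support R (_ ⧸ F), p.asIdeal.IsMaximal := by
  let X : Set (PrimeSpectrum R) := {p ∈ Module.support R N | ¬ p.asIdeal.IsMaximal}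
  let S : Submonoid R := ⨅ p ∈ X, p.asIdeal.primeCompl
  have hmemS {s : R} : s ∈ S ↔ ∀ p ∈ X, s ∉ p.asIdeal := by
    simp only [S, Submonoid.mem_iInf, Ideal.mem_primeCompl_iff]
  have hS (q) (hq : q ∈ Module.support R N) (q' : PrimeSpectrum R) (hqq' : q ≤ q')
      (hdisj : Disjoint (S : Set R) q'.asIdeal) : q = q' := by
    obtain ⟨p, hp, hle⟩ := (Ideal.subset_union_prime_finite (hN.subset fun p hp => hp.1 : X.Finite)
      q' q' fun p _ _ _ => p.2).1 fun r hr => by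
        by_contra hrX
        exact hdisj.ne_of_mem (hmemS.2 fun p hp hrp => hrX (Set.mem_biUnion hp hrp)) hr rfl
    exact hqq'.antisymm (hle.trans (eq_of_le_of_finite_support hN hp.2 hq (hqq'.trans hle)).ge)
  obtain ⟨Q, hQ, hQa, hfin⟩ := HasFiniteReductions.localizedModule ht hS
  refine ⟨PrimeSpectrum.comap (algebraMap R (Localization S)) '' Q, hQ.image _, ?_, fun x hx => ?_⟩
  · rintro _ ⟨q, hq, rfl⟩ hle
    exact hQa q hq (Ideal.map_le_iff_le_comap.2 hle)
  have := hfin (algebraMap R (Localization S) x) fun q hq => hx _ ⟨q, hq, rfl⟩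
  have := finite_localizedModule_quotient_range_lsmul (S := S) (N := N) (x := x)
  obtain ⟨F, hF, hSF⟩ := exists_fg_forall_exists_smul_mem (S := S)
    (N := N ⧸ LinearMap.range (LinearMap.lsmul R N x))
  refine ⟨F, hF, fun p hp => ?_⟩
  by_contra hmax
  obtain ⟨y, hy⟩ := mem_support_quotient_iff.1 hp
  obtain ⟨s, hs, hsy⟩ := hSF y
  have hpN : p ∈ Module.support R N := Module.support_subset_of_surjective (Submodule.mkQ _)
    (Submodule.mkQ_surjective _) (Module.support_subset_of_surjective F.mkQ F.mkQ_surjective hp)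
  exact hmemS.1 hs p ⟨hpN, hmax⟩ (hy (Submodule.mem_colon_singleton.2 hsy))

theorem IsExtCofinite.of_forall_support_isMaximal (ht : a.primaryComponent N = ⊤)
    (h₀ : ExtFinite R (R ⧸ a) N 0) (h : ∀ p ∈ Module.support R N, p.asIdeal.IsMaximal) :
    IsExtCofinite a N := by
  have := extFinite_quotient_zero_iff.1 h₀
  have : IsArtinian R (Submodule.torsionBySet R N (a : Set R)) :=
    isArtinian_of_forall_support_isMaximal fun p hp =>
      h p (Module.support_subset_of_injective _ (Submodule.subtype_injective _) hp)
  have := isArtinian_of_isArtinian_torsionBySet ht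
  exact .of_isArtinian h₀

theorem IsExtCofinite.of_ker_lsmul {x : R} (hx : x ∈ a) (ht : a.primaryComponent N = ⊤)
    (h₀ : ExtFinite R (R ⧸ a) N 0) (h₁ : ExtFinite R (R ⧸ a) N 1)
    (hker : IsExtCofinite a (LinearMap.ker (LinearMap.lsmul R N x)))
    {F : Submodule R (N ⧸ LinearMap.range (LinearMap.lsmul R N x))} (hF : F.FG)
    (hmax : ∀ p ∈ Module.support R (_ ⧸ F), p.asIdeal.IsMaximal) : IsExtCofinite a N := by
  have hrange := h₁.right (isShortExact_rangeRestrict _) (hker 2)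
  have hquot := h₀.right (isShortExact_subtype_mkQ _) hrange
  have : Module.Finite R F := Module.Finite.iff_fg.2 hF
  have hFcof : IsExtCofinite a F := .of_finite
  refine .of_ker_lsmul_of_quotient hx hker (.middle (isShortExact_subtype_mkQ F) hFcof ?_)
  refine .of_forall_support_isMaximal ?_ (hquot.right (isShortExact_subtype_mkQ F) (hFcof 1)) hmax
  exact primaryComponent_eq_top_of_surjective F.mkQ_surjective
    (primaryComponent_eq_top_of_surjective (Submodule.mkQ_surjective _) ht)

theorem IsExtCofinite.of_finite_support (ht : a.primaryComponent N = ⊤)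
    (h₀ : ExtFinite R (R ⧸ a) N 0) (h₁ : ExtFinite R (R ⧸ a) N 1)
    (hN : (Module.support R N).Finite) : IsExtCofinite a N := by
  induction hb : Module.annihilator R N using WellFoundedGT.induction generalizing N with
  | ind b ih =>
  subst hb
  have := extFinite_quotient_zero_iff.1 h₀
  by_cases hab : a ≤ Module.annihilator R N
  · have htop : Submodule.torsionBySet R N (a : Set R) = ⊤ := eq_top_iff.2 fun z _ =>
      (Submodule.mem_torsionBySet_iff _ _).2 fun r => Module.mem_annihilator.1 (hab r.2) z
    have : Module.Finite R N := .equiv ((LinearEquiv.ofEq _ _ htop).trans Submodule.topEquiv)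
    exact .of_finite
  obtain ⟨Q, hQ, hQa, hred⟩ := exists_fg_forall_support_isMaximal ht hN
  obtain ⟨x, hxa, hxN, hxQ⟩ := exists_mem_notMem_and_forall_notMem_of_finite hQ hab hQa
  obtain ⟨F, hF, hmax⟩ := hred x hxQ
  have hker₀ : ExtFinite R (R ⧸ a) (LinearMap.ker (LinearMap.lsmul R N x)) 0 :=
    .left_zero (Submodule.subtype_injective _) h₀
  have hker₁ : ExtFinite R (R ⧸ a) (LinearMap.ker (LinearMap.lsmul R N x)) 1 :=
    .left_succ (isShortExact_rangeRestrict _) (.left_zero (Submodule.subtype_injective _) h₀) h₁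
  refine .of_ker_lsmul hxa ht h₀ h₁ (ih _ (annihilator_lt_annihilator_ker_lsmul hxN) ?_ hker₀ hker₁
    (hN.subset ?_) rfl) hF hmax
  · exact primaryComponent_eq_top_of_injective (Submodule.subtype_injective _) ht
  · exact Module.support_subset_of_injective _ (Submodule.subtype_injective _)

theorem IsExtCofinite.of_isWeaklyLaskerian (hN : IsWeaklyLaskerian R N)
    (ht : a.primaryComponent N = ⊤) (h₀ : ExtFinite R (R ⧸ a) N 0)
    (h₁ : ExtFinite R (R ⧸ a) N 1) : IsExtCofinite a N := by
  obtain ⟨W, hW, hfin⟩ := hN.exists_fg_finite_support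
  have : Module.Finite R W := Module.Finite.iff_fg.2 hW
  have hWcof : IsExtCofinite a W := .of_finite
  have h := isShortExact_subtype_mkQ W
  exact .middle h hWcof <| .of_finite_support
    (primaryComponent_eq_top_of_surjective W.mkQ_surjective ht)
    (h₀.right h (hWcof 1)) (h₁.right h (hWcof 2)) hfin

end FiniteSupport

section ExtMk

open Limits

variable {C : Type*} [Category* C] [Abelian C] [HasExt C] {X Y : C} (P : ProjectiveResolution X)

theorem extMk_degree_zero_eq_zero_iff (f : P.complex.X 0 ⟶ Y) (hf : P.complex.d 1 0 ≫ f = 0) :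
    P.extMk f 1 rfl hf = 0 ↔ f = 0 := by
  refine ⟨fun h => ?_, by rintro rfl; simp⟩
  simp only [← P.extEquivCohomologyClass.apply_eq_iff_eq,
    ProjectiveResolution.extEquivCohomologyClass_extMk,
    ProjectiveResolution.extEquivCohomologyClass_zero,
    CochainComplex.HomComplex.CohomologyClass.mk_eq_zero_iff] at h
  rw [CochainComplex.HomComplex.Cocycle.toSingleMk_mem_coboundaries_iff _ _ _ _ _ 1 (by simp)] at h
  obtain ⟨g, hg⟩ := h
  have g_eq_zero : g = 0 := (P.cochainComplex.isZero_of_isStrictlyLE 0 1).eq_of_src _ _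
  rw [← cancel_epi (P.cochainComplexXIso (-((0 : ℕ) : ℤ)) 0 rfl).hom, ← hg, g_eq_zero, comp_zero,
    comp_zero]

/- In degree `0` the index `next 0` is `0`, and the differential `d 0 0` is zero. -/
theorem extMk_eq_zero_iff_exists_d_next_comp {n : ℕ} (f : P.complex.X n ⟶ Y)
    (hf : P.complex.d (n + 1) n ≫ f = 0) :
    P.extMk f (n + 1) rfl hf = 0 ↔
      ∃ g, P.complex.d n ((ComplexShape.down ℕ).next n) ≫ g = f := by
  cases n with
  | zero =>
    have d_eq_zero : P.complex.d 0 ((ComplexShape.down ℕ).next 0) = 0 :=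
      P.complex.shape _ _ (by simp)
    simp only [extMk_degree_zero_eq_zero_iff P f hf, d_eq_zero, zero_comp]
    exact ⟨fun h => ⟨0, h.symm⟩, fun ⟨_, h⟩ => h.symm⟩
  | succ n => rw [P.extMk_eq_zero_iff f (n + 1 + 1) rfl hf n rfl, ChainComplex.next_nat_succ]

end ExtMk

section ExtComparison

variable {R} {X X' Y : ModuleCat.{u} R} (P : ProjectiveResolution X)
  (P' : ProjectiveResolution X')

variable (Y) in
/-- The complex of modules `Hom_R(P_n, Y)`, viewed as a chain complex in the opposite category; its
homology computes `extModule R n X Y`. -/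
noncomputable abbrev homChainComplex : ChainComplex (ModuleCat.{u} R)ᵒᵖ ℕ :=
  (((linearYoneda R (ModuleCat.{u} R)).obj Y).rightOp.mapHomologicalComplex _).obj P.complex

variable (Y) in
/-- The module of `n`-cocycles of `Hom_R(P, Y)`. -/
noncomputable abbrev homCocycles (n : ℕ) : ModuleCat.{u} R :=
  ((homChainComplex Y P).opcycles n).unop

variable (Y) in
/-- The `n`-th left derived functor of `Hom_R(-, Y)`, computed by the resolution `P`. -/
noncomputable def leftDerivedIsoHomology (n : ℕ) :
    (((linearYoneda R (ModuleCat.{u} R)).obj Y).rightOp.leftDerived n).obj X ≅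
      (homChainComplex Y P).homology n :=
  P.isoLeftDerivedObj ((linearYoneda R (ModuleCat.{u} R)).obj Y).rightOp n

namespace homCocycles

variable (Y) in
/-- The inclusion of the `n`-cocycles into the cochains `Hom_R(P_n, Y)`. -/
noncomputable def toHom (n : ℕ) : homCocycles Y P n →ₗ[R] (P.complex.X n ⟶ Y) :=
  ((homChainComplex Y P).pOpcycles n).unop.hom

variable (Y) in
/-- The class in `Ext^n_R(X, Y)` of a cocycle, for the `Ext` defined as a derived functor. -/
noncomputable def toExtModule (n : ℕ) : homCocycles Y P n →ₗ[R] extModule R n X Y :=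
  ((leftDerivedIsoHomology Y P n).hom ≫ (homChainComplex Y P).homologyι n).unop.hom

theorem toHom_injective (n : ℕ) : Function.Injective (toHom Y P n) :=
  (ModuleCat.mono_iff_injective ((homChainComplex Y P).pOpcycles n).unop).1 inferInstance

theorem d_comp_toHom {n : ℕ} (z : homCocycles Y P n) :
    P.complex.d (n + 1) n ≫ toHom Y P n z = 0 :=
  congrArg (fun φ => φ.unop.hom z) ((homChainComplex Y P).d_pOpcycles (n + 1) n)

theorem exists_toHom_eq {n : ℕ} (f : P.complex.X n ⟶ Y) (hf : P.complex.d (n + 1) n ≫ f = 0) :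
    ∃ z, toHom Y P n z = f := by
  have exact_unop := (ShortComplex.exact_of_g_is_cokernel
    (.mk _ _ ((homChainComplex Y P).d_pOpcycles (n + 1) n))
    ((homChainComplex Y P).opcyclesIsCokernel (n + 1) n (by simp))).unop
  exact (ShortComplex.moduleCat_exact_iff _).1 exact_unop f hf

theorem toExtModule_surjective (n : ℕ) : Function.Surjective (toExtModule Y P n) :=
  (ModuleCat.epi_iff_surjective
    ((leftDerivedIsoHomology Y P n).hom ≫ (homChainComplex Y P).homologyι n).unop).1 inferInstance

theorem toExtModule_eq_zero_iff {n : ℕ} (z : homCocycles Y P n) :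
    toExtModule Y P n z = 0 ↔
      ∃ g, P.complex.d n ((ComplexShape.down ℕ).next n) ≫ g = toHom Y P n z := by
  let D := homChainComplex Y P
  let m := (ComplexShape.down ℕ).next n
  let iso := leftDerivedIsoHomology Y P n
  have exact_unop := (ShortComplex.exact_of_f_is_kernel
    (.mk _ _ (D.homologyι_comp_fromOpcycles n m)) (D.homologyIsKernel n _ rfl)).unop
  have iso_injective : Function.Injective iso.hom.unop.hom :=
    (ModuleCat.mono_iff_injective iso.hom.unop).1 inferInstance
  have toExtModule_eq_zero : toExtModule Y P n z = 0 ↔ (D.homologyι n).unop.hom z = 0 :=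
    iso_injective.eq_iff' (map_zero _)
  have toHom_fromOpcycles (g : P.complex.X m ⟶ Y) :
      toHom Y P n ((D.fromOpcycles n m).unop.hom g) = P.complex.d n m ≫ g :=
    congrArg (fun φ => φ.unop.hom g) (D.p_fromOpcycles n m)
  rw [toExtModule_eq_zero]
  constructor
  · intro hz
    obtain ⟨g, hg⟩ := (ShortComplex.moduleCat_exact_iff _).1 exact_unop z hz
    exact ⟨g, (toHom_fromOpcycles g).symm.trans (congrArg (toHom Y P n) hg)⟩
  · rintro ⟨g, hg⟩
    rw [← toHom_injective P n ((toHom_fromOpcycles g).trans hg)]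
    exact congrArg (fun φ => φ.unop.hom g) (D.homologyι_comp_fromOpcycles n m)

variable (Y) in
/-- The class in `Ext^n_R(X, Y)` of a cocycle, for the `Ext` defined by Yoneda composition in the
derived category. -/
noncomputable def toExt (n : ℕ) : homCocycles Y P n →ₗ[R] Abelian.Ext X Y n where
  toFun z := P.extMk (toHom Y P n z) (n + 1) rfl (d_comp_toHom P z)
  map_add' z w := by
    rw [P.add_extMk]
    congr 1
    exact map_add (toHom Y P n) z w
  map_smul' r z := by
    rw [RingHom.id_apply, Abelian.Ext.smul_eq_comp_mk₀, P.extMk_comp_mk₀]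
    congr 1
    exact (map_smul (toHom Y P n) r z).trans (by simp)

theorem toExt_surjective (n : ℕ) : Function.Surjective (toExt Y P n) := by
  intro y
  obtain ⟨f, hf, rfl⟩ := P.extMk_surjective y (n + 1) rfl
  obtain ⟨z, rfl⟩ := exists_toHom_eq P f hf
  exact ⟨z, rfl⟩

theorem ker_toExtModule (n : ℕ) :
    LinearMap.ker (toExtModule Y P n) = LinearMap.ker (toExt Y P n) :=
  Submodule.ext fun z => (toExtModule_eq_zero_iff P z).trans
    (extMk_eq_zero_iff_exists_d_next_comp P _ (d_comp_toHom P z)).symm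

theorem exists_map {P P'} {g : X' ⟶ X} (φ : ProjectiveResolution.Hom P' P g) {n : ℕ}
    (z : homCocycles Y P n) : ∃ z' : homCocycles Y P' n,
      toHom Y P' n z' = φ.hom.f n ≫ toHom Y P n z ∧
      toExtModule Y P' n z' =
        (((Ext R (ModuleCat.{u} R) n).map g.op).app Y).hom (toExtModule Y P n z) := by
  let F := ((linearYoneda R (ModuleCat.{u} R)).obj Y).rightOp
  let ψ : homChainComplex Y P' ⟶ homChainComplex Y P := (F.mapHomologicalComplex _).map φ.hom
  have iso_naturality : (F.leftDerived n).map g ≫ (leftDerivedIsoHomology Y P n).hom =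
      (leftDerivedIsoHomology Y P' n).hom ≫ HomologicalComplex.homologyMap ψ n :=
    ProjectiveResolution.isoLeftDerivedObj_hom_naturality g P' P φ.hom
      (by simpa using φ.hom_f_zero_comp_π_f_zero) F n
  have naturality : (F.leftDerived n).map g ≫
      ((leftDerivedIsoHomology Y P n).hom ≫ (homChainComplex Y P).homologyι n) =
      ((leftDerivedIsoHomology Y P' n).hom ≫ (homChainComplex Y P').homologyι n) ≫
        HomologicalComplex.opcyclesMap ψ n := by
    rw [← Category.assoc, iso_naturality, Category.assoc, Category.assoc,
      ← HomologicalComplex.homologyι_naturality]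
  exact ⟨(HomologicalComplex.opcyclesMap ψ n).unop.hom z,
    congrArg (fun φ => φ.unop.hom z) (HomologicalComplex.p_opcyclesMap ψ n),
    (congrArg (fun φ => φ.unop.hom z) naturality).symm⟩

end homCocycles

open homCocycles

variable (Y) in
/-- The comparison between `extModule R n X Y`, a left derived functor of `Hom_R(-, Y)`, and
`Abelian.Ext X Y n`, defined in the derived category: both are the quotient of the cocycles of
`Hom_R(P, Y)` by the coboundaries. -/
noncomputable def extModuleEquiv (n : ℕ) : extModule R n X Y ≃ₗ[R] Abelian.Ext X Y n :=
  ((toExtModule Y P n).quotKerEquivOfSurjective (toExtModule_surjective P n)).symm ≪≫ₗ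
    Submodule.quotEquivOfEq _ _ (ker_toExtModule P n) ≪≫ₗ
      (toExt Y P n).quotKerEquivOfSurjective (toExt_surjective P n)

theorem extModuleEquiv_toExtModule {n : ℕ} (z : homCocycles Y P n) :
    extModuleEquiv Y P n (toExtModule Y P n z) = toExt Y P n z := by
  have quotKerEquiv_symm : ((toExtModule Y P n).quotKerEquivOfSurjective
      (toExtModule_surjective P n)).symm (toExtModule Y P n z) = Submodule.Quotient.mk z :=
    (LinearEquiv.symm_apply_eq _).2 rfl
  rw [extModuleEquiv, LinearEquiv.trans_apply, LinearEquiv.trans_apply, quotKerEquiv_symm]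
  rfl

theorem extModuleEquiv_map (g : X' ⟶ X) (n : ℕ) (x : extModule R n X Y) :
    extModuleEquiv Y P' n ((((Ext R (ModuleCat.{u} R) n).map g.op).app Y).hom x) =
      (Abelian.Ext.mk₀ g).comp (extModuleEquiv Y P n x) (zero_add n) := by
  let φ : ProjectiveResolution.Hom P' P g :=
    ⟨ProjectiveResolution.lift g P' P, by
      rw [← HomologicalComplex.comp_f, ProjectiveResolution.lift_commutes]; rfl⟩
  obtain ⟨z, rfl⟩ := toExtModule_surjective P n x
  obtain ⟨z', hz', hmap⟩ := exists_map φ z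
  rw [← hmap, extModuleEquiv_toExtModule, extModuleEquiv_toExtModule]
  refine Eq.trans ?_
    (ProjectiveResolution.mk₀_comp_extMk (toHom Y P n z) (n + 1) rfl (d_comp_toHom P z) φ).symm
  simp only [← hz']
  rfl

end ExtComparison

section TorsionFunctor

variable {R} {a : Ideal R} {M N : Type u} [AddCommGroup M] [Module R M]
  [AddCommGroup N] [Module R N]

theorem exists_le_torsionBySet_pow_of_fg {J : Submodule R M} (hJ : J.FG)
    (h : J ≤ a.primaryComponent M) : ∃ k, J ≤ Submodule.torsionBySet R M (a ^ k : Ideal R) := by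
  induction J, hJ using Submodule.fg_induction with
  | singleton m =>
    obtain ⟨k, hk⟩ := (Ideal.primaryComponent_mem M a m).1
      (h (Submodule.mem_span_singleton_self m))
    exact ⟨k, (Submodule.span_singleton_le_iff_mem _ _).2 hk⟩
  | sup J₁ J₂ _ _ ih₁ ih₂ =>
    obtain ⟨k, hk⟩ := ih₁ (le_sup_left.trans h)
    obtain ⟨l, hl⟩ := ih₂ (le_sup_right.trans h)
    have mono {i j : ℕ} (hij : i ≤ j) : Submodule.torsionBySet R M (a ^ i : Ideal R) ≤
        Submodule.torsionBySet R M (a ^ j : Ideal R) :=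
      Submodule.torsionBySet_le_torsionBySet_of_subset (Ideal.pow_le_pow_right hij)
    exact ⟨max k l, sup_le (hk.trans (mono (le_max_left k l))) (hl.trans (mono (le_max_right k l)))⟩

theorem primaryComponent_primaryComponent :
    a.primaryComponent (a.primaryComponent M) = ⊤ := by
  refine eq_top_iff.2 fun m _ => ?_
  obtain ⟨k, hk⟩ := mem_primaryComponent_iff.1 m.2
  exact mem_primaryComponent_iff.2 ⟨k, fun x hx => Subtype.ext (hk x hx)⟩

theorem primaryComponent_quotient_primaryComponent [IsNoetherianRing R] :
    a.primaryComponent (M ⧸ a.primaryComponent M) = ⊥ := by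
  refine eq_bot_iff.2 fun y hy => ?_
  obtain ⟨m, rfl⟩ := Submodule.mkQ_surjective _ y
  obtain ⟨k, hk⟩ := mem_primaryComponent_iff.1 hy
  have smul_le : Submodule.map (LinearMap.toSpanSingleton R M m) (a ^ k) ≤
      a.primaryComponent M := by
    rintro _ ⟨x, hx, rfl⟩
    exact (Submodule.Quotient.mk_eq_zero _).1 ((map_smul _ x m).trans (hk x hx))
  obtain ⟨l, hl⟩ := exists_le_torsionBySet_pow_of_fg ((IsNoetherian.noetherian _).map _) smul_le
  refine (Submodule.Quotient.mk_eq_zero _).2 (mem_primaryComponent_iff.2 ⟨l + k, ?_⟩)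
  have pow_le : a ^ l * a ^ k ≤ LinearMap.ker (LinearMap.toSpanSingleton R M m) :=
    Ideal.mul_le.2 fun x hx y hy => (mul_smul x y m).trans
      ((Submodule.mem_torsionBySet_iff _ _).1 (hl ⟨y, hy, rfl⟩) ⟨x, hx⟩)
  exact fun x hx => pow_le (pow_add a l k ▸ hx)

theorem exists_forall_mem_pow_map_eq_zero [IsNoetherianRing R] {J : Ideal R} (f : J →ₗ[R] N)
    (hN : a.primaryComponent N = ⊤) : ∃ n, ∀ j : J, (j : R) ∈ a ^ n → f j = 0 := by
  obtain ⟨k, hk⟩ := exists_le_torsionBySet_pow_of_fg (Submodule.fg_range f) (le_top.trans hN.ge)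
  obtain ⟨c, hc⟩ := Ideal.exists_pow_inf_eq_pow_smul a (M := R) J
  refine ⟨c + k, fun j hj => ?_⟩
  have artin_rees : (j : R) ∈ a ^ k • J := by
    have hj' : (j : R) ∈ a ^ (c + k) • (⊤ : Submodule R R) ⊓ J := ⟨by simpa using hj, j.2⟩
    rw [hc _ (Nat.le_add_right c k), Nat.add_sub_cancel_left] at hj'
    exact (smul_mono_right _ inf_le_right : _ ≤ a ^ k • J) hj'
  have pow_smul_le : a ^ k • (⊤ : Submodule R J) ≤ LinearMap.ker f :=
    Submodule.smul_le.2 fun r hr i _ => (map_smul f r i).trans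
      ((Submodule.mem_torsionBySet_iff _ _).1 (hk ⟨i, rfl⟩) ⟨r, hr⟩)
  exact pow_smul_le ((Submodule.mem_smul_top_iff _ _ _).2 artin_rees)

theorem exists_extension_of_forall_mem_map_eq_zero [Module.Injective R M] {J b : Ideal R}
    (f : J →ₗ[R] M) (hf : ∀ j : J, (j : R) ∈ b → f j = 0) :
    ∃ g : R →ₗ[R] M, (∀ j : J, g j = f j) ∧ ∀ x ∈ b, g x = 0 := by
  let q : J →ₗ[R] R ⧸ b := b.mkQ ∘ₗ J.subtype
  have ker_le : LinearMap.ker q ≤ LinearMap.ker f := fun j hj =>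
    hf j ((Submodule.Quotient.mk_eq_zero _).1 hj)
  obtain ⟨g, hg⟩ := Module.Injective.out ((LinearMap.ker q).liftQ q le_rfl)
    (LinearMap.ker_eq_bot.1 (Submodule.ker_liftQ_eq_bot _ _ _ le_rfl))
    ((LinearMap.ker q).liftQ f ker_le)
  refine ⟨g ∘ₗ b.mkQ, fun j => hg (Submodule.Quotient.mk j), fun x hx => ?_⟩
  rw [LinearMap.comp_apply, Submodule.mkQ_apply, (Submodule.Quotient.mk_eq_zero _).2 hx, map_zero]

theorem injective_primaryComponent [IsNoetherianRing R] [Module.Injective R M] :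
    Module.Injective R (a.primaryComponent M) := by
  refine Module.Baer.injective fun J f => ?_
  obtain ⟨n, hn⟩ := exists_forall_mem_pow_map_eq_zero f primaryComponent_primaryComponent
  obtain ⟨g, hgf, hg⟩ := exists_extension_of_forall_mem_map_eq_zero
    ((a.primaryComponent M).subtype ∘ₗ f) fun j hj => congrArg Subtype.val (hn j hj)
  refine ⟨g.codRestrict _ fun r => mem_primaryComponent_iff.2 ⟨n, fun x hx => ?_⟩,
    fun r hr => Subtype.ext (hgf ⟨r, hr⟩)⟩
  rw [← map_smul]
  exact hg _ (Ideal.mul_mem_right r _ hx)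

theorem injective_of_leftInverse [Module.Injective R M] (s : N →ₗ[R] M) (p : M →ₗ[R] N)
    (h : Function.LeftInverse p s) : Module.Injective R N := by
  refine ⟨fun X Y _ _ _ _ i hi g => ?_⟩
  obtain ⟨g', hg'⟩ := Module.Injective.out i hi (s ∘ₗ g)
  exact ⟨p ∘ₗ g', fun x => (congrArg p (hg' x)).trans (h (g x))⟩

theorem injective_quotient_of_injective [Module.Injective R M] (U : Submodule R M)
    [Module.Injective R U] : Module.Injective R (M ⧸ U) := by
  obtain ⟨r, hr⟩ := Module.Injective.out U.subtype U.subtype_injective LinearMap.id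
  have le_ker : U ≤ LinearMap.ker (LinearMap.id - U.subtype ∘ₗ r) := fun x hx =>
    sub_eq_zero.2 (congrArg Subtype.val (hr ⟨x, hx⟩)).symm
  refine injective_of_leftInverse (U.liftQ _ le_ker) U.mkQ fun y => ?_
  obtain ⟨x, rfl⟩ := U.mkQ_surjective y
  simp

variable (R M) in
theorem exists_injective_embedding :
    ∃ (I : ModuleCat.{u} R) (f : M →ₗ[R] I), Module.Injective R I ∧ Function.Injective f :=
  ⟨Injective.under (ModuleCat.of R M), (Injective.ι (ModuleCat.of R M)).hom,
    (Module.injective_iff_injective_object R _).2 (Injective.injective_under _),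
    (ModuleCat.mono_iff_injective (Injective.ι (ModuleCat.of R M))).1 inferInstance⟩

variable [IsNoetherianRing R]

theorem exists_injective_embedding_of_primaryComponent_eq_top (h : a.primaryComponent M = ⊤) :
    ∃ (I : ModuleCat.{u} R) (f : M →ₗ[R] I), Module.Injective R I ∧ Function.Injective f ∧
      a.primaryComponent I = ⊤ := by
  obtain ⟨I, f, _, hf⟩ := exists_injective_embedding R M
  exact ⟨.of R (a.primaryComponent I),
    f.codRestrict _ fun m => Ideal.primaryComponent_map_mem a f ⟨m, h.ge trivial⟩,
    injective_primaryComponent, fun _ _ hxy => hf (congrArg Subtype.val hxy),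
    primaryComponent_primaryComponent⟩

theorem exists_injective_embedding_of_primaryComponent_eq_bot (h : a.primaryComponent M = ⊥) :
    ∃ (I : ModuleCat.{u} R) (f : M →ₗ[R] I), Module.Injective R I ∧ Function.Injective f ∧
      a.primaryComponent I = ⊥ := by
  obtain ⟨I, f, _, hf⟩ := exists_injective_embedding R M
  have := injective_primaryComponent (a := a) (M := I)
  refine ⟨.of R (I ⧸ a.primaryComponent I), (a.primaryComponent I).mkQ ∘ₗ f,
    injective_quotient_of_injective _, ?_, primaryComponent_quotient_primaryComponent⟩
  refine (injective_iff_map_eq_zero _).2 fun m hm => ?_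
  obtain ⟨k, hk⟩ := mem_primaryComponent_iff.1 ((Submodule.Quotient.mk_eq_zero _).1 hm)
  exact h.le (mem_primaryComponent_iff.2
    ⟨k, fun x hx => hf (by rw [map_smul, hk x hx, map_zero])⟩)

end TorsionFunctor

section ExtNaturality

variable {R} {a b : Ideal R} {X Y A B C : Type u} [AddCommGroup A]
  [AddCommGroup B] [AddCommGroup C] [AddCommGroup X] [AddCommGroup Y] [Module R A] [Module R B]
  [Module R C] [Module R X] [Module R Y]

theorem extMap_extComap (f : X →ₗ[R] Y) (g : A →ₗ[R] B) {n : ℕ}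
    (y : Abelian.Ext (ModuleCat.of R Y) (ModuleCat.of R A) n) :
    extMap X g n (extComap A f n y) = extComap B f n (extMap Y g n y) :=
  Abelian.Ext.comp_assoc_of_third_deg_zero _ _ _ (zero_add n)

theorem IsShortExact.extConnecting_extComap {f : A →ₗ[R] B} {g : B →ₗ[R] C}
    (h : IsShortExact f g) (φ : X →ₗ[R] Y) {n : ℕ}
    (y : Abelian.Ext (ModuleCat.of R Y) (ModuleCat.of R C) n) :
    h.extConnecting X n (extComap C φ n y) = extComap A φ (n + 1) (h.extConnecting Y n y) :=
  Abelian.Ext.comp_assoc _ _ _ (zero_add n) rfl (by lia)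

theorem IsShortExact.surjective_extConnecting {f : A →ₗ[R] B} {g : B →ₗ[R] C}
    (h : IsShortExact f g) [Module.Injective R B] (n : ℕ) :
    Function.Surjective (h.extConnecting X n) := fun _ =>
  h.ker_extMap_succ_le_range X n (Subsingleton.elim (α := Abelian.Ext _ (ModuleCat.of R B) _) _ _)

theorem IsShortExact.extConnecting_extMap {f : A →ₗ[R] B} {g : B →ₗ[R] C}
    (h : IsShortExact f g) {n : ℕ} (y : Abelian.Ext (ModuleCat.of R X) (ModuleCat.of R B) n) :
    h.extConnecting X n (extMap X g n y) = 0 := by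
  refine (Abelian.Ext.comp_assoc_of_second_deg_zero y _ _ rfl).trans ?_
  exact (congrArg (fun z => y.comp z rfl) h.shortExact.comp_extClass).trans
    (Abelian.Ext.comp_zero _ _ _ _ _)

theorem mk₀_ofHom_extZeroEquiv (y : Abelian.Ext (ModuleCat.of R X) (ModuleCat.of R A) 0) :
    Abelian.Ext.mk₀ (ModuleCat.ofHom (extZeroEquiv X A y)) = y :=
  Abelian.Ext.mk₀_linearEquiv₀_apply (R := R) y

theorem extZeroEquiv_eq_iff {y : Abelian.Ext (ModuleCat.of R X) (ModuleCat.of R A) 0}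
    {φ : X →ₗ[R] A} : extZeroEquiv X A y = φ ↔ y = Abelian.Ext.mk₀ (ModuleCat.ofHom φ) := by
  refine ⟨fun h => h ▸ (mk₀_ofHom_extZeroEquiv y).symm, fun h => ?_⟩
  rw [← mk₀_ofHom_extZeroEquiv y] at h
  exact congrArg ModuleCat.Hom.hom ((Abelian.Ext.mk₀_bijective _ _).injective h)

theorem extZeroEquiv_extMap (g : A →ₗ[R] B)
    (y : Abelian.Ext (ModuleCat.of R X) (ModuleCat.of R A) 0) :
    extZeroEquiv X B (extMap X g 0 y) = g ∘ₗ extZeroEquiv X A y := by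
  rw [extZeroEquiv_eq_iff, ModuleCat.ofHom_comp, ← Abelian.Ext.mk₀_comp_mk₀,
    mk₀_ofHom_extZeroEquiv]
  rfl

theorem extZeroEquiv_extComap (f : X →ₗ[R] Y)
    (y : Abelian.Ext (ModuleCat.of R Y) (ModuleCat.of R A) 0) :
    extZeroEquiv X A (extComap A f 0 y) = extZeroEquiv Y A y ∘ₗ f := by
  rw [extZeroEquiv_eq_iff, ModuleCat.ofHom_comp, ← Abelian.Ext.mk₀_comp_mk₀,
    mk₀_ofHom_extZeroEquiv]
  rfl

theorem coe_extZeroEquivTorsionBySet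
    (y : Abelian.Ext (ModuleCat.of R (R ⧸ a)) (ModuleCat.of R A) 0) :
    (extZeroEquivTorsionBySet a A y : A) = extZeroEquiv (R ⧸ a) A y 1 :=
  rfl

theorem coe_extZeroEquivTorsionBySet_extMap (g : A →ₗ[R] B)
    (y : Abelian.Ext (ModuleCat.of R (R ⧸ a)) (ModuleCat.of R A) 0) :
    (extZeroEquivTorsionBySet a B (extMap (R ⧸ a) g 0 y) : B) =
      g (extZeroEquivTorsionBySet a A y) := by
  rw [coe_extZeroEquivTorsionBySet, extZeroEquiv_extMap]
  rfl

theorem coe_extZeroEquivTorsionBySet_extComap_factor (h : b ≤ a)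
    (y : Abelian.Ext (ModuleCat.of R (R ⧸ a)) (ModuleCat.of R A) 0) :
    (extZeroEquivTorsionBySet b A (extComap A (Submodule.factor h) 0 y) : A) =
      extZeroEquivTorsionBySet a A y := by
  rw [coe_extZeroEquivTorsionBySet, extZeroEquiv_extComap]
  rfl

end ExtNaturality

section LocalCohomologyModel

variable {R} (a : Ideal R) (M : Type u) [AddCommGroup M] [Module R M]
  (n : ℕ)

/-- The map `Ext^n_R(R/a^k, M) → Ext^n_R(R/a^l, M)` for `k ≤ l`; the direct limit of this system
is the local cohomology module `H^n_a(M)`. -/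
noncomputable def extPowMap {k l : ℕ} (h : k ≤ l) :
    Abelian.Ext (ModuleCat.of R (R ⧸ a ^ k)) (ModuleCat.of R M) n →ₗ[R]
      Abelian.Ext (ModuleCat.of R (R ⧸ a ^ l)) (ModuleCat.of R M) n :=
  extComap M (Submodule.factor (Ideal.pow_le_pow_right h)) n

theorem extPowMap_rfl (k : ℕ) : extPowMap a M n (le_refl k) = LinearMap.id := by
  rw [extPowMap, ← extComap_id]
  congr 1
  exact Submodule.linearMap_qext _ rfl

theorem extPowMap_comp {k l m : ℕ} (h : k ≤ l) (h' : l ≤ m) :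
    extPowMap a M n h' ∘ₗ extPowMap a M n h = extPowMap a M n (h.trans h') := by
  rw [extPowMap, extPowMap, ← extComap_comp, Submodule.factor_comp]
  rfl

instance directedSystem_extPowMap :
    DirectedSystem (fun k => Abelian.Ext (ModuleCat.of R (R ⧸ a ^ k)) (ModuleCat.of R M) n)
      (fun _ _ h => extPowMap a M n h) where
  map_self _ y := LinearMap.congr_fun (extPowMap_rfl a M n _) y
  map_map _ _ _ h h' y := LinearMap.congr_fun (extPowMap_comp a M n h h') y

/-- A realisation of `H` as the local cohomology module `H^n_a(M)`, that is, as the direct limit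
of the modules `Ext^n_R(R/a^k, M)`. -/
structure LocalCohomologyModel (H : Type u) [AddCommGroup H] [Module R H] where
  /-- The canonical map from `Ext^n_R(R/a^k, M)` to the direct limit. -/
  ofExt (k : ℕ) : Abelian.Ext (ModuleCat.of R (R ⧸ a ^ k)) (ModuleCat.of R M) n →ₗ[R] H
  ofExt_extPowMap {k l : ℕ} (h : k ≤ l)
    (y : Abelian.Ext (ModuleCat.of R (R ⧸ a ^ k)) (ModuleCat.of R M) n) :
    ofExt l (extPowMap a M n h y) = ofExt k y
  exists_ofExt_eq (x : H) : ∃ k y, ofExt k y = x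
  exists_extPowMap_eq_zero (k : ℕ)
    (y : Abelian.Ext (ModuleCat.of R (R ⧸ a ^ k)) (ModuleCat.of R M) n) :
    ofExt k y = 0 → ∃ l, ∃ h : k ≤ l, extPowMap a M n h y = 0

namespace LocalCohomologyModel

variable {a M n} {H H' : Type u} [AddCommGroup H] [Module R H] [AddCommGroup H'] [Module R H']

theorem bijective_lift (c : LocalCohomologyModel a M n H) :
    Function.Bijective (Module.DirectLimit.lift R ℕ _ (fun _ _ h => extPowMap a M n h) c.ofExt
      fun _ _ => c.ofExt_extPowMap) := by
  refine ⟨(injective_iff_map_eq_zero _).2 fun x hx => ?_, fun x => ?_⟩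
  · obtain ⟨k, y, rfl⟩ := Module.DirectLimit.exists_of x
    obtain ⟨l, h, hl⟩ := c.exists_extPowMap_eq_zero k y
      ((Module.DirectLimit.lift_of _ _ _).symm.trans hx)
    rw [← Module.DirectLimit.of_f (hij := h), hl, map_zero]
  · obtain ⟨k, y, rfl⟩ := c.exists_ofExt_eq x
    exact ⟨_, Module.DirectLimit.lift_of _ _ _⟩

/-- Two modules realising the same local cohomology module are isomorphic. -/
noncomputable def equiv (c : LocalCohomologyModel a M n H) (c' : LocalCohomologyModel a M n H') :
    H ≃ₗ[R] H' :=
  (LinearEquiv.ofBijective _ c.bijective_lift).symm.trans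
    (LinearEquiv.ofBijective _ c'.bijective_lift)

theorem primaryComponent_eq_top (c : LocalCohomologyModel a M n H) :
    a.primaryComponent H = ⊤ := by
  refine eq_top_iff.2 fun d _ => ?_
  obtain ⟨k, y, rfl⟩ := c.exists_ofExt_eq d
  refine mem_primaryComponent_iff.2 ⟨k, fun x hx => ?_⟩
  rw [← map_smul, smul_ext_eq_zero (smul_quotient_eq_zero hx), map_zero]

end LocalCohomologyModel

end LocalCohomologyModel

section LocalCohomologyFunctor

open Limits Opposite

variable {R} {a : Ideal R} {M : Type u} [AddCommGroup M] [Module R M] {n : ℕ}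

theorem exists_map_homOfLE_eq_zero {G : (ℕᵒᵖ)ᵒᵖ ⥤ ModuleCat.{u} R} {c : Cocone G}
    (hc : IsColimit c) {k : ℕ} (x : G.obj (op (op k))) (hx : (c.ι.app (op (op k))).hom x = 0) :
    ∃ l, ∃ h : k ≤ l, (G.map (homOfLE h).op.op).hom x = 0 := by
  have : PreservesFilteredColimitsOfSize.{0, 0} (forget (ModuleCat.{u} R)) :=
    preservesSmallestFilteredColimits_of_preservesFilteredColimits _
  obtain ⟨l, f, g, hfg⟩ := (Concrete.isColimit_rep_eq_iff_exists _ hc x (0 : G.obj (op (op k)))).1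
    (hx.trans (map_zero (c.ι.app (op (op k))).hom).symm)
  exact ⟨l.unop.unop, leOfHom f.unop.unop, hfg.trans (map_zero (G.map g).hom)⟩

theorem exists_cocone_app_eq {G : (ℕᵒᵖ)ᵒᵖ ⥤ ModuleCat.{u} R} {c : Cocone G} (hc : IsColimit c)
    (y : c.pt) : ∃ k, ∃ x, (c.ι.app (op (op k))).hom x = y := by
  have : PreservesFilteredColimitsOfSize.{0, 0} (forget (ModuleCat.{u} R)) :=
    preservesSmallestFilteredColimits_of_preservesFilteredColimits _
  obtain ⟨k, x, hx⟩ := Concrete.isColimit_exists_rep _ hc y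
  exact ⟨k.unop.unop, x, hx⟩

namespace LocalCohomologyModel

/-- A colimit of a diagram isomorphic to `Ext^n_R(R/a^k, M)` is a model of `H^n_a(M)`. -/
noncomputable def ofIsColimit {G : (ℕᵒᵖ)ᵒᵖ ⥤ ModuleCat.{u} R} {c : Cocone G} (hc : IsColimit c)
    (e : ∀ k, G.obj (op (op k)) ≃ₗ[R]
      Abelian.Ext (ModuleCat.of R (R ⧸ a ^ k)) (ModuleCat.of R M) n)
    (he : ∀ {k l : ℕ} (h : k ≤ l) (x : G.obj (op (op k))),
      e l ((G.map (homOfLE h).op.op).hom x) = extPowMap a M n h (e k x)) :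
    LocalCohomologyModel a M n c.pt where
  ofExt k := (c.ι.app (op (op k))).hom ∘ₗ (e k).symm.toLinearMap
  ofExt_extPowMap {k l} h y := by
    obtain ⟨x, rfl⟩ := (e k).surjective y
    simp only [← he h x, LinearMap.comp_apply, LinearEquiv.coe_coe, LinearEquiv.symm_apply_apply]
    exact congrArg (fun φ => φ.hom x) (c.w (homOfLE h).op.op)
  exists_ofExt_eq y := by
    obtain ⟨k, x, hx⟩ := exists_cocone_app_eq hc y
    exact ⟨k, e k x, by simpa using hx⟩
  exists_extPowMap_eq_zero k y hy := by
    obtain ⟨x, rfl⟩ := (e k).surjective y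
    obtain ⟨l, h, hl⟩ := exists_map_homOfLE_eq_zero hc x (by simpa using hy)
    exact ⟨l, h, by rw [← he h x, hl, map_zero]⟩

variable (a M n) in
/-- The local cohomology functor of Mathlib computes `H^n_a(M)`. -/
noncomputable def localCohomology :
    LocalCohomologyModel a M n ((_root_.localCohomology a n).obj (ModuleCat.of R M)) :=
  have := localCohomology.hasColimitDiagram.{u, 0} (localCohomology.idealPowersDiagram a) n
  have P (k : ℕ) : ProjectiveResolution (ModuleCat.of R (R ⧸ a ^ k)) :=
    (HasProjectiveResolution.out (Z := ModuleCat.of R (R ⧸ a ^ k))).some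
  ofIsColimit
    (isColimitOfPreserves ((evaluation (ModuleCat.{u} R) (ModuleCat.{u} R)).obj (ModuleCat.of R M))
      (colimit.isColimit (localCohomology.diagram (localCohomology.idealPowersDiagram a) n)))
    (fun k => extModuleEquiv (ModuleCat.of R M) (P k) n)
    fun _ x => extModuleEquiv_map (P _) (P _) _ n x

end LocalCohomologyModel

end LocalCohomologyFunctor

section TorsionPart

variable {R} {a : Ideal R} {A B C M : Type u} [AddCommGroup A]
  [AddCommGroup B] [AddCommGroup C] [AddCommGroup M] [Module R A] [Module R B] [Module R C]
  [Module R M]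

theorem extMap_extPowMap (g : A →ₗ[R] B) {n k l : ℕ} (hkl : k ≤ l)
    (y : Abelian.Ext (ModuleCat.of R (R ⧸ a ^ k)) (ModuleCat.of R A) n) :
    extMap (R ⧸ a ^ l) g n (extPowMap a A n hkl y) =
      extPowMap a B n hkl (extMap (R ⧸ a ^ k) g n y) :=
  extMap_extComap _ g y

theorem IsShortExact.extConnecting_extPowMap {f : A →ₗ[R] B} {g : B →ₗ[R] C}
    (h : IsShortExact f g) {n k l : ℕ} (hkl : k ≤ l)
    (y : Abelian.Ext (ModuleCat.of R (R ⧸ a ^ k)) (ModuleCat.of R C) n) :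
    h.extConnecting (R ⧸ a ^ l) n (extPowMap a C n hkl y) =
      extPowMap a A (n + 1) hkl (h.extConnecting (R ⧸ a ^ k) n y) :=
  h.extConnecting_extComap _ y

theorem coe_extZeroEquivTorsionBySet_extPowMap {k l : ℕ} (h : k ≤ l)
    (y : Abelian.Ext (ModuleCat.of R (R ⧸ a ^ k)) (ModuleCat.of R M) 0) :
    (extZeroEquivTorsionBySet (a ^ l) M (extPowMap a M 0 h y) : M) =
      extZeroEquivTorsionBySet (a ^ k) M y :=
  coe_extZeroEquivTorsionBySet_extComap_factor (Ideal.pow_le_pow_right h) y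

theorem torsionBySet_pow_le_primaryComponent (k : ℕ) :
    Submodule.torsionBySet R M (a ^ k : Ideal R) ≤ a.primaryComponent M :=
  le_iSup (fun i => Submodule.torsionBySet R M (a ^ i : Ideal R)) k

variable (a M) in
/-- `H^0_a(M)` is the `a`-torsion submodule of `M`. -/
noncomputable def LocalCohomologyModel.primaryComponent :
    LocalCohomologyModel a M 0 (a.primaryComponent M) where
  ofExt k := Submodule.inclusion (torsionBySet_pow_le_primaryComponent k) ∘ₗ
    (extZeroEquivTorsionBySet (a ^ k) M).toLinearMap
  ofExt_extPowMap h y := Subtype.ext (coe_extZeroEquivTorsionBySet_extPowMap h y)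
  exists_ofExt_eq m := by
    obtain ⟨k, hk⟩ := (Ideal.primaryComponent_mem M a m.1).1 m.2
    exact ⟨k, (extZeroEquivTorsionBySet (a ^ k) M).symm ⟨m, hk⟩, Subtype.ext (by simp)⟩
  exists_extPowMap_eq_zero k y hy := by
    have hy' : extZeroEquivTorsionBySet (a ^ k) M y = 0 :=
      Subtype.ext (congrArg Subtype.val hy :)
    exact ⟨k, le_rfl, by rw [(LinearEquiv.map_eq_zero_iff _).1 hy', map_zero]⟩

theorem exists_extPowMap_mem_range_extMap {g : B →ₗ[R] C} (hg : Function.Surjective g)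
    (hB : a.primaryComponent B = ⊤) {k : ℕ}
    (z : Abelian.Ext (ModuleCat.of R (R ⧸ a ^ k)) (ModuleCat.of R C) 0) :
    ∃ l, ∃ h : k ≤ l, extPowMap a C 0 h z ∈ LinearMap.range (extMap (R ⧸ a ^ l) g 0) := by
  obtain ⟨q, hq⟩ := hg (extZeroEquivTorsionBySet (a ^ k) C z)
  obtain ⟨l, hl⟩ := mem_primaryComponent_iff.1 (hB.ge (Submodule.mem_top (x := q)))
  have hq' : q ∈ Submodule.torsionBySet R B (a ^ (k + l) : Ideal R) :=
    (Submodule.mem_torsionBySet_iff _ _).2 fun x =>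
      hl x (Ideal.pow_le_pow_right (Nat.le_add_left l k) x.2)
  refine ⟨k + l, Nat.le_add_right k l, (extZeroEquivTorsionBySet _ B).symm ⟨q, hq'⟩,
    (extZeroEquivTorsionBySet _ C).injective (Subtype.ext ?_)⟩
  rw [coe_extZeroEquivTorsionBySet_extMap, LinearEquiv.apply_symm_apply,
    coe_extZeroEquivTorsionBySet_extPowMap, hq]

theorem exists_extPowMap_succ_eq_zero [IsNoetherianRing R] (hM : a.primaryComponent M = ⊤)
    {n k : ℕ} (y : Abelian.Ext (ModuleCat.of R (R ⧸ a ^ k)) (ModuleCat.of R M) (n + 1)) :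
    ∃ l, ∃ h : k ≤ l, extPowMap a M (n + 1) h y = 0 := by
  induction n generalizing M k with
  | zero =>
    obtain ⟨I, f, hI, hf, hT⟩ := exists_injective_embedding_of_primaryComponent_eq_top hM
    have hses := isShortExact_mkQ_range hf
    obtain ⟨z, rfl⟩ := hses.surjective_extConnecting 0 y
    obtain ⟨l, h, w, hw⟩ := exists_extPowMap_mem_range_extMap hses.surjective hT z
    exact ⟨l, h, by rw [← hses.extConnecting_extPowMap, ← hw,
      hses.extConnecting_extMap]⟩
  | succ n ih =>
    obtain ⟨I, f, hI, hf, hT⟩ := exists_injective_embedding_of_primaryComponent_eq_top hM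
    have hses := isShortExact_mkQ_range hf
    obtain ⟨z, rfl⟩ := hses.surjective_extConnecting (n + 1) y
    obtain ⟨l, h, hl⟩ := ih (primaryComponent_eq_top_of_surjective hses.surjective hT) z
    exact ⟨l, h, by rw [← hses.extConnecting_extPowMap, hl, map_zero]⟩

end TorsionPart

section DimensionShift

variable {R} {a : Ideal R} {A B C H M : Type u} [AddCommGroup A]
  [AddCommGroup B] [AddCommGroup C] [AddCommGroup H] [AddCommGroup M] [Module R A] [Module R B]
  [Module R C] [Module R H] [Module R M] {n : ℕ}

theorem subsingleton_ext_zero_of_primaryComponent_eq_bot (hB : a.primaryComponent B = ⊥)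
    (k : ℕ) : Subsingleton (Abelian.Ext (ModuleCat.of R (R ⧸ a ^ k)) (ModuleCat.of R B) 0) := by
  have : Subsingleton (Submodule.torsionBySet R B (a ^ k : Ideal R)) :=
    (Submodule.subsingleton_iff_eq_bot).2
      (le_bot_iff.1 ((torsionBySet_pow_le_primaryComponent k).trans hB.le))
  exact (extZeroEquivTorsionBySet (a ^ k) B).toEquiv.subsingleton

theorem IsShortExact.injective_extConnecting {f : A →ₗ[R] B} {g : B →ₗ[R] C}
    (h : IsShortExact f g) [Module.Injective R B] (hB : a.primaryComponent B = ⊥) (k n : ℕ) :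
    Function.Injective (h.extConnecting (R ⧸ a ^ k) n) := by
  have : Subsingleton (Abelian.Ext (ModuleCat.of R (R ⧸ a ^ k)) (ModuleCat.of R B) n) := by
    cases n with
    | zero => exact subsingleton_ext_zero_of_primaryComponent_eq_bot hB k
    | succ n => infer_instance
  refine (injective_iff_map_eq_zero _).2 fun y hy => ?_
  obtain ⟨z, rfl⟩ := h.ker_extConnecting_le_range _ _ hy
  rw [Subsingleton.elim z 0, map_zero]

namespace LocalCohomologyModel

/-- Since torsion modules have no higher local cohomology, a model of `H^{n+1}_a(M/Γ_a(M))` is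
also one of `H^{n+1}_a(M)`. -/
noncomputable def ofQuotient [IsNoetherianRing R]
    (c : LocalCohomologyModel a (M ⧸ a.primaryComponent M) (n + 1) H) :
    LocalCohomologyModel a M (n + 1) H where
  ofExt k := c.ofExt k ∘ₗ extMap (R ⧸ a ^ k) (a.primaryComponent M).mkQ (n + 1)
  ofExt_extPowMap h y := by
    rw [LinearMap.comp_apply, extMap_extPowMap, c.ofExt_extPowMap,
      LinearMap.comp_apply]
  exists_ofExt_eq x := by
    have hses := isShortExact_subtype_mkQ (a.primaryComponent M)
    obtain ⟨k, y, rfl⟩ := c.exists_ofExt_eq x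
    obtain ⟨l, h, hl⟩ := exists_extPowMap_succ_eq_zero primaryComponent_primaryComponent
      (hses.extConnecting (R ⧸ a ^ k) (n + 1) y)
    rw [← hses.extConnecting_extPowMap] at hl
    obtain ⟨z, hz⟩ := hses.ker_extConnecting_le_range _ _ hl
    exact ⟨l, z, by rw [LinearMap.comp_apply, hz, c.ofExt_extPowMap]⟩
  exists_extPowMap_eq_zero k y hy := by
    have hses := isShortExact_subtype_mkQ (a.primaryComponent M)
    obtain ⟨l, h, hl⟩ := c.exists_extPowMap_eq_zero k _ hy
    rw [← extMap_extPowMap] at hl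
    obtain ⟨z, hz⟩ := hses.ker_extMap_le_range _ _ hl
    obtain ⟨m, h', hm⟩ := exists_extPowMap_succ_eq_zero primaryComponent_primaryComponent z
    refine ⟨m, h.trans h', ?_⟩
    rw [← extPowMap_comp a M (n + 1) h h', LinearMap.comp_apply, ← hz, ← extMap_extPowMap, hm,
      map_zero]

/-- Dimension shift: if `0 → A → B → C → 0` is exact with `B` injective and `a`-torsion-free, then
a model of `H^{n+1}_a(A)` is also one of `H^n_a(C)`. -/
noncomputable def ofShift {f : A →ₗ[R] B} {g : B →ₗ[R] C} (h : IsShortExact f g)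
    [Module.Injective R B] (hB : a.primaryComponent B = ⊥)
    (c : LocalCohomologyModel a A (n + 1) H) : LocalCohomologyModel a C n H where
  ofExt k := c.ofExt k ∘ₗ h.extConnecting (R ⧸ a ^ k) n
  ofExt_extPowMap hkl y := by
    rw [LinearMap.comp_apply, h.extConnecting_extPowMap,
      c.ofExt_extPowMap, LinearMap.comp_apply]
  exists_ofExt_eq x := by
    obtain ⟨k, y, rfl⟩ := c.exists_ofExt_eq x
    obtain ⟨z, rfl⟩ := h.surjective_extConnecting n y
    exact ⟨k, z, rfl⟩
  exists_extPowMap_eq_zero k y hy := by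
    obtain ⟨l, hkl, hl⟩ := c.exists_extPowMap_eq_zero k _ hy
    rw [← h.extConnecting_extPowMap] at hl
    exact ⟨l, hkl, h.injective_extConnecting hB l n (hl.trans (map_zero _).symm)⟩

end LocalCohomologyModel

end DimensionShift

section LocalCohomologyCofiniteness

variable {R} {a : Ideal R} {I M : Type u} [AddCommGroup I] [AddCommGroup M]
  [Module R I] [Module R M]

theorem extFinite_zero_of_primaryComponent_eq_bot (hM : a.primaryComponent M = ⊥) :
    ExtFinite R (R ⧸ a) M 0 := by
  have := subsingleton_ext_zero_of_primaryComponent_eq_bot hM 1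
  rw [pow_one] at this
  exact inferInstanceAs (Module.Finite R (Abelian.Ext _ _ _))

variable [IsNoetherianRing R]

theorem IsExtCofinite.quotient_range [Module.Injective R I] {f : M →ₗ[R] I}
    (hf : Function.Injective f) (hI : a.primaryComponent I = ⊥) (hM : IsExtCofinite a M) :
    IsExtCofinite a (I ⧸ LinearMap.range f) := by
  rintro (_ | n)
  · exact (extFinite_zero_of_primaryComponent_eq_bot hI).right (isShortExact_mkQ_range hf) (hM _)
  · exact (extFinite_succ_of_injective n).right (isShortExact_mkQ_range hf) (hM _)

theorem IsExtCofinite.exists_localCohomology_shift (hM : IsExtCofinite a M)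
    (hΓ : IsExtCofinite a (a.primaryComponent M)) :
    ∃ Q : ModuleCat.{u} R, IsExtCofinite a Q ∧ ∀ n, Nonempty
      ((localCohomology a (n + 1)).obj (ModuleCat.of R M) ≃ₗ[R]
        (localCohomology a n).obj Q) := by
  have hquot : IsExtCofinite a (M ⧸ a.primaryComponent M) :=
    hΓ.right (isShortExact_subtype_mkQ _) hM
  obtain ⟨I, f, hI, hf, hbot⟩ :=
    exists_injective_embedding_of_primaryComponent_eq_bot
      (primaryComponent_quotient_primaryComponent (a := a) (M := M))
  refine ⟨ModuleCat.of R (I ⧸ LinearMap.range f), hquot.quotient_range hf hbot, fun n => ⟨?_⟩⟩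
  have c := LocalCohomologyModel.localCohomology a (M ⧸ a.primaryComponent M) (n + 1)
  exact ((LocalCohomologyModel.localCohomology a M (n + 1)).equiv c.ofQuotient).trans
    ((c.ofShift (isShortExact_mkQ_range hf) hbot).equiv
      (LocalCohomologyModel.localCohomology a (I ⧸ LinearMap.range f) n))

theorem IsExtCofinite.extFinite_primaryComponent (hM : IsExtCofinite a M) :
    ExtFinite R (R ⧸ a) (a.primaryComponent M) 0 ∧
      ExtFinite R (R ⧸ a) (a.primaryComponent M) 1 :=
  ⟨.left_zero (Submodule.subtype_injective _) (hM 0),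
    .left_succ (isShortExact_subtype_mkQ _)
      (extFinite_zero_of_primaryComponent_eq_bot primaryComponent_quotient_primaryComponent) (hM 1)⟩

theorem IsExtCofinite.extFinite_localCohomology {n : ℕ} (hM : IsExtCofinite a M)
    (hlt : ∀ j < n, IsExtCofinite a ((localCohomology a j).obj (ModuleCat.of R M))) :
    ExtFinite R (R ⧸ a) ((localCohomology a n).obj (ModuleCat.of R M)) 0 ∧
      ExtFinite R (R ⧸ a) ((localCohomology a n).obj (ModuleCat.of R M)) 1 := by
  induction n generalizing M with
  | zero =>
    have e := (LocalCohomologyModel.primaryComponent a M).equiv (.localCohomology a M 0)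
    exact hM.extFinite_primaryComponent.imp (·.congr_right e) (·.congr_right e)
  | succ n ih =>
    have e := (LocalCohomologyModel.localCohomology a M 0).equiv (.primaryComponent a M)
    obtain ⟨Q, hQ, hshift⟩ := hM.exists_localCohomology_shift ((hlt 0 n.succ_pos).congr e)
    have e' (j : ℕ) := (hshift j).some
    exact (ih hQ fun j hj => (hlt (j + 1) (by lia)).congr (e' j)).imp
      (·.congr_right (e' n).symm) (·.congr_right (e' n).symm)

theorem IsExtCofinite.localCohomology_of_isWeaklyLaskerian {t : ℕ} (hM : IsExtCofinite a M)
    (h : ∀ i ≤ t, IsWeaklyLaskerian R ((localCohomology a i).obj (ModuleCat.of R M))) :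
    ∀ i ≤ t, IsExtCofinite a ((localCohomology a i).obj (ModuleCat.of R M)) := by
  intro i
  induction i using Nat.strong_induction_on with
  | _ i ih =>
    intro hi
    obtain ⟨h₀, h₁⟩ := hM.extFinite_localCohomology fun j hj => ih j hj (by lia)
    exact .of_isWeaklyLaskerian (h i hi)
      (LocalCohomologyModel.localCohomology a M i).primaryComponent_eq_top h₀ h₁

end LocalCohomologyCofiniteness

section SupportedModules

variable {R} {a : Ideal R} {N : Type u}
  [AddCommGroup N] [Module R N] {n : ℕ}

theorem extFinite_of_subsingleton {X : Type u} [AddCommGroup X] [Module R X] [Subsingleton X] :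
    ExtFinite R X N n := by
  have : Subsingleton (Abelian.Ext (ModuleCat.of R X) (ModuleCat.of R N) n) :=
    subsingleton_of_forall_eq 0 fun y =>
      (one_smul R y).symm.trans (smul_ext_eq_zero (fun _ => Subsingleton.elim _ _) y)
  exact inferInstanceAs (Module.Finite R (Abelian.Ext _ _ _))

variable [IsNoetherianRing R]

theorem extFinite_of_forall_le_isPrime
    (hN : ∀ p : Ideal R, p.IsPrime → a ≤ p → ExtFinite R (R ⧸ p) N n) {L : Type u}
    [AddCommGroup L] [Module R L] [Module.Finite R L]
    (hL : Module.support R L ⊆ PrimeSpectrum.zeroLocus (a : Set R)) : ExtFinite R L N n := by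
  refine IsNoetherianRing.induction_on_isQuotientEquivQuotientPrime R
    (motive := fun L _ _ _ => Module.support R L ⊆ PrimeSpectrum.zeroLocus (a : Set R) →
      ExtFinite R L N n) ‹_› (fun L _ _ _ _ _ => extFinite_of_subsingleton)
    (fun L _ _ _ p e hL => ?_) (fun A _ _ _ B _ _ _ C _ _ _ f g hf hg hfg hA hC hB => ?_) hL
  · have hp : a ≤ p.asIdeal := by
      rw [e.support_eq, Module.support_eq_zeroLocus, Ideal.annihilator_quotient] at hL
      exact hL ((PrimeSpectrum.mem_zeroLocus p _).2 subset_rfl)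
    exact (hN p.asIdeal p.isPrime hp).congr_left e.symm
  · exact .source_middle ⟨hf, hfg, hg⟩
      (hA ((Module.support_subset_of_injective f hf).trans hB))
      (hC ((Module.support_subset_of_surjective g hg).trans hB))

theorem ExtFinite.of_support_subset (hN : ∀ j ≤ n, ExtFinite R (R ⧸ a) N j) {L : Type u}
    [AddCommGroup L] [Module R L] [Module.Finite R L]
    (hL : Module.support R L ⊆ PrimeSpectrum.zeroLocus (a : Set R)) : ExtFinite R L N n := by
  induction n generalizing L with
  | zero =>
    refine extFinite_of_forall_le_isPrime (fun p _ hp => ?_) hL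
    exact .source_right_zero (Submodule.factor_surjective hp) (hN 0 le_rfl)
  | succ n ih =>
    refine extFinite_of_forall_le_isPrime (fun p _ hp => ?_) hL
    have hsupp : Module.support R (R ⧸ a) ⊆ PrimeSpectrum.zeroLocus (a : Set R) := by
      rw [Module.support_eq_zeroLocus, Ideal.annihilator_quotient]
    have h := isShortExact_subtype_ker (Submodule.factor_surjective hp)
    have hker : ExtFinite R (LinearMap.ker (Submodule.factor hp)) N n :=
      ih (fun j hj => hN j (by lia))
        ((Module.support_subset_of_injective _ (Submodule.subtype_injective _)).trans hsupp)
    exact hker.source_right_succ h (hN (n + 1) le_rfl)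

theorem IsExtCofinite.of_minimax (h : ∃ L : Submodule R N, L.FG ∧ IsArtinian R (N ⧸ L))
    (h₀ : ExtFinite R (R ⧸ a) N 0) : IsExtCofinite a N := by
  obtain ⟨L, hL, hA⟩ := h
  have : Module.Finite R L := Module.Finite.iff_fg.2 hL
  have hL' : IsExtCofinite a L := .of_finite
  exact hL'.middle (isShortExact_subtype_mkQ L)
    (.of_isArtinian (h₀.right (isShortExact_subtype_mkQ L) (hL' 1)))

theorem ExtFinite.quotient_of_minimax (hN : ∀ j ≤ n, ExtFinite R (R ⧸ a) N j) {K : Submodule R N}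
    (hK : ∃ L₀ : Submodule R K, L₀.FG ∧ IsArtinian R (K ⧸ L₀)) {L : Type u} [AddCommGroup L]
    [Module R L] [Module.Finite R L]
    (hL : Module.support R L ⊆ PrimeSpectrum.zeroLocus (a : Set R)) : ExtFinite R L (N ⧸ K) n := by
  have hK' : IsExtCofinite a K :=
    .of_minimax hK ((hN 0 n.zero_le).left_zero (Submodule.subtype_injective K))
  exact .of_support_subset
    (fun j hj => (hN j hj).right (isShortExact_subtype_mkQ K) (hK' (j + 1))) hL

end SupportedModules

theorem stmt11_general [IsNoetherianRing R] (𝔞 : Ideal R) (M : ModuleCat.{u} R)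
    (hM : IsExtCofinite 𝔞 M) (t : ℕ)
    (h : ∀ i ≤ t, IsWeaklyLaskerian R ((localCohomology 𝔞 i).obj M))
    (K : Submodule R ((localCohomology 𝔞 (t + 1)).obj M))
    (hK : ∃ L₀ : Submodule R K, L₀.FG ∧ IsArtinian R (K ⧸ L₀))
    (L : ModuleCat.{u} R) [Module.Finite R L]
    (hL : Module.support R L ⊆ PrimeSpectrum.zeroLocus (𝔞 : Set R)) :
    Module.Finite R (L →ₗ[R] (((localCohomology 𝔞 (t + 1)).obj M : Type u) ⧸ K)) ∧
      Module.Finite R (extModule R 1 L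
        (ModuleCat.of R (((localCohomology 𝔞 (t + 1)).obj M : Type u) ⧸ K))) := by
  obtain ⟨h₀, h₁⟩ := hM.extFinite_localCohomology (n := t + 1) fun j hj =>
    hM.localCohomology_of_isWeaklyLaskerian h j (by lia)
  have hH : ∀ j ≤ 1, ExtFinite R (R ⧸ 𝔞) ((localCohomology 𝔞 (t + 1)).obj M) j
    | 0, _ => h₀
    | 1, _ => h₁
  have hExt : Module.Finite R (Abelian.Ext L
      (ModuleCat.of R (((localCohomology 𝔞 (t + 1)).obj M : Type u) ⧸ K)) 1) :=
    ExtFinite.quotient_of_minimax hH hK hL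
  have P : ProjectiveResolution L := HasProjectiveResolution.out.some
  have hHom : ExtFinite R L (((localCohomology 𝔞 (t + 1)).obj M : Type u) ⧸ K) 0 :=
    .quotient_of_minimax (fun j hj => hH j (hj.trans zero_le_one)) hK hL
  exact ⟨extFinite_zero_iff.1 hHom, .equiv (extModuleEquiv _ P 1).symm⟩

theorem stmt11 [IsNoetherianRing R] (𝔞 : Ideal R) (M : ModuleCat.{u} R) [Module.Finite R M]
    (t : ℕ) (h : ∀ i ≤ t, IsWeaklyLaskerian R ((localCohomology 𝔞 i).obj M))
    (K : Submodule R ((localCohomology 𝔞 (t + 1)).obj M))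
    -- `K` is minimax: it has a finitely generated submodule with Artinian quotient
    (hK : ∃ L₀ : Submodule R K, L₀.FG ∧ IsArtinian R (K ⧸ L₀))
    (L : ModuleCat.{u} R) [Module.Finite R L]
    (hL : Module.support R L ⊆ PrimeSpectrum.zeroLocus (𝔞 : Set R)) :
    Module.Finite R (L →ₗ[R] (((localCohomology 𝔞 (t + 1)).obj M : Type u) ⧸ K)) ∧
      Module.Finite R
        (extModule R 1 L (ModuleCat.of R ((((localCohomology 𝔞 (t + 1)).obj M : Type u)) ⧸ K))) :=
  stmt11_general R 𝔞 M .of_finite t h K hK L hL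
end

section
/- Let R be a Noetherian ring, 𝔞 an ideal of R, and M an R-module with dim Supp(M) ≤ 1 and Supp(M) ⊆ V(𝔞). Then M is 𝔞-weakly cofinite if and only if the R-modules Hom_R(R/𝔞, M) and Ext^1_R(R/𝔞, M) are weakly Laskerian. -/
open CategoryTheory

universe u

variable (R : Type u) [CommRing R]

/-
The proof is by Noetherian induction on the annihilator of `M`. If `𝔞` kills `M`, then `M` is
`Hom(R/𝔞, M)`. Otherwise let `p` range over the points of `Supp M` with infinite closure: as
`dim Supp M ≤ 1`, they are minimal in `Supp M`, hence associated to `Hom(R/𝔞, M)` and finite in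
number. A weakly Laskerian module with such a `p` minimal in its support is finitely generated
locally at `p`. So `Hom(R/𝔞, M)_p` has finite length, `M_p` is Artinian by Melkersson's criterion,
and, by secondary decomposition, `M_p/xM_p` is finitely generated for every `x` outside finitely
many primes that do not contain `𝔞`. Prime avoidance gives an `x ∈ 𝔞` that works for all `p` and
does not kill `M`.

The induction hypothesis applies to the kernel of `x` on `M`, so all its `Ext` modules are weakly
Laskerian, and hence so is `Hom(R/𝔞, M/xM)`. As `M/xM` is finitely generated at all the points `p`,
modulo a finitely generated submodule it has support with finitely many minimal points, each of
finite closure; so `M/xM` is weakly Laskerian. Since `x` acts as zero on `Ext(R/𝔞, M)`, weak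
Laskerianness passes from the `Ext` modules of the kernel and the cokernel of `x` to those of `M`.
-/

section ExtComparison

universe v w

variable {R} {ι : Type*} {c : ComplexShape ι} (K : HomologicalComplex (ModuleCat.{v} R) c) (i j : ι)

theorem exists_iCycles_eq_of_d_eq_zero (hij : c.next i = j) {f : K.X i} (hf : K.d i j f = 0) :
    ∃ z : K.cycles i, K.iCycles i z = f := by
  have hexact : (ShortComplex.mk (K.iCycles i) (K.d i j) (K.iCycles_d i j)).Exact :=
    ShortComplex.exact_of_f_is_kernel _ (K.cyclesIsKernel i j hij)
  exact (ShortComplex.moduleCat_exact_iff _).1 hexact f hf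

theorem homologyπ_eq_zero_iff_exists_d_eq_iCycles (hij : c.prev j = i) (z : K.cycles j) :
    K.homologyπ j z = 0 ↔ ∃ w : K.X i, K.d i j w = K.iCycles j z := by
  have hexact : (ShortComplex.mk (K.toCycles i j) (K.homologyπ j)
      (K.toCycles_comp_homologyπ i j)).Exact :=
    ShortComplex.exact_of_g_is_cokernel _ (K.homologyIsCokernel i j hij)
  have hinj : Function.Injective (K.iCycles j) := (ModuleCat.mono_iff_injective _).1 inferInstance
  have hd (w : K.X i) : K.toCycles i j w = z ↔ K.d i j w = K.iCycles j z := by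
    rw [← hinj.eq_iff, ← ModuleCat.comp_apply, K.toCycles_i]
  simp only [← hd]
  exact ⟨(ShortComplex.moduleCat_exact_iff _).1 hexact z,
    fun ⟨w, hw⟩ ↦
      hw ▸ ShortComplex.moduleCat_zero_apply (.mk _ _ (K.toCycles_comp_homologyπ i j)) w⟩

variable {C : Type*} [Category.{v} C] [Abelian C] [Linear R C]

theorem preservesFiniteLimits_linearYoneda_obj (Y : C) :
    Limits.PreservesFiniteLimits ((linearYoneda R C).obj Y) := by
  have : Limits.PreservesLimitsOfSize.{0, 0} ((linearYoneda R C).obj Y ⋙ forget (ModuleCat R)) :=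
    inferInstanceAs (Limits.PreservesLimitsOfSize.{0, 0} (yoneda.obj Y))
  have := Limits.preservesLimits_of_reflects_of_preserves.{0, 0}
    ((linearYoneda R C).obj Y) (forget (ModuleCat R))
  exact Limits.PreservesLimitsOfSize.preservesFiniteLimits _

/-- `Ext⁰(X, Y) ≃ Hom(X, Y)`, with `Ext` the left derived functors of `Hom(-, Y)`. -/
noncomputable def extZeroLinearEquiv [EnoughProjectives C] (X Y : C) :
    ((Ext R C 0).obj (Opposite.op X)).obj Y ≃ₗ[R] (X ⟶ Y) := by
  have := preservesFiniteLimits_linearYoneda_obj (R := R) Y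
  have := Limits.preservesFiniteColimits_rightOp ((linearYoneda R C).obj Y)
  let e := (Functor.leftDerivedZeroIsoSelf ((linearYoneda R C).obj Y).rightOp).app X
  exact (show _ ≅ ModuleCat.of R (X ⟶ Y) from e.unop.symm).toLinearEquiv

variable {X : C} (P : ProjectiveResolution X)

variable (R) in
/-- The inclusion of the `n`-cocycles of `Hom(P, Y)` into `Hom(Pₙ, Y)`; unlike `iCycles`, its
codomain is syntactically a type of morphisms. -/
noncomputable def cocycleHom (Y : C) (n : ℕ) :
    (P.complex.linearYonedaObj R Y).cycles n →ₗ[R] (P.complex.X n ⟶ Y) :=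
  ((P.complex.linearYonedaObj R Y).iCycles n).hom

variable {Y : C}

theorem d_comp_cocycleHom (n : ℕ) (z : (P.complex.linearYonedaObj R Y).cycles n) :
    P.complex.d (n + 1) n ≫ cocycleHom R P Y n z = 0 :=
  congrArg (fun f ↦ f.hom z) ((P.complex.linearYonedaObj R Y).iCycles_d n (n + 1))

variable [HasExt.{w} C]

variable (R Y) in
/-- The class in `Abelian.Ext X Y n` of an `n`-cocycle of `Hom(P, Y)`, where `P` is a projective
resolution of `X`. -/
noncomputable def extOfCocycle (n : ℕ) :
    (P.complex.linearYonedaObj R Y).cycles n →ₗ[R] Abelian.Ext.{w} X Y n where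
  toFun z := P.extMk (cocycleHom R P Y n z) (n + 1) rfl (d_comp_cocycleHom P n z)
  map_add' z z' := by
    rw [P.add_extMk]
    congr 1
    exact map_add _ z z'
  map_smul' r z := by
    rw [RingHom.id_apply, Abelian.Ext.smul_eq_comp_mk₀, P.extMk_comp_mk₀]
    congr 1
    rw [map_smul, Linear.comp_smul, Category.comp_id]

theorem extOfCocycle_surjective (n : ℕ) : Function.Surjective (extOfCocycle R P Y n) := by
  intro α
  obtain ⟨f, hf, rfl⟩ := P.extMk_surjective α (n + 1) rfl
  obtain ⟨z, rfl⟩ := exists_iCycles_eq_of_d_eq_zero (P.complex.linearYonedaObj R Y) n (n + 1)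
    (CochainComplex.next _ n) hf
  exact ⟨z, rfl⟩

theorem ker_extOfCocycle_succ (n : ℕ) :
    LinearMap.ker (extOfCocycle R P Y (n + 1)) =
      LinearMap.ker ((P.complex.linearYonedaObj R Y).homologyπ (n + 1)).hom := by
  ext z
  exact (P.extMk_eq_zero_iff _ _ rfl (d_comp_cocycleHom P (n + 1) z) n rfl).trans
    (homologyπ_eq_zero_iff_exists_d_eq_iCycles _ n (n + 1) (CochainComplex.prev_nat_succ n) z).symm

variable (R X Y) in
/-- The comparison between `Ext` as left derived functors of `Hom(-, Y)` and `Ext` as morphisms in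
the derived category. -/
noncomputable def extLinearEquiv [EnoughProjectives C] : (n : ℕ) →
    (((Ext R C n).obj (Opposite.op X)).obj Y ≃ₗ[R] Abelian.Ext.{w} X Y n)
  | 0 => extZeroLinearEquiv X Y ≪≫ₗ Abelian.Ext.linearEquiv₀.symm
  | n + 1 =>
    let P := projectiveResolution X
    let π := ((P.complex.linearYonedaObj R Y).homologyπ (n + 1)).hom
    have hπ : Function.Surjective π := (ModuleCat.epi_iff_surjective _).1 inferInstance
    (P.isoExt (n + 1) Y).toLinearEquiv ≪≫ₗ (π.quotKerEquivOfSurjective hπ).symm ≪≫ₗ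
      Submodule.quotEquivOfEq _ _ (ker_extOfCocycle_succ P n).symm ≪≫ₗ
      (extOfCocycle R P Y (n + 1)).quotKerEquivOfSurjective (extOfCocycle_surjective P (n + 1))

end ExtComparison

section ModuleExt

open Abelian

/-- `Ext` of unbundled modules, taken in the derived category, where Mathlib provides the long exact
sequences. -/
abbrev ModuleExt (N X : Type u) [AddCommGroup N] [Module R N] [AddCommGroup X] [Module R X]
    (i : ℕ) : Type u :=
  Ext.{u} (ModuleCat.of R N) (ModuleCat.of R X) i

theorem shortExact_shortComplexOfCompEqZero {X Y Z : Type u} [AddCommGroup X] [Module R X]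
    [AddCommGroup Y] [Module R Y] [AddCommGroup Z] [Module R Z] {f : X →ₗ[R] Y} {g : Y →ₗ[R] Z}
    (hfg : Function.Exact f g) (hf : Function.Injective f) (hg : Function.Surjective g) :
    (ModuleCat.shortComplexOfCompEqZero f g hfg.linearMap_comp_eq_zero).ShortExact :=
  ModuleCat.shortComplex_shortExact _ hfg hf hg

namespace ModuleExt

variable {R} (N : Type u) {X Y Z : Type u} [AddCommGroup N] [Module R N] [AddCommGroup X]
  [Module R X] [AddCommGroup Y] [Module R Y] [AddCommGroup Z] [Module R Z] (i : ℕ)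

variable (R X) in
/-- `Ext⁰` is the module of linear maps. -/
noncomputable def zeroLinearEquiv : ModuleExt R N X 0 ≃ₗ[R] (N →ₗ[R] X) :=
  Ext.linearEquiv₀.trans ModuleCat.homLinearEquiv

/-- Functoriality of `Ext` in the second variable. -/
noncomputable def map (f : X →ₗ[R] Y) : ModuleExt R N X i →ₗ[R] ModuleExt R N Y i :=
  (Ext.mk₀ (ModuleCat.ofHom f)).postcompOfLinear R _ (add_zero i)

theorem map_comp (g : Y →ₗ[R] Z) (f : X →ₗ[R] Y) : map N i (g ∘ₗ f) = map N i g ∘ₗ map N i f := by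
  ext α
  simp [map]

theorem map_zero_injective {f : X →ₗ[R] Y} (hf : Function.Injective f) :
    Function.Injective (map N 0 f) :=
  have : Mono (ModuleCat.ofHom f) := (ModuleCat.mono_iff_injective _).2 hf
  Ext.postcomp_mk₀_injective_of_mono _ _

theorem map_lsmul_eq_zero {r : R} (hr : r ∈ Module.annihilator R N) :
    map N i (LinearMap.lsmul R X r) = 0 := by
  have hid : r • 𝟙 (ModuleCat.of R N) = 0 := by
    ext n
    exact Module.mem_annihilator.1 hr n
  have hlsmul : ModuleCat.ofHom (LinearMap.lsmul R X r) = r • 𝟙 (ModuleCat.of R X) := rfl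
  ext α
  calc map N i (LinearMap.lsmul R X r) α
    _ = r • (Ext.mk₀ (𝟙 (ModuleCat.of R N))).comp α (zero_add i) := by
      rw [Ext.mk₀_id_comp, Ext.smul_eq_comp_mk₀, ← hlsmul]
      rfl
    _ = 0 := by rw [← Ext.smul_comp, ← Ext.mk₀_smul, hid, Ext.mk₀_zero, Ext.zero_comp]

section ShortExact

variable {f : X →ₗ[R] Y} {g : Y →ₗ[R] Z} (hfg : Function.Exact f g) (hf : Function.Injective f)
  (hg : Function.Surjective g)
include hfg hf hg

/-- The connecting homomorphism in the second variable of `Ext`. -/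
noncomputable def connecting : ModuleExt R N Z i →ₗ[R] ModuleExt R N X (i + 1) :=
  (shortExact_shortComplexOfCompEqZero R hfg hf hg).extClass.postcompOfLinear R _ rfl

theorem exact_map_map : Function.Exact (map N i f) (map N i g) :=
  (ShortComplex.ab_exact_iff_function_exact _).1
    (Ext.covariant_sequence_exact₂' _ (shortExact_shortComplexOfCompEqZero R hfg hf hg) i)

theorem exact_map_connecting : Function.Exact (map N i g) (connecting N i hfg hf hg) :=
  (ShortComplex.ab_exact_iff_function_exact _).1
    (Ext.covariant_sequence_exact₃' _ (shortExact_shortComplexOfCompEqZero R hfg hf hg) i _ rfl)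

theorem exact_connecting_map : Function.Exact (connecting N i hfg hf hg) (map N (i + 1) f) :=
  (ShortComplex.ab_exact_iff_function_exact _).1
    (Ext.covariant_sequence_exact₁' _ (shortExact_shortComplexOfCompEqZero R hfg hf hg) i _ rfl)

end ShortExact

end ModuleExt

end ModuleExt

theorem exact_ker_subtype_rangeRestrict {A X Y : Type*} [Ring A] [AddCommGroup X] [Module A X]
    [AddCommGroup Y] [Module A Y] (f : X →ₗ[A] Y) :
    Function.Exact (LinearMap.ker f).subtype f.rangeRestrict := by
  rw [LinearMap.exact_iff, LinearMap.ker_rangeRestrict, Submodule.range_subtype]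

namespace IsWeaklyLaskerian

variable {R} {X Y Z : Type u} [AddCommGroup X] [Module R X] [AddCommGroup Y] [Module R Y]
  [AddCommGroup Z] [Module R Z]

theorem finite_associatedPrimes_of_surjective (h : IsWeaklyLaskerian R X) (f : X →ₗ[R] Y)
    (hf : Function.Surjective f) : (associatedPrimes R Y).Finite := by
  rw [← LinearEquiv.AssociatedPrimes.eq (f.quotKerEquivOfSurjective hf)]
  exact h _

theorem finite_associatedPrimes (h : IsWeaklyLaskerian R X) : (associatedPrimes R X).Finite :=
  h.finite_associatedPrimes_of_surjective LinearMap.id Function.surjective_id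

theorem of_surjective (h : IsWeaklyLaskerian R X) (f : X →ₗ[R] Y) (hf : Function.Surjective f) :
    IsWeaklyLaskerian R Y := fun N ↦
  h.finite_associatedPrimes_of_surjective (N.mkQ.comp f) (N.mkQ_surjective.comp hf)

theorem of_injective (h : IsWeaklyLaskerian R Y) (f : X →ₗ[R] Y) (hf : Function.Injective f) :
    IsWeaklyLaskerian R X := fun N ↦ by
  refine (h (N.map f)).subset (associatedPrimes.subset_of_injective
    (f := N.mapQ (N.map f) f (Submodule.le_comap_map f N)) ?_)
  rw [← LinearMap.ker_eq_bot, Submodule.ker_mapQ, Submodule.comap_map_eq_of_injective hf,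
    Submodule.mkQ_map_self]

theorem of_linearEquiv (h : IsWeaklyLaskerian R X) (e : X ≃ₗ[R] Y) : IsWeaklyLaskerian R Y :=
  h.of_surjective e.toLinearMap e.surjective

theorem of_submodule_of_quotient (S : Submodule R X) (hS : IsWeaklyLaskerian R S)
    (hQ : IsWeaklyLaskerian R (X ⧸ S)) : IsWeaklyLaskerian R X := fun N ↦ by
  refine Set.Finite.subset (Set.Finite.union ?_ ?_) (associatedPrimes.subset_union_of_exact
    (S.map N.mkQ).injective_subtype (LinearMap.exact_subtype_mkQ (S.map N.mkQ)))
  · exact hS.finite_associatedPrimes_of_surjective (N.mkQ.submoduleMap S)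
      (N.mkQ.submoduleMap_surjective S)
  · refine hQ.finite_associatedPrimes_of_surjective
      (S.mapQ (S.map N.mkQ) N.mkQ (Submodule.le_comap_map _ _)) ?_
    rw [← LinearMap.range_eq_top, Submodule.range_mapQ, N.range_mkQ, Submodule.map_top,
      Submodule.range_mkQ]

theorem of_exact {f : X →ₗ[R] Y} {g : Y →ₗ[R] Z} (hfg : Function.Exact f g)
    (hX : IsWeaklyLaskerian R X) (hZ : IsWeaklyLaskerian R Z) : IsWeaklyLaskerian R Y := by
  refine of_submodule_of_quotient (LinearMap.ker g) ?_ ?_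
  · rw [hfg.linearMap_ker_eq]
    exact hX.of_surjective f.rangeRestrict f.surjective_rangeRestrict
  · exact hZ.of_injective ((LinearMap.ker g).liftQ g le_rfl)
      (LinearMap.ker_eq_bot.1 (Submodule.ker_liftQ_eq_bot' _ _ rfl))

theorem of_exact_of_comp_eq_zero {W V : Type u} [AddCommGroup W] [Module R W] [AddCommGroup V]
    [Module R V] {f : X →ₗ[R] Y} {g : Y →ₗ[R] Z} (hfg : Function.Exact f g) {d : W →ₗ[R] Z}
    {e : Z →ₗ[R] V} (hde : Function.Exact d e) (heg : e ∘ₗ g = 0) (hX : IsWeaklyLaskerian R X)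
    (hW : IsWeaklyLaskerian R W) : IsWeaklyLaskerian R Y := by
  have hrange : IsWeaklyLaskerian R (LinearMap.ker e) := by
    rw [hde.linearMap_ker_eq]
    exact hW.of_surjective d.rangeRestrict d.surjective_rangeRestrict
  exact of_exact (g := g.codRestrict (LinearMap.ker e) (LinearMap.congr_fun heg))
    (fun y ↦ Subtype.ext_iff.trans (hfg y)) hX hrange

theorem of_finite [IsNoetherianRing R] [Module.Finite R X] : IsWeaklyLaskerian R X :=
  fun _ ↦ associatedPrimes.finite R _

theorem of_subsingleton [Subsingleton X] : IsWeaklyLaskerian R X := fun _ ↦ by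
  rw [associatedPrimes.eq_empty_of_subsingleton]
  exact Set.finite_empty

theorem fin_fun (h : IsWeaklyLaskerian R X) : ∀ n : ℕ, IsWeaklyLaskerian R (Fin n → X)
  | 0 => of_subsingleton
  | n + 1 => of_linearEquiv (of_exact Function.Exact.inl_snd h (h.fin_fun n))
      (Fin.consLinearEquiv R fun _ : Fin (n + 1) ↦ X)

theorem linearMap (h : IsWeaklyLaskerian R X) (N : Type u) [AddCommGroup N] [Module R N]
    [Module.Finite R N] : IsWeaklyLaskerian R (N →ₗ[R] X) := by
  obtain ⟨n, s, hs⟩ := Module.Finite.exists_fin (R := R) (M := N)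
  refine (h.fin_fun n).of_injective (LinearMap.pi fun i ↦ LinearMap.applyₗ (s i)) fun f g hfg ↦ ?_
  exact LinearMap.ext_on_range hs (congrFun hfg)

theorem moduleExt [IsNoetherianRing R] (h : IsWeaklyLaskerian R X) (N : Type u) [AddCommGroup N]
    [Module R N] [Module.Finite R N] (i : ℕ) : IsWeaklyLaskerian R (ModuleExt R N X i) := by
  induction i generalizing N with
  | zero => exact (h.linearMap N).of_linearEquiv (ModuleExt.zeroLinearEquiv R N X).symm
  | succ n ih =>
    obtain ⟨_, _, _, _, _, f, hf⟩ := Module.exists_finite_presentation R N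
    have hexact := LinearMap.shortExact_shortComplexKer hf
    exact (ih _).of_surjective (hexact.extClass.precompOfLinear R _ (add_comm 1 n))
      (precomp_extClass_surjective_of_projective_X₂ _ hexact n)

theorem moduleExt_zero_of_injective {N : Type u} [AddCommGroup N] [Module R N]
    (h : IsWeaklyLaskerian R (ModuleExt R N Y 0)) {f : X →ₗ[R] Y} (hf : Function.Injective f) :
    IsWeaklyLaskerian R (ModuleExt R N X 0) :=
  h.of_injective _ (ModuleExt.map_zero_injective N hf)

section ShortExact

variable {N : Type u} [AddCommGroup N] [Module R N] {f : X →ₗ[R] Y} {g : Y →ₗ[R] Z}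
  (hfg : Function.Exact f g) (hf : Function.Injective f) (hg : Function.Surjective g) {i : ℕ}
include hfg hf hg

theorem moduleExt_left_of_exact (hZ : IsWeaklyLaskerian R (ModuleExt R N Z i))
    (hY : IsWeaklyLaskerian R (ModuleExt R N Y (i + 1))) :
    IsWeaklyLaskerian R (ModuleExt R N X (i + 1)) :=
  of_exact (ModuleExt.exact_connecting_map N i hfg hf hg) hZ hY

theorem moduleExt_right_of_exact (hY : IsWeaklyLaskerian R (ModuleExt R N Y i))
    (hX : IsWeaklyLaskerian R (ModuleExt R N X (i + 1))) :
    IsWeaklyLaskerian R (ModuleExt R N Z i) :=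
  of_exact (ModuleExt.exact_map_connecting N i hfg hf hg) hY hX

end ShortExact

theorem moduleExt_one_ker {N : Type u} [AddCommGroup N] [Module R N] (f : X →ₗ[R] Y)
    (hY : IsWeaklyLaskerian R (ModuleExt R N Y 0)) (hX : IsWeaklyLaskerian R (ModuleExt R N X 1)) :
    IsWeaklyLaskerian R (ModuleExt R N (LinearMap.ker f) 1) :=
  moduleExt_left_of_exact (exact_ker_subtype_rangeRestrict f) (LinearMap.ker f).injective_subtype
    f.surjective_rangeRestrict
    (hY.moduleExt_zero_of_injective (LinearMap.range f).injective_subtype) hX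

theorem moduleExt_quotient_range {N : Type u} [AddCommGroup N] [Module R N] (f : X →ₗ[R] Y) {i : ℕ}
    (hY : IsWeaklyLaskerian R (ModuleExt R N Y i))
    (hX : IsWeaklyLaskerian R (ModuleExt R N X (i + 1)))
    (hker : IsWeaklyLaskerian R (ModuleExt R N (LinearMap.ker f) (i + 2))) :
    IsWeaklyLaskerian R (ModuleExt R N (Y ⧸ LinearMap.range f) i) :=
  moduleExt_right_of_exact (LinearMap.exact_subtype_mkQ _) (LinearMap.range f).injective_subtype
    (LinearMap.range f).mkQ_surjective hY <|
    moduleExt_right_of_exact (exact_ker_subtype_rangeRestrict f) (LinearMap.ker f).injective_subtype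
      f.surjective_rangeRestrict hX hker

-- Multiplication by `r` acts as zero on `Ext`, so `Ext(N, X) → Ext(N, range r)` lands in the kernel
-- of `Ext(N, range r) → Ext(N, X)`, which is a quotient of `Ext(N, X ⧸ range r)`.
theorem moduleExt_succ_of_lsmul {N : Type u} [AddCommGroup N] [Module R N] {r : R}
    (hr : r ∈ Module.annihilator R N) {i : ℕ}
    (hker : IsWeaklyLaskerian R (ModuleExt R N (LinearMap.ker (LinearMap.lsmul R X r)) (i + 1)))
    (hcoker : IsWeaklyLaskerian R
      (ModuleExt R N (X ⧸ LinearMap.range (LinearMap.lsmul R X r)) i)) :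
    IsWeaklyLaskerian R (ModuleExt R N X (i + 1)) := by
  let μ := LinearMap.lsmul R X r
  refine of_exact_of_comp_eq_zero (e := ModuleExt.map N (i + 1) (LinearMap.range μ).subtype)
    (ModuleExt.exact_map_map N (i + 1) (exact_ker_subtype_rangeRestrict μ)
      (LinearMap.ker μ).injective_subtype μ.surjective_rangeRestrict)
    (ModuleExt.exact_connecting_map N i (LinearMap.exact_subtype_mkQ (LinearMap.range μ))
      (LinearMap.range μ).injective_subtype (LinearMap.range μ).mkQ_surjective) ?_ hker hcoker
  rw [← ModuleExt.map_comp]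
  exact ModuleExt.map_lsmul_eq_zero N (i + 1) hr

end IsWeaklyLaskerian

section Support

variable {R} {M : Type*} [AddCommGroup M] [Module R M]

theorem mem_support_of_mem_associatedPrimes {p : PrimeSpectrum R}
    (hp : p.asIdeal ∈ associatedPrimes R M) : p ∈ Module.support R M := by
  obtain ⟨_, m, hm⟩ := hp
  refine Module.mem_support_iff_exists_annihilator.2 ⟨m, fun r hr ↦ ?_⟩
  rw [hm]
  exact Ideal.le_radical (Submodule.mem_colon_singleton.2
    ((Submodule.mem_annihilator_span_singleton m r).1 hr))

theorem exists_mem_associatedPrimes_le [IsNoetherianRing R] {p : PrimeSpectrum R}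
    (hp : p ∈ Module.support R M) :
    ∃ q : PrimeSpectrum R, q.asIdeal ∈ associatedPrimes R M ∧ q ≤ p := by
  obtain ⟨m, hm⟩ := Module.mem_support_iff_exists_annihilator.1 hp
  obtain ⟨q, hq, hqp⟩ := Ideal.exists_minimalPrimes_le hm
  exact ⟨⟨q, hq.isPrime⟩, associatedPrimes.subset_of_injective (R ∙ m).injective_subtype
    (Module.associatedPrimes.minimalPrimes_annihilator_subset_associatedPrimes R (R ∙ m) hq), hqp⟩

theorem mem_associatedPrimes_of_minimal_support [IsNoetherianRing R] {p : PrimeSpectrum R}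
    (hp : Minimal (· ∈ Module.support R M) p) : p.asIdeal ∈ associatedPrimes R M := by
  obtain ⟨q, hq, hqp⟩ := exists_mem_associatedPrimes_le hp.prop
  rwa [← hp.eq_of_le (mem_support_of_mem_associatedPrimes hq) hqp]

theorem finite_support_of_finite_associatedPrimes [IsNoetherianRing R]
    (hass : (associatedPrimes R M).Finite)
    (hM : ∀ p ∈ Module.support R M, (Set.Ici p).Finite) : (Module.support R M).Finite := by
  let A := {p : PrimeSpectrum R | p.asIdeal ∈ associatedPrimes R M}
  have hA : A.Finite := hass.preimage fun _ _ _ _ h ↦ PrimeSpectrum.ext h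
  refine (hA.biUnion fun q hq ↦ hM q (mem_support_of_mem_associatedPrimes hq)).subset fun p hp ↦ ?_
  obtain ⟨q, hq, hqp⟩ := exists_mem_associatedPrimes_le hp
  exact Set.mem_biUnion hq hqp

variable (R M) in
/-- The points of `Supp M` with infinite closure. When `dim Supp M ≤ 1` they are minimal in
`Supp M`, and they are the points at which finiteness of `M` has to be controlled. -/
def infiniteClosureSupport : Set (PrimeSpectrum R) :=
  {p ∈ Module.support R M | (Set.Ici p).Infinite}

theorem finite_infiniteClosureSupport [IsNoetherianRing R] (hass : (associatedPrimes R M).Finite)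
    (hmin : ∀ p ∈ infiniteClosureSupport R M, Minimal (· ∈ Module.support R M) p) :
    (infiniteClosureSupport R M).Finite :=
  (hass.preimage fun _ _ _ _ h ↦ PrimeSpectrum.ext h).subset
    fun p hp ↦ mem_associatedPrimes_of_minimal_support (hmin p hp)

theorem associatedPrimes_subset_torsionBySet [IsNoetherianRing R] {I : Ideal R}
    (hI : Module.support R M ⊆ PrimeSpectrum.zeroLocus I) :
    associatedPrimes R M ⊆ associatedPrimes R (Submodule.torsionBySet R M I) := by
  intro p hp
  have hIp : I ≤ p := hI (mem_support_of_mem_associatedPrimes (p := ⟨p, hp.isPrime⟩) hp)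
  obtain ⟨hprime, m, rfl⟩ := isAssociatedPrime_iff.1 hp
  have hm : m ∈ Submodule.torsionBySet R M I :=
    (Submodule.mem_torsionBySet_iff _ _).2 fun a ↦ Submodule.mem_colon_singleton.1 (hIp a.2)
  refine isAssociatedPrime_iff.2 ⟨hprime, ⟨m, hm⟩, ?_⟩
  ext r
  simp only [Submodule.mem_colon_singleton, Submodule.mem_bot, Subtype.ext_iff,
    Submodule.coe_smul, Submodule.coe_zero]

theorem minimal_support_of_suppDim_le_one {M : Type u} [AddCommGroup M] [Module R M]
    (hdim : suppDim R M ≤ 1) {p : PrimeSpectrum R} (hp : p ∈ infiniteClosureSupport R M) :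
    Minimal (· ∈ Module.support R M) p := by
  obtain ⟨hpM, hinf⟩ := hp
  rcases Order.krullDim_le_one_iff.1 hdim ⟨p, hpM⟩ with hmin | hmax
  · exact ⟨hpM, fun q hq hqp ↦ hmin (b := ⟨q, hq⟩) hqp⟩
  · refine absurd ((Set.finite_singleton p).subset fun q hpq ↦ ?_) hinf
    exact le_antisymm (hmax (b := ⟨q, Module.mem_support_mono hpq hpM⟩) hpq) hpq

end Support

variable {R} in
/-- Evaluation at `1` identifies the linear maps `R ⧸ I → M` with the elements of `M` killed by
`I`. -/
noncomputable def quotientLinearMapEquivTorsionBySet (I : Ideal R) (M : Type*) [AddCommGroup M]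
    [Module R M] : ((R ⧸ I) →ₗ[R] M) ≃ₗ[R] Submodule.torsionBySet R M I where
  toFun f := ⟨f 1, (Submodule.mem_torsionBySet_iff _ _).2 fun a ↦ by
    have ha : (a : R) • (1 : R ⧸ I) = 0 := by
      rw [Algebra.smul_def, mul_one, Ideal.Quotient.algebraMap_eq,
        Ideal.Quotient.eq_zero_iff_mem.2 a.2]
    rw [← map_smul, ha, map_zero]⟩
  map_add' _ _ := rfl
  map_smul' _ _ := rfl
  invFun m := I.liftQ (LinearMap.toSpanSingleton R M m) fun a ha ↦
    (Submodule.mem_torsionBySet_iff _ _).1 m.2 ⟨a, ha⟩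
  left_inv f := Submodule.linearMap_qext _ (LinearMap.ext_ring (one_smul R (f 1)))
  right_inv m := Subtype.ext (one_smul R m.1)

section AscendingColon

variable {R} {L : Type*} [AddCommGroup L] [Module R L]

theorem mem_associatedPrimes_quotient_iff [IsNoetherianRing R] {N : Submodule R L} {p : Ideal R} :
    p ∈ associatedPrimes R (L ⧸ N) ↔ p.IsPrime ∧ ∃ z, p = N.colon {z} := by
  have hcolon (z : L) : (⊥ : Submodule R (L ⧸ N)).colon {N.mkQ z} = N.colon {z} := by
    ext r
    rw [Submodule.mem_colon_singleton, Submodule.mem_colon_singleton, ← map_smul, Submodule.mem_bot,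
      Submodule.mkQ_apply, Submodule.Quotient.mk_eq_zero]
  simp only [AssociatedPrimes.mem_iff, isAssociatedPrime_iff, N.mkQ_surjective.exists, hcolon]

theorem mem_sup_smul_span_singleton {N : Submodule R L} {q : Ideal R} {z y : L} :
    y ∈ N ⊔ q • Submodule.span R {z} ↔ ∃ s ∈ q, y - s • z ∈ N := by
  simp only [sup_comm N, Submodule.mem_sup, Submodule.mem_smul_span_singleton,
    exists_exists_and_eq_and, ← eq_sub_iff_add_eq']
  simp only [exists_eq_right]

theorem colon_sup_smul_span_singleton {N : Submodule R L} {q : Ideal R} {z : L}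
    (hq : N.colon {z} ≤ q) : (N ⊔ q • Submodule.span R {z}).colon {z} = q := by
  ext r
  simp only [Submodule.mem_colon_singleton, mem_sup_smul_span_singleton, ← sub_smul]
  constructor
  · rintro ⟨s, hs, hrs⟩
    exact (q.sub_mem_iff_left hs).1 (hq (Submodule.mem_colon_singleton.2 hrs))
  · exact fun hr ↦ ⟨r, hr, by simp⟩

theorem colon_sup_smul_span_singleton_of_not_le {N : Submodule R L} (q : Ideal R) {z w : L}
    (hz : (N.colon {z}).IsPrime) (hw : ¬ N.colon {w} ≤ N.colon {z}) :
    (N ⊔ q • Submodule.span R {z}).colon {w} = N.colon {w} := by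
  refine le_antisymm (fun r hr ↦ ?_) (Submodule.colon_mono le_sup_left le_rfl)
  obtain ⟨c, hcw, hcz⟩ := SetLike.not_le_iff_exists.1 hw
  obtain ⟨s, -, hrs⟩ := mem_sup_smul_span_singleton.1 (Submodule.mem_colon_singleton.1 hr)
  have hcs : c * s ∈ N.colon {z} := by
    have hcrw : (r * c) • w ∈ N := Submodule.mem_colon_singleton.1 (Ideal.mul_mem_left _ r hcw)
    rw [Submodule.mem_colon_singleton]
    convert N.sub_mem hcrw (N.smul_mem c hrs) using 1
    module
  have hs : s • z ∈ N := Submodule.mem_colon_singleton.1 ((hz.mem_or_mem hcs).resolve_left hcz)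
  exact Submodule.mem_colon_singleton.2 ((N.sub_mem_iff_left hs).1 hrs)

theorem colon_iSup_of_succ_eq {N : ℕ → Submodule R L} {z : ℕ → L} {q : ℕ → Ideal R} {p : Ideal R}
    (hp : p.IsPrime) (hN : ∀ i, N (i + 1) = N i ⊔ q i • Submodule.span R {z i})
    (hz : ∀ i, (N i).colon {z i} = p) (hq : ∀ i, p < q i) (i : ℕ) :
    (⨆ j, N j).colon {z i} = q i := by
  have hmono : Monotone N := monotone_nat_of_le_succ fun j ↦ (hN j).ge.trans' le_sup_left
  have hlater (j : ℕ) (hij : i + 1 ≤ j) : (N j).colon {z i} = q i := by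
    induction j, hij using Nat.le_induction with
    | base => rw [hN, colon_sup_smul_span_singleton ((hz i).trans_le (hq i).le)]
    | succ j _ ih =>
      rw [hN, colon_sup_smul_span_singleton_of_not_le _ ((hz j).symm ▸ hp), ih]
      rw [ih, hz]
      exact (hq i).not_ge
  refine le_antisymm (fun r hr ↦ ?_) ?_
  · obtain ⟨j, hj⟩ := (Submodule.mem_iSup_of_directed _ hmono.directed_le).1
      (Submodule.mem_colon_singleton.1 hr)
    rw [← hlater (max j (i + 1)) (le_max_right _ _)]
    exact Submodule.mem_colon_singleton.2 (hmono (le_max_left _ _) hj)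
  · rw [← hlater (i + 1) le_rfl]
    exact Submodule.colon_mono (le_iSup N _) le_rfl

end AscendingColon

namespace IsWeaklyLaskerian

variable {R} {L : Type u} [AddCommGroup L] [Module R L]

-- Otherwise every finitely generated submodule `N` admits `z` with `N : z = p`. Choosing distinct
-- primes `qᵢ ⊋ p` and adjoining `qᵢ zᵢ` step by step makes every `qᵢ` associated to one quotient.
theorem exists_fg_notMem_associatedPrimes [IsNoetherianRing R] (hL : IsWeaklyLaskerian R L)
    {p : PrimeSpectrum R} (hp : (Set.Ici p).Infinite) :
    ∃ N : Submodule R L, N.FG ∧ p.asIdeal ∉ associatedPrimes R (L ⧸ N) := by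
  by_contra! hass
  have hcolon (N : {N : Submodule R L // N.FG}) : ∃ z, p.asIdeal = N.1.colon {z} :=
    (mem_associatedPrimes_quotient_iff.1 (hass N.1 N.2)).2
  choose z hz using hcolon
  have hIoi : (Set.Ioi p).Infinite := fun hfin ↦ hp (Set.Ioi_insert (a := p) ▸ hfin.insert p)
  let q : ℕ ↪ Set.Ioi p := hIoi.natEmbedding
  let N : ℕ → {N : Submodule R L // N.FG} := Nat.rec ⟨⊥, Submodule.fg_bot⟩ fun i N ↦
    ⟨N.1 ⊔ (q i).1.asIdeal • Submodule.span R {z N},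
      N.2.sup (Submodule.FG.smul (IsNoetherian.noetherian _) (Submodule.fg_span_singleton _))⟩
  have hq (i : ℕ) : (⨆ j, (N j).1).colon {z (N i)} = (q i).1.asIdeal :=
    colon_iSup_of_succ_eq p.isPrime (fun _ ↦ rfl) (fun j ↦ (hz (N j)).symm) (fun j ↦ (q j).2) i
  refine Set.infinite_of_injective_forall_mem (f := fun i ↦ (q i).1.asIdeal) (fun i j hij ↦ ?_)
    (fun i ↦ mem_associatedPrimes_quotient_iff.2 ⟨(q i).1.isPrime, z (N i), (hq i).symm⟩) (hL _)
  exact q.injective (Subtype.ext (PrimeSpectrum.ext hij))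

theorem exists_fg_notMem_support [IsNoetherianRing R] (hL : IsWeaklyLaskerian R L)
    {p : PrimeSpectrum R} (hp : (Set.Ici p).Infinite)
    (hmin : ∀ q ∈ Module.support R L, ¬ q < p) :
    ∃ N : Submodule R L, N.FG ∧ p ∉ Module.support R (L ⧸ N) := by
  obtain ⟨N, hN, hpN⟩ := hL.exists_fg_notMem_associatedPrimes hp
  have hsupp := Module.support_subset_of_surjective N.mkQ N.mkQ_surjective
  exact ⟨N, hN, fun hpQ ↦ hpN (mem_associatedPrimes_of_minimal_support
    ⟨hpQ, fun q hq hqp ↦ not_lt_iff_le_imp_ge.1 (hmin q (hsupp hq)) hqp⟩)⟩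

end IsWeaklyLaskerian

theorem wellFoundedGT_nat_orderHom (α : Type*) [PartialOrder α] [WellFoundedGT α] :
    WellFoundedGT (ℕ →o α) := by
  refine wellFoundedGT_iff_monotone_chain_condition.2 fun F ↦ ?_
  have hcolumn (k : ℕ) : ∃ n, ∀ m, n ≤ m → F n k = F m k :=
    WellFoundedGT.monotone_chain_condition ⟨fun n ↦ F n k, fun _ _ h ↦ F.monotone h k⟩
  obtain ⟨d, hdiag⟩ : ∃ d, ∀ m, d ≤ m → F d d = F m m :=
    WellFoundedGT.monotone_chain_condition
      ⟨fun n ↦ F n n, fun _ b h ↦ (F.monotone h _).trans ((F b).monotone h)⟩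
  choose c hc using hcolumn
  let J := max d ((Finset.range d).sup c)
  refine ⟨J, fun j hj ↦ OrderHom.ext _ _ (funext fun k ↦ ?_)⟩
  rcases lt_or_ge k d with hk | hk
  · have hcJ : c k ≤ J := le_max_of_le_right (Finset.le_sup (Finset.mem_range.2 hk))
    rw [← hc k J hcJ, ← hc k j (hcJ.trans hj)]
  · refine (F.monotone hj k).antisymm ?_
    calc F j k
      _ ≤ F (max j k) k := F.monotone (le_max_left j k) k
      _ ≤ F (max j k) (max j k) := (F _).monotone (le_max_right j k)
      _ = F d d := (hdiag _ (le_max_of_le_right hk)).symm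
      _ ≤ F d k := (F d).monotone hk
      _ ≤ F J k := F.monotone (le_max_left d _) k

section Artinian

variable {A : Type*} [CommRing A] {X : Type*} [AddCommGroup X] [Module A X]

/-- The descending chain `k ↦ x ^ k N ∩ (0 :_X x)` attached to a submodule `N` of `X`. It is the
analogue of the chain of leading coefficient ideals in the proof of the Hilbert basis theorem. -/
def smulPowInfTorsion (x : A) (N : Submodule A X) :
    ℕ →o (Submodule A (Submodule.torsionBy A X x))ᵒᵈ where
  toFun k := OrderDual.toDual
    ((N.map (LinearMap.lsmul A X (x ^ k))).comap (Submodule.torsionBy A X x).subtype)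
  monotone' k l hkl := by
    rintro _ ⟨y, hy, hxy⟩
    refine ⟨x ^ (l - k) • y, N.smul_mem _ hy, ?_⟩
    rw [← hxy, LinearMap.lsmul_apply, LinearMap.lsmul_apply, smul_smul, pow_mul_pow_sub x hkl]

theorem le_of_smulPowInfTorsion_le {x : A} (hx : ∀ m : X, ∃ n : ℕ, x ^ n • m = 0)
    {N N' : Submodule A X} (hle : N ≤ N')
    (hN : smulPowInfTorsion x N ≤ smulPowInfTorsion x N') : N' ≤ N := by
  suffices hpow : ∀ (k : ℕ) (y : X), x ^ k • y = 0 → y ∈ N' → y ∈ N from fun y hy ↦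
    (hx y).elim fun k hk ↦ hpow k y hk hy
  intro k
  induction k with
  | zero =>
    intro y hy _
    rw [pow_zero, one_smul] at hy
    exact hy ▸ N.zero_mem
  | succ k ih =>
    intro y hy hyN'
    have hky : x ^ k • y ∈ Submodule.torsionBy A X x := by
      rw [Submodule.mem_torsionBy_iff, smul_smul, ← pow_succ', hy]
    obtain ⟨w, hw, hwy⟩ : ∃ w ∈ N, x ^ k • w = x ^ k • y :=
      hN k (show (⟨_, hky⟩ : Submodule.torsionBy A X x) ∈ _ from ⟨y, hyN', rfl⟩)
    have hsub : y - w ∈ N :=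
      ih (y - w) (by rw [smul_sub, hwy, sub_self]) (N'.sub_mem hyN' (hle hw))
    exact (N.sub_mem_iff_left hw).1 hsub

theorem isArtinian_of_torsionBy {x : A} (hx : ∀ m : X, ∃ n : ℕ, x ^ n • m = 0)
    [IsArtinian A (Submodule.torsionBy A X x)] : IsArtinian A X := by
  have := wellFoundedGT_nat_orderHom (Submodule A (Submodule.torsionBy A X x))ᵒᵈ
  have hanti : StrictAnti (smulPowInfTorsion x : Submodule A X → _) := fun N N' h ↦
    lt_of_le_not_ge (fun _ ↦ Submodule.comap_mono (Submodule.map_mono h.le))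
      fun h' ↦ h.not_ge (le_of_smulPowInfTorsion_le hx h.le h')
  exact hanti.wellFoundedLT

theorem isArtinian_of_torsionBySet {I : Ideal A} (hI : I.FG)
    (hnil : ∀ x ∈ I, ∀ m : X, ∃ n : ℕ, x ^ n • m = 0)
    [hX : IsArtinian A (Submodule.torsionBySet A X I)] : IsArtinian A X := by
  induction I, hI using Submodule.fg_induction generalizing X with
  | singleton x =>
    rw [Submodule.torsionBySet_span_singleton_eq] at hX
    exact isArtinian_of_torsionBy (hnil x (Submodule.mem_span_singleton_self x))
  | sup I J _ _ ihI ihJ =>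
    let Y := Submodule.torsionBySet A X I
    let f : Submodule.torsionBySet A Y J →ₗ[A] Submodule.torsionBySet A X ↑(I ⊔ J) :=
      (Y.subtype ∘ₗ Submodule.subtype _).codRestrict _ fun y ↦
        (Submodule.mem_torsionBySet_iff _ _).2 fun ⟨a, ha⟩ ↦ by
          obtain ⟨b, hb, c, hc, rfl⟩ := Submodule.mem_sup.1 ha
          have hby : b • (y : X) = 0 := (Submodule.mem_torsionBySet_iff _ _).1 y.1.2 ⟨b, hb⟩
          have hcy : c • (y : Y) = 0 := (Submodule.mem_torsionBySet_iff _ _).1 y.2 ⟨c, hc⟩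
          exact (add_smul b c (y : X)).trans
            (by rw [hby, ← Submodule.coe_smul, hcy, Submodule.coe_zero, add_zero])
    have : IsArtinian A (Submodule.torsionBySet A Y J) := isArtinian_of_injective f <|
      (LinearMap.injective_codRestrict_iff _).2
        (Y.injective_subtype.comp (Submodule.injective_subtype _))
    have : IsArtinian A Y := ihJ fun x hx m ↦
      (hnil x (Ideal.mem_sup_right hx) m).imp fun n hn ↦ Subtype.ext hn
    exact ihI fun x hx ↦ hnil x (Ideal.mem_sup_left hx)

theorem isNoetherian_torsionBySet_mul {I J : Ideal A} (hI : I.FG)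
    [IsNoetherian A (Submodule.torsionBySet A X I)]
    [IsNoetherian A (Submodule.torsionBySet A X J)] :
    IsNoetherian A (Submodule.torsionBySet A X ↑(I * J)) := by
  let T := Submodule.torsionBySet A X ↑(I * J)
  have : Module.Finite A I := Module.Finite.iff_fg.2 hI
  have hT (t : T) (a : I) : (a : A) • (t : X) ∈ Submodule.torsionBySet A X J :=
    (Submodule.mem_torsionBySet_iff _ _).2 fun b ↦ by
      rw [smul_smul, mul_comm]
      exact (Submodule.mem_torsionBySet_iff _ _).1 t.2 ⟨_, Ideal.mul_mem_mul a.2 b.2⟩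
  let φ : T →ₗ[A] I →ₗ[A] Submodule.torsionBySet A X J :=
    LinearMap.mk₂ A (fun t a ↦ ⟨(a : A) • (t : X), hT t a⟩)
      (fun _ _ _ ↦ Subtype.ext (smul_add _ _ _)) (fun _ _ _ ↦ Subtype.ext (smul_comm _ _ _))
      (fun _ _ _ ↦ Subtype.ext (add_smul _ _ _)) (fun _ _ _ ↦ Subtype.ext (mul_smul _ _ _))
  have hker : (LinearMap.ker φ).map T.subtype ≤ Submodule.torsionBySet A X I := by
    rintro _ ⟨t, ht, rfl⟩
    exact (Submodule.mem_torsionBySet_iff _ _).2 fun a ↦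
      congrArg Subtype.val (LinearMap.congr_fun (LinearMap.mem_ker.1 ht) a)
  have : IsNoetherian A ((LinearMap.ker φ).map T.subtype) := isNoetherian_of_le hker
  have : IsNoetherian A (LinearMap.ker φ) := isNoetherian_of_linearEquiv
    ((LinearMap.ker φ).equivMapOfInjective T.subtype T.injective_subtype).symm
  exact isNoetherian_of_range_eq_ker (LinearMap.ker φ).subtype φ (Submodule.range_subtype _)

theorem isNoetherian_torsionBySet_pow {I : Ideal A} (hI : I.FG)
    [IsNoetherian A (Submodule.torsionBySet A X I)] (k : ℕ) :
    IsNoetherian A (Submodule.torsionBySet A X ↑(I ^ k)) := by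
  induction k with
  | zero =>
    rw [pow_zero, Ideal.one_eq_top, Submodule.top_coe, Submodule.torsionBySet_univ]
    infer_instance
  | succ k ih =>
    rw [pow_succ']
    exact isNoetherian_torsionBySet_mul hI

theorem isArtinian_of_isTorsionBySet {I : Ideal A} [I.IsMaximal]
    (hX : Module.IsTorsionBySet A X (I : Set A)) [IsNoetherian A X] : IsArtinian A X := by
  let _ : Field (A ⧸ I) := Ideal.Quotient.field I
  let _ : Module (A ⧸ I) X := hX.module
  have : IsSemisimpleModule A X := hX.isSemisimpleModule_iff.1 inferInstance
  infer_instance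

variable (A X) in
/-- A module is secondary if it is nonzero and every scalar acts on it either surjectively or
nilpotently: the notion dual to that of a primary submodule. -/
def IsSecondary : Prop :=
  Nontrivial X ∧ ∀ r : A, Function.Surjective (r • · : X → X) ∨
    r ∈ (Module.annihilator A X).radical

theorem IsSecondary.isPrime_radical_annihilator (hX : IsSecondary A X) :
    (Module.annihilator A X).radical.IsPrime := by
  have : Nontrivial X := hX.1
  refine ⟨?_, fun {x y} hxy ↦ ?_⟩
  · rw [Ne, Ideal.radical_eq_top, Module.annihilator_eq_top_iff, not_subsingleton_iff_nontrivial]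
    exact hX.1
  · by_contra! hne
    have hx := (hX.2 x).resolve_right hne.1
    have hy := (hX.2 y).resolve_right hne.2
    obtain ⟨n, hn⟩ := hxy
    have hxy : Function.Surjective ((x * y) • · : X → X) := by
      simpa only [Function.comp_def, mul_smul] using hx.comp hy
    have hsurj : Function.Surjective ((x * y) ^ n • · : X → X) := by
      simpa only [smul_iterate] using hxy.iterate n
    obtain ⟨m, hm⟩ := exists_ne (0 : X)
    obtain ⟨m', rfl⟩ := hsurj m
    exact hm (Module.mem_annihilator.1 hn m')

theorem isSecondary_of_supIrred [IsArtinian A X] {B : Submodule A X} (hB : SupIrred B) :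
    IsSecondary A B := by
  refine ⟨Submodule.nontrivial_iff_ne_bot.2 hB.ne_bot, fun r ↦ ?_⟩
  let f : Module.End A B := LinearMap.lsmul A B r
  obtain ⟨n, hn, hcodisj⟩ := ((Filter.eventually_ge_atTop 1).and
    f.eventually_codisjoint_ker_pow_range_pow).exists
  have hsup :
      (LinearMap.ker (f ^ n)).map B.subtype ⊔ (LinearMap.range (f ^ n)).map B.subtype = B := by
    rw [← Submodule.map_sup, hcodisj.eq_top, Submodule.map_subtype_top]
  have htop {N : Submodule A B} (hN : N.map B.subtype = B) : N = ⊤ :=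
    Submodule.map_injective_of_injective B.injective_subtype
      (hN.trans B.map_subtype_top.symm)
  rcases hB.2 hsup with hker | hrange
  · refine Or.inr ⟨n, Module.mem_annihilator.2 fun b ↦ ?_⟩
    have hb : (f ^ n) b = 0 := LinearMap.mem_ker.1 (htop hker ▸ Submodule.mem_top)
    rwa [Module.End.pow_apply, show ⇑f = (r • ·) from rfl, smul_iterate] at hb
  · exact Or.inl (Module.End.surjective_of_iterate_surjective (Nat.one_le_iff_ne_zero.1 hn)
      (LinearMap.range_eq_top.1 (htop hrange)))

-- A secondary component on which `x` acts surjectively dies in `X / xX`; on the other ones `I` acts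
-- nilpotently, so they are Noetherian.
theorem exists_finite_isPrime_finite_quotient_range_lsmul [IsNoetherianRing A] [IsArtinian A X]
    (I : Ideal A) [IsNoetherian A (Submodule.torsionBySet A X I)] :
    ∃ Q : Set (Ideal A), Q.Finite ∧ (∀ q ∈ Q, q.IsPrime ∧ ¬ I ≤ q) ∧
      ∀ x : A, (∀ q ∈ Q, x ∉ q) →
        Module.Finite A (X ⧸ LinearMap.range (LinearMap.lsmul A X x)) := by
  obtain ⟨s, hs, hirr⟩ := exists_supIrred_decomposition (⊤ : Submodule A X)
  let rad (B : Submodule A X) := (Module.annihilator A B).radical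
  refine ⟨{q ∈ rad '' s | ¬ I ≤ q}, (s.finite_toSet.image rad).subset fun _ h ↦ h.1, ?_, ?_⟩
  · rintro _ ⟨⟨B, hB, rfl⟩, hIB⟩
    exact ⟨(isSecondary_of_supIrred (hirr hB)).isPrime_radical_annihilator, hIB⟩
  · intro x hx
    let T := LinearMap.range (LinearMap.lsmul A X x)
    have hFG (B : Submodule A X) (hB : B ∈ s) : (B.map T.mkQ).FG := by
      by_cases hIB : I ≤ rad B
      · obtain ⟨k, hk⟩ := Ideal.exists_pow_le_of_le_radical_of_fg hIB (IsNoetherian.noetherian I)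
        have hBk : B ≤ Submodule.torsionBySet A X ↑(I ^ k) := fun b hb ↦
          (Submodule.mem_torsionBySet_iff _ _).2 fun a ↦
            congrArg Subtype.val (Module.mem_annihilator.1 (hk a.2) ⟨b, hb⟩)
        have := isNoetherian_torsionBySet_pow (X := X) (IsNoetherian.noetherian I) k
        exact Submodule.FG.map _ (isNoetherian_submodule.1 this B hBk)
      · have hsurj := ((isSecondary_of_supIrred (hirr hB)).2 x).resolve_right
          (hx _ ⟨⟨B, hB, rfl⟩, hIB⟩)
        have hBT : B ≤ LinearMap.ker T.mkQ := fun b hb ↦ by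
          obtain ⟨c, hc⟩ := hsurj ⟨b, hb⟩
          exact T.ker_mkQ.symm ▸ ⟨c, congrArg Subtype.val hc⟩
        rw [LinearMap.le_ker_iff_map.1 hBT]
        exact Submodule.fg_bot
    have hsup : s.sup (Submodule.map T.mkQ) = ⊤ := by
      rw [← Submodule.range_mkQ T, LinearMap.range_eq_map, ← hs]
      exact (Finset.apply_sup_eq_sup_comp (Submodule.map T.mkQ)
        (fun _ _ ↦ Submodule.map_sup _ _ _) (Submodule.map_bot _)).symm
    exact ⟨hsup ▸ Submodule.fg_finset_sup s _ hFG⟩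

end Artinian

section Localization

variable {R} {M : Type*} [AddCommGroup M] [Module R M] (S : Submonoid R)

theorem localized'_eq_top_iff_subsingleton (R' : Type*) [CommRing R'] [Algebra R R']
    [IsLocalization S R'] {M' : Type*} [AddCommGroup M'] [Module R M'] [Module R' M']
    [IsScalarTower R R' M'] (f : M →ₗ[R] M') [IsLocalizedModule S f] (G : Submodule R M) :
    G.localized' R' S f = ⊤ ↔ Subsingleton (LocalizedModule S (M ⧸ G)) := by
  rw [← Submodule.Quotient.subsingleton_iff]
  exact (IsLocalizedModule.iso S (G.toLocalizedQuotient' R' S f)).toEquiv.symm.subsingleton_congr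

theorem finite_iff_exists_fg_subsingleton (R' : Type*) [CommRing R'] [Algebra R R']
    [IsLocalization S R'] {M' : Type*} [AddCommGroup M'] [Module R M'] [Module R' M']
    [IsScalarTower R R' M'] (f : M →ₗ[R] M') [IsLocalizedModule S f] :
    Module.Finite R' M' ↔
      ∃ G : Submodule R M, G.FG ∧ Subsingleton (LocalizedModule S (M ⧸ G)) := by
  simp_rw [← localized'_eq_top_iff_subsingleton S R' f]
  refine ⟨fun ⟨t, ht⟩ ↦ ?_, fun ⟨G, hG, htop⟩ ↦ ⟨htop ▸ Submodule.localized'_fg R' S f hG⟩⟩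
  choose ms hms using IsLocalizedModule.surj S f
  refine ⟨Submodule.span R ((fun y ↦ (ms y).1) '' t), Submodule.fg_span (t.finite_toSet.image _),
    top_le_iff.1 (ht ▸ Submodule.span_le.2 fun y hy ↦ ?_)⟩
  rw [SetLike.mem_coe, ← Submodule.smul_mem_iff_of_isUnit _
    (IsLocalization.map_units R' (ms y).2), algebraMap_smul]
  exact hms y ▸ ⟨_, Submodule.subset_span ⟨y, hy, rfl⟩, 1, by simp⟩

theorem torsionBySet_map_le_localized' (R' : Type*) [CommRing R'] [Algebra R R']
    [IsLocalization S R'] {M' : Type*} [AddCommGroup M'] [Module R M'] [Module R' M']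
    [IsScalarTower R R' M'] (f : M →ₗ[R] M') [IsLocalizedModule S f] {I : Ideal R} (hI : I.FG) :
    Submodule.torsionBySet R' M' (I.map (algebraMap R R')) ≤
      (Submodule.torsionBySet R M I).localized' R' S f := by
  intro y hy
  obtain ⟨⟨m, s⟩, rfl⟩ := IsLocalizedModule.mk'_surjective S f y
  have : Module.Finite R I := Module.Finite.iff_fg.2 hI
  have hfm (a : I) : f ((a : R) • m) = 0 := by
    rw [← IsLocalizedModule.mk'_eq_zero s, IsLocalizedModule.mk'_smul, ← algebraMap_smul R']
    exact (Submodule.mem_torsionBySet_iff _ _).1 hy ⟨_, Ideal.mem_map_of_mem _ a.2⟩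
  obtain ⟨c, hc⟩ := Module.Finite.exists_smul_of_comp_eq_of_isLocalizedModule S f
    (LinearMap.toSpanSingleton R M m ∘ₗ I.subtype) 0
    (LinearMap.ext fun a ↦ (hfm a).trans f.map_zero.symm)
  refine (Submodule.mem_localized' ..).2 ⟨c • m, (Submodule.mem_torsionBySet_iff _ _).2 fun a ↦ ?_,
    c * s, IsLocalizedModule.mk'_cancel_left ..⟩
  rw [smul_comm]
  exact (LinearMap.congr_fun hc a).trans (smul_zero c)

theorem exists_smul_pow_smul_eq_zero {p : PrimeSpectrum R}
    (hp : ∀ q ∈ Module.support R M, ¬ q < p) {c : R} (hc : c ∈ p.asIdeal) (m : M) :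
    ∃ n : ℕ, ∃ t ∉ p.asIdeal, t • c ^ n • m = 0 := by
  by_contra! hcon
  have hdisj : Disjoint ((Submodule.span R {m}).annihilator : Set R)
      ↑(p.asIdeal.primeCompl ⊔ Submonoid.powers c) := by
    rw [Set.disjoint_left]
    intro a ha ha'
    obtain ⟨t, ht, _, ⟨n, rfl⟩, rfl⟩ := Submonoid.mem_sup.1 ha'
    rw [SetLike.mem_coe, Submodule.mem_annihilator_span_singleton, mul_smul] at ha
    exact hcon n t ht ha
  obtain ⟨q, hq, hmq, hqS⟩ := Ideal.exists_le_prime_disjoint _ _ hdisj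
  rw [Set.disjoint_left] at hqS
  refine hp ⟨q, hq⟩ (Module.mem_support_iff_exists_annihilator.2 ⟨m, hmq⟩)
    (lt_of_le_not_ge (fun a ha ↦ ?_) fun hpq ↦ ?_)
  · exact not_not.1 fun hap ↦ hqS ha (Submonoid.mem_sup_left hap)
  · exact hqS (hpq hc) (Submonoid.mem_sup_right (Submonoid.mem_powers c))

theorem exists_pow_smul_eq_zero_of_mem_maximalIdeal {p : PrimeSpectrum R}
    (hp : ∀ q ∈ Module.support R M, ¬ q < p)
    {a : Localization.AtPrime p.asIdeal} (ha : a ∈ IsLocalRing.maximalIdeal _)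
    (y : LocalizedModule p.asIdeal.primeCompl M) : ∃ n : ℕ, a ^ n • y = 0 := by
  obtain ⟨c, s, rfl⟩ := IsLocalization.exists_mk'_eq p.asIdeal.primeCompl a
  obtain ⟨⟨m, s'⟩, rfl⟩ := IsLocalizedModule.mk'_surjective p.asIdeal.primeCompl
    (LocalizedModule.mkLinearMap p.asIdeal.primeCompl M) y
  have hc : c ∈ p.asIdeal := (IsLocalization.AtPrime.mk'_mem_maximal_iff _ p.asIdeal c s).1 ha
  obtain ⟨n, t, ht, htm⟩ := exists_smul_pow_smul_eq_zero hp hc m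
  refine ⟨n, ?_⟩
  rw [← IsLocalization.mk'_pow]
  dsimp only [Function.uncurry]
  rw [IsLocalizedModule.mk'_smul_mk', IsLocalizedModule.mk'_eq_zero']
  exact ⟨⟨t, ht⟩, htm⟩

namespace IsWeaklyLaskerian

variable {M : Type u} [AddCommGroup M] [Module R M] [IsNoetherianRing R] {I : Ideal R}
  {p : PrimeSpectrum R}

theorem isNoetherian_torsionBySet_localizedModule
    (hL : IsWeaklyLaskerian R (Submodule.torsionBySet R M I)) (hp : (Set.Ici p).Infinite)
    (hmin : ∀ q ∈ Module.support R M, ¬ q < p) :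
    IsNoetherian (Localization.AtPrime p.asIdeal)
      (Submodule.torsionBySet (Localization.AtPrime p.asIdeal)
        (LocalizedModule p.asIdeal.primeCompl M)
        (I.map (algebraMap R (Localization.AtPrime p.asIdeal)))) := by
  let T := Submodule.torsionBySet R M I
  let A := Localization.AtPrime p.asIdeal
  let f := LocalizedModule.mkLinearMap p.asIdeal.primeCompl M
  obtain ⟨N, hN, hpN⟩ := hL.exists_fg_notMem_support hp fun q hq ↦
    hmin q (Module.support_subset_of_injective T.subtype T.injective_subtype hq)
  have : Module.Finite A (T.localized' A p.asIdeal.primeCompl f) :=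
    (finite_iff_exists_fg_subsingleton _ A (T.toLocalized' A p.asIdeal.primeCompl f)).2
      ⟨N, hN, Module.notMem_support_iff.1 hpN⟩
  exact isNoetherian_of_le
    (torsionBySet_map_le_localized' p.asIdeal.primeCompl A f (IsNoetherian.noetherian I))

theorem isArtinian_localizedModule
    (hL : IsWeaklyLaskerian R (Submodule.torsionBySet R M I)) (hp : (Set.Ici p).Infinite)
    (hmin : ∀ q ∈ Module.support R M, ¬ q < p) (hI : I ≤ p.asIdeal) :
    IsArtinian (Localization.AtPrime p.asIdeal) (LocalizedModule p.asIdeal.primeCompl M) := by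
  let A := Localization.AtPrime p.asIdeal
  let 𝔪 := IsLocalRing.maximalIdeal A
  have hI𝔪 : I.map (algebraMap R A) ≤ 𝔪 :=
    (Ideal.map_mono hI).trans_eq Localization.AtPrime.map_eq_maximalIdeal
  have := hL.isNoetherian_torsionBySet_localizedModule hp hmin
  have : IsNoetherian A
      (Submodule.torsionBySet A (LocalizedModule p.asIdeal.primeCompl M) 𝔪) :=
    isNoetherian_of_le (Submodule.torsionBySet_le_torsionBySet_of_subset hI𝔪)
  have := isArtinian_of_isTorsionBySet (I := 𝔪)
    (Submodule.torsionBySet_isTorsionBySet (M := LocalizedModule p.asIdeal.primeCompl M)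
      (𝔪 : Set A))
  exact isArtinian_of_torsionBySet (IsNoetherian.noetherian 𝔪) fun _ ha ↦
    exists_pow_smul_eq_zero_of_mem_maximalIdeal hmin ha

theorem exists_finite_isPrime_exists_fg_notMem_support
    (hL : IsWeaklyLaskerian R (Submodule.torsionBySet R M I)) (hp : (Set.Ici p).Infinite)
    (hmin : ∀ q ∈ Module.support R M, ¬ q < p) (hI : I ≤ p.asIdeal) :
    ∃ Q : Set (Ideal R), Q.Finite ∧ (∀ q ∈ Q, q.IsPrime ∧ ¬ I ≤ q) ∧
      ∀ x : R, (∀ q ∈ Q, x ∉ q) →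
        ∃ G : Submodule R (M ⧸ LinearMap.range (LinearMap.lsmul R M x)), G.FG ∧
          p ∉ Module.support R ((M ⧸ LinearMap.range (LinearMap.lsmul R M x)) ⧸ G) := by
  let A := Localization.AtPrime p.asIdeal
  let X := LocalizedModule p.asIdeal.primeCompl M
  let f := LocalizedModule.mkLinearMap p.asIdeal.primeCompl M
  have := hL.isArtinian_localizedModule hp hmin hI
  have := hL.isNoetherian_torsionBySet_localizedModule hp hmin
  obtain ⟨Q, hfin, hQ, hfinite⟩ :=
    exists_finite_isPrime_finite_quotient_range_lsmul (X := X) (I.map (algebraMap R A))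
  refine ⟨Ideal.comap (algebraMap R A) '' Q, hfin.image _, ?_, fun x hx ↦ ?_⟩
  · rintro _ ⟨q, hq, rfl⟩
    have := (hQ q hq).1
    exact ⟨inferInstance, fun h ↦ (hQ q hq).2 (Ideal.map_le_iff_le_comap.2 h)⟩
  · let T := LinearMap.range (LinearMap.lsmul R M x)
    have hrange : LinearMap.range (LinearMap.lsmul A X (algebraMap R A x)) ≤
        T.localized' A p.asIdeal.primeCompl f := by
      rintro _ ⟨y, rfl⟩
      obtain ⟨⟨m, s⟩, rfl⟩ := IsLocalizedModule.mk'_surjective p.asIdeal.primeCompl f y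
      rw [LinearMap.lsmul_apply, algebraMap_smul, Function.uncurry_apply_pair,
        ← IsLocalizedModule.mk'_smul]
      exact ⟨x • m, ⟨m, rfl⟩, s, rfl⟩
    have := hfinite (algebraMap R A x) fun q hq hxq ↦ hx _ ⟨q, hq, rfl⟩ hxq
    have : Module.Finite A (X ⧸ T.localized' A p.asIdeal.primeCompl f) :=
      .of_surjective (Submodule.factor hrange) (Submodule.factor_surjective hrange)
    simp_rw [Module.notMem_support_iff]
    exact (finite_iff_exists_fg_subsingleton _ A
      (T.toLocalizedQuotient' A p.asIdeal.primeCompl f)).1 this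

end IsWeaklyLaskerian

end Localization

theorem exists_mem_notMem_of_finite {R : Type*} [CommRing R] {I J : Ideal R} (hIJ : ¬ I ≤ J)
    {Q : Set (Ideal R)} (hQ : Q.Finite) (hprime : ∀ q ∈ Q, q.IsPrime ∧ ¬ I ≤ q) :
    ∃ x ∈ I, x ∉ J ∧ ∀ q ∈ Q, x ∉ q := by
  have hunion := Ideal.subset_union_prime (f := id) (s := (hQ.insert J).toFinset) J J (I := I)
    fun q hq hne _ ↦ (hprime q (((hQ.insert J).mem_toFinset.1 hq).resolve_left hne)).1
  have hnot : ¬ (I : Set R) ⊆ ⋃ q ∈ ((hQ.insert J).toFinset : Set (Ideal R)), (id q : Ideal R) := by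
    rw [hunion]
    rintro ⟨q, hq, hIq⟩
    rcases (hQ.insert J).mem_toFinset.1 hq with rfl | hq
    · exact hIJ hIq
    · exact (hprime q hq).2 hIq
  obtain ⟨x, hx, hxQ⟩ := Set.not_subset.1 hnot
  simp only [Set.Finite.coe_toFinset, Set.mem_insert_iff, id_eq, Set.iUnion_iUnion_eq_or_left,
    Set.mem_union, SetLike.mem_coe, Set.mem_iUnion, not_or, not_exists] at hxQ
  exact ⟨x, hx, hxQ⟩

namespace IsWeaklyLaskerian

variable {R} {I : Ideal R} {M : Type u} [AddCommGroup M] [Module R M]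

theorem torsionBySet_of_moduleExt_zero (h : IsWeaklyLaskerian R (ModuleExt R (R ⧸ I) M 0)) :
    IsWeaklyLaskerian R (Submodule.torsionBySet R M I) :=
  h.of_linearEquiv
    ((ModuleExt.zeroLinearEquiv R (R ⧸ I) M).trans (quotientLinearMapEquivTorsionBySet I M))

theorem of_finite_support (h : (Module.support R M).Finite) : IsWeaklyLaskerian R M := fun N ↦
  (h.image PrimeSpectrum.asIdeal).subset fun p hp ↦ ⟨⟨p, hp.isPrime⟩,
    Module.support_subset_of_surjective N.mkQ N.mkQ_surjective
      (mem_support_of_mem_associatedPrimes hp), rfl⟩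

variable [IsNoetherianRing R]

theorem of_moduleExt_zero (hsupp : Module.support R M ⊆ PrimeSpectrum.zeroLocus I)
    (hExt : IsWeaklyLaskerian R (ModuleExt R (R ⧸ I) M 0))
    (hfin : (infiniteClosureSupport R M).Finite)
    (hfg : ∀ p ∈ infiniteClosureSupport R M,
      ∃ G : Submodule R M, G.FG ∧ p ∉ Module.support R (M ⧸ G)) :
    IsWeaklyLaskerian R M := by
  choose! G hG hpG using hfg
  let N : Submodule R M := ⨆ p ∈ hfin.toFinset, G p
  have : Module.Finite R N := Module.Finite.iff_fg.2 <|
    Submodule.fg_biSup _ _ fun p hp ↦ hG p (hfin.mem_toFinset.1 hp)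
  have hsuppN : Module.support R (M ⧸ N) ⊆ Module.support R M :=
    Module.support_subset_of_surjective N.mkQ N.mkQ_surjective
  have hclosure : ∀ p ∈ Module.support R (M ⧸ N), (Set.Ici p).Finite := fun p hp ↦ by
    by_contra hinf
    have hpM : p ∈ infiniteClosureSupport R M := ⟨hsuppN hp, hinf⟩
    have hGN : G p ≤ N := le_biSup G (hfin.mem_toFinset.2 hpM)
    exact hpG p hpM (Module.support_subset_of_surjective (Submodule.factor hGN)
      (Submodule.factor_surjective hGN) hp)
  have hExtN : IsWeaklyLaskerian R (ModuleExt R (R ⧸ I) (M ⧸ N) 0) :=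
    moduleExt_right_of_exact (LinearMap.exact_subtype_mkQ N) N.injective_subtype N.mkQ_surjective
      hExt (of_finite.moduleExt _ _)
  have hass : (associatedPrimes R (M ⧸ N)).Finite :=
    hExtN.torsionBySet_of_moduleExt_zero.finite_associatedPrimes.subset
      (associatedPrimes_subset_torsionBySet (hsuppN.trans hsupp))
  exact of_submodule_of_quotient N of_finite
    (of_finite_support (finite_support_of_finite_associatedPrimes hass hclosure))

theorem exists_mem_forall_exists_fg_notMem_support
    (hL : IsWeaklyLaskerian R (Submodule.torsionBySet R M I))
    (hsupp : Module.support R M ⊆ PrimeSpectrum.zeroLocus I)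
    (hfin : (infiniteClosureSupport R M).Finite)
    (hmin : ∀ p ∈ infiniteClosureSupport R M, Minimal (· ∈ Module.support R M) p)
    (hI : ¬ I ≤ Module.annihilator R M) :
    ∃ x ∈ I, x ∉ Module.annihilator R M ∧ ∀ p ∈ infiniteClosureSupport R M,
      ∃ G : Submodule R (M ⧸ LinearMap.range (LinearMap.lsmul R M x)), G.FG ∧
        p ∉ Module.support R ((M ⧸ LinearMap.range (LinearMap.lsmul R M x)) ⧸ G) := by
  choose! Q hQfin hQ hxQ using fun p (hp : p ∈ infiniteClosureSupport R M) ↦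
    hL.exists_finite_isPrime_exists_fg_notMem_support hp.2 (fun _ hq ↦ (hmin p hp).not_lt hq)
      (hsupp hp.1)
  obtain ⟨x, hxI, hxM, hx⟩ := exists_mem_notMem_of_finite hI (hfin.biUnion hQfin) fun q hq ↦
    have ⟨p, hp, hqp⟩ := Set.mem_iUnion₂.1 hq
    hQ p hp q hqp
  exact ⟨x, hxI, hxM, fun p hp ↦ hxQ p hp x fun q hq ↦ hx q (Set.mem_biUnion hp hq)⟩

theorem moduleExt_of_zero_of_one
    (hmin : ∀ p ∈ infiniteClosureSupport R M, Minimal (· ∈ Module.support R M) p)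
    (hsupp : Module.support R M ⊆ PrimeSpectrum.zeroLocus I)
    (h0 : IsWeaklyLaskerian R (ModuleExt R (R ⧸ I) M 0))
    (h1 : IsWeaklyLaskerian R (ModuleExt R (R ⧸ I) M 1)) (i : ℕ) :
    IsWeaklyLaskerian R (ModuleExt R (R ⧸ I) M i) := by
  induction hJ : Module.annihilator R M using WellFoundedGT.induction generalizing M i with
  | ind J ih =>
  subst hJ
  have hL := h0.torsionBySet_of_moduleExt_zero
  by_cases hI : I ≤ Module.annihilator R M
  · refine (hL.of_surjective (Submodule.subtype _) fun m ↦ ⟨⟨m, ?_⟩, rfl⟩).moduleExt _ i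
    exact (Submodule.mem_torsionBySet_iff _ _).2 fun a ↦ Module.mem_annihilator.1 (hI a.2) m
  have hfin := finite_infiniteClosureSupport
    (hL.finite_associatedPrimes.subset (associatedPrimes_subset_torsionBySet hsupp)) hmin
  obtain ⟨x, hxI, hxM, hx⟩ := hL.exists_mem_forall_exists_fg_notMem_support hsupp hfin hmin hI
  let μ := LinearMap.lsmul R M x
  let K := LinearMap.ker μ
  let T := LinearMap.range μ
  have hsuppK : Module.support R K ⊆ Module.support R M :=
    Module.support_subset_of_injective K.subtype K.injective_subtype
  have hsuppC : Module.support R (M ⧸ T) ⊆ Module.support R M :=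
    Module.support_subset_of_surjective T.mkQ T.mkQ_surjective
  have hclosureC : infiniteClosureSupport R (M ⧸ T) ⊆ infiniteClosureSupport R M :=
    fun p hp ↦ ⟨hsuppC hp.1, hp.2⟩
  have hK (i : ℕ) : IsWeaklyLaskerian R (ModuleExt R (R ⧸ I) K i) := by
    refine ih _ ?_ (fun p hp ↦ ?_) (hsuppK.trans hsupp)
      (h0.moduleExt_zero_of_injective K.injective_subtype) (moduleExt_one_ker μ h0 h1) i rfl
    · exact (LinearMap.annihilator_le_of_injective K.subtype K.injective_subtype).lt_of_not_ge
        fun h ↦ hxM (h (Module.mem_annihilator.2 fun m ↦ Subtype.ext m.2))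
    · exact (hmin p ⟨hsuppK hp.1, hp.2⟩).mono hsuppK hp.1
  have hC : IsWeaklyLaskerian R (M ⧸ T) := of_moduleExt_zero (hsuppC.trans hsupp)
    (moduleExt_quotient_range μ h0 h1 (hK 2)) (hfin.subset hclosureC) fun p hp ↦ hx p (hclosureC hp)
  cases i with
  | zero => exact h0
  | succ i =>
    exact moduleExt_succ_of_lsmul (by rwa [Ideal.annihilator_quotient]) (hK _) (hC.moduleExt _ i)

end IsWeaklyLaskerian

theorem stmt12_general [IsNoetherianRing R] (𝔞 : Ideal R) (M : ModuleCat.{u} R)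
    (hmin : ∀ p ∈ infiniteClosureSupport R M, Minimal (· ∈ Module.support R M) p)
    (hsupp : Module.support R M ⊆ PrimeSpectrum.zeroLocus (𝔞 : Set R)) :
    IsWeaklyCofinite R 𝔞 M ↔
      IsWeaklyLaskerian R ((R ⧸ 𝔞) →ₗ[R] M) ∧
        IsWeaklyLaskerian R (extModule R 1 (ModuleCat.of R (R ⧸ 𝔞)) M) := by
  have e (i : ℕ) : extModule R i (ModuleCat.of R (R ⧸ 𝔞)) M ≃ₗ[R] ModuleExt R (R ⧸ 𝔞) M i :=
    extLinearEquiv R (ModuleCat.of R (R ⧸ 𝔞)) M i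
  have e₀ := ModuleExt.zeroLinearEquiv R (R ⧸ 𝔞) M
  refine ⟨fun h ↦ ⟨(h.2 0).of_linearEquiv ((e 0).trans e₀), h.2 1⟩,
    fun ⟨hHom, hExt⟩ ↦ ⟨hsupp, fun i ↦ ?_⟩⟩
  exact (IsWeaklyLaskerian.moduleExt_of_zero_of_one hmin hsupp (hHom.of_linearEquiv e₀.symm)
    (hExt.of_linearEquiv (e 1)) i).of_linearEquiv (e i).symm

theorem stmt12 [IsNoetherianRing R] (𝔞 : Ideal R) (M : ModuleCat.{u} R)
    (h1 : suppDim R M ≤ 1)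
    (h2 : Module.support R M ⊆ PrimeSpectrum.zeroLocus (𝔞 : Set R)) :
    IsWeaklyCofinite R 𝔞 M ↔
      IsWeaklyLaskerian R ((R ⧸ 𝔞) →ₗ[R] M) ∧
        IsWeaklyLaskerian R (extModule R 1 (ModuleCat.of R (R ⧸ 𝔞)) M) :=
  stmt12_general R 𝔞 M (fun _ ↦ minimal_support_of_suppDim_le_one h1) h2
end
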